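/- arXiv:1005.3979 — 3 statements merged into one kernel-verified Lean document; each statement's English description precedes it below -/
import Mathlib

section
/- Let P' ⊊ P be parenthesized words on the linear order W_k, and let m be the cardinality of P \ P'. Then every set Q with P' ⊆ Q ⊆ P is again a parenthesized word on W_k, and the map Q ↦ Q \ P' is an order isomorphism from the interval [P, P'] = {Q ∈ 𝔎_k : P ≤ Q ≤ P'} onto the poset of all subsets of P \ P' ordered by reverse inclusion; in particular this interval is order-isomorphic to 𝓘^m, where 𝓘 is the two-element poset 1 < 0. (Equivalently: the factorizations of a fixed morphism in 𝔎_k form a commutative cubical diagram.) -/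
/-!
Both defining conditions of a parenthesized word are universally quantified over its members (or
pairs of members), so they pass to subfamilies (`IsParenWord.mono`). Hence the interval `[P, P']`
consists of *all* families between `P'` and `P`, and `Q ↦ Q \ P'`, with inverse `S ↦ S ∪ P'`, is an
order-reversing bijection onto the subsets of `P \ P'` (`KWord.iccEquiv`). Enumerating `P \ P'` by
`Fin m` and sending `Q` to the indicator function of its *complement* in `P \ P'` gives the
isomorphism with the cube (`KWord.iccIsoCube`); the complement compensates for the reverse inclusion
order.
-/

/-! Parenthesized words on the linear order `W_m = Fin m` (following
Stasheff/Mac Lane as in "A_n monoidal categories"). -/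

/-- `p` is a closed interval of `Fin m` (closed under betweenness). -/
def IsInterval {m : ℕ} (p : Finset (Fin m)) : Prop :=
  ∀ ⦃x y z : Fin m⦄, x ∈ p → z ∈ p → x ≤ y → y ≤ z → y ∈ p

/-- Any two members of `P` are nested or disjoint. -/
def Laminar {m : ℕ} (P : Finset (Finset (Fin m))) : Prop :=
  ∀ ⦃p⦄, p ∈ P → ∀ ⦃q⦄, q ∈ P → p ⊆ q ∨ q ⊆ p ∨ Disjoint p q

/-- A parenthesized word on `W_m`: a finite laminar family of closed intervals,
each of cardinality at least `2` and strictly less than `m`. -/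
def IsParenWord (m : ℕ) (P : Finset (Finset (Fin m))) : Prop :=
  (∀ p ∈ P, IsInterval p ∧ 2 ≤ p.card ∧ p.card < m) ∧ Laminar P

/-- The poset `𝔎_m` of parenthesized words on `W_m`, ordered by reverse
inclusion (`P ≤ Q` iff `Q ⊆ P`: more parentheses is smaller). -/
def KWord (m : ℕ) : Type := {P : Finset (Finset (Fin m)) // IsParenWord m P}

instance (m : ℕ) : PartialOrder (KWord m) where
  le P Q := Q.1 ⊆ P.1
  le_refl P := Finset.Subset.refl _
  le_trans P Q R h h' := Finset.Subset.trans h' h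
  le_antisymm P Q h h' := Subtype.ext (Finset.Subset.antisymm h' h)

@[simp] theorem KWord.le_def {m : ℕ} (P Q : KWord m) : P ≤ Q ↔ Q.1 ⊆ P.1 := ⟨fun h => h, fun h => h⟩

theorem IsParenWord.mono {k : ℕ} {P Q : Finset (Finset (Fin k))} (hP : IsParenWord k P)
    (h : Q ⊆ P) : IsParenWord k Q :=
  ⟨fun p hp => hP.1 p (h hp), fun _ hp _ hq => hP.2 (h hp) (h hq)⟩

/-- The bijection `Q ↦ Q \ P'` from the interval `[P, P']` onto the subsets of `P \ P'`,
with inverse `S ↦ S ∪ P'`. -/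
def KWord.iccEquiv {k : ℕ} (P P' : KWord k) (h : P'.1 ⊆ P.1) :
    Set.Icc P P' ≃ {S : Finset (Finset (Fin k)) // S ⊆ P.1 \ P'.1} where
  toFun Q := ⟨Q.1.1 \ P'.1, Finset.sdiff_subset_sdiff Q.2.1 (Finset.Subset.refl _)⟩
  invFun S :=
    have hS : S.1 ∪ P'.1 ⊆ P.1 := Finset.union_subset (S.2.trans Finset.sdiff_subset) h
    ⟨⟨S.1 ∪ P'.1, P.2.mono hS⟩, hS, Finset.subset_union_right⟩
  left_inv Q := Subtype.ext (Subtype.ext (Finset.sdiff_union_of_subset Q.2.2))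
  right_inv S := by
    apply Subtype.ext
    change (S.1 ∪ P'.1) \ P'.1 = S.1
    have hS := S.2
    grind

theorem KWord.iccEquiv_le_iff {k : ℕ} (P P' : KWord k) (h : P'.1 ⊆ P.1) (Q R : Set.Icc P P') :
    Q ≤ R ↔ (KWord.iccEquiv P P' h R).1 ⊆ (KWord.iccEquiv P P' h Q).1 := by
  change R.1.1 ⊆ Q.1.1 ↔ R.1.1 \ P'.1 ⊆ Q.1.1 \ P'.1
  have hQ : P'.1 ⊆ Q.1.1 := Q.2.2
  refine ⟨fun hRQ => Finset.sdiff_subset_sdiff hRQ (Finset.Subset.refl _), fun hRQ p hp => ?_⟩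
  by_cases hp' : p ∈ P'.1
  · exact hQ hp'
  · exact (Finset.mem_sdiff.1 (hRQ (Finset.mem_sdiff.2 ⟨hp, hp'⟩))).1

/-- Subsets of `A`, ordered by reverse inclusion, correspond to Boolean vectors indexed by `A`:
the coordinate at `a` is `true` exactly when `a` is absent. -/
noncomputable def subsetsEquivCube {α : Type*} [DecidableEq α] (A : Finset α) :
    {S : Finset α // S ⊆ A} ≃ (Fin A.card → Bool) where
  toFun S i := decide ((A.equivFin.symm i : α) ∉ S.1)
  invFun f := ⟨{a ∈ A | ∀ h : a ∈ A, f (A.equivFin ⟨a, h⟩) = false}, Finset.filter_subset _ _⟩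
  left_inv S := by
    have hS := S.2
    ext a
    simp
    grind
  right_inv f := by
    ext i
    simp

theorem subsetsEquivCube_le_iff {α : Type*} [DecidableEq α] (A : Finset α)
    (S T : {S : Finset α // S ⊆ A}) :
    subsetsEquivCube A S ≤ subsetsEquivCube A T ↔ T.1 ⊆ S.1 := by
  have key : ∀ i, subsetsEquivCube A S i ≤ subsetsEquivCube A T i ↔
      ((A.equivFin.symm i : α) ∈ T.1 → (A.equivFin.symm i : α) ∈ S.1) := by
    intro i
    simp only [subsetsEquivCube, Equiv.coe_fn_mk, Bool.le_iff_imp, decide_eq_true_eq]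
    tauto
  simp only [Pi.le_def, key]
  refine ⟨fun h a ha => ?_, fun h i hi => h hi⟩
  simpa using h (A.equivFin ⟨a, T.2 ha⟩) (by simpa using ha)

/-- The interval `[P, P']` is a cube: the coordinate of `Q` at a parenthesis of `P \ P'` records
whether that parenthesis has been removed. -/
noncomputable def KWord.iccIsoCube {k : ℕ} (P P' : KWord k) (h : P'.1 ⊆ P.1) :
    Set.Icc P P' ≃o (Fin ((P.1 \ P'.1).card) → Bool) where
  toEquiv := (KWord.iccEquiv P P' h).trans (subsetsEquivCube _)
  map_rel_iff' {Q R} :=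
    (subsetsEquivCube_le_iff _ _ _).trans (KWord.iccEquiv_le_iff P P' h Q R).symm

/-- cf. Lemma 1.4 of the paper.  If `P' ⊊ P` are parenthesized words
on `W_k`, then every set between `P'` and `P` is again a parenthesized word, the map
`Q ↦ Q \ P'` is an order isomorphism from the interval `[P, P']` of `𝔎_k` onto the
subsets of `P \ P'` ordered by reverse inclusion, and in particular this interval is
order isomorphic to the cube `𝓘^m`, `m = |P \ P'|` (`𝓘` the two element poset). -/
theorem interval_is_cube (k : ℕ) (P P' : KWord k) (hss : P'.1 ⊂ P.1) :
    (∀ Q : Finset (Finset (Fin k)), P'.1 ⊆ Q → Q ⊆ P.1 → IsParenWord k Q) ∧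
    (∃ e : (Set.Icc P P') ≃ {S : Finset (Finset (Fin k)) // S ⊆ P.1 \ P'.1},
      (∀ Q : Set.Icc P P', ((e Q : {S : Finset (Finset (Fin k)) // S ⊆ P.1 \ P'.1}) : Finset (Finset (Fin k))) = Q.1.1 \ P'.1) ∧
      (∀ Q R : Set.Icc P P', Q ≤ R ↔
        ((e R : {S : Finset (Finset (Fin k)) // S ⊆ P.1 \ P'.1}) : Finset (Finset (Fin k))) ⊆
          ((e Q : {S : Finset (Finset (Fin k)) // S ⊆ P.1 \ P'.1}) : Finset (Finset (Fin k))))) ∧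
    Nonempty ((Set.Icc P P') ≃o (Fin ((P.1 \ P'.1).card) → Bool)) := by
  exact ⟨fun Q _ hQ => P.2.mono hQ,
    ⟨KWord.iccEquiv P P' hss.subset, fun _ => rfl, KWord.iccEquiv_le_iff P P' hss.subset⟩,
    ⟨KWord.iccIsoCube P P' hss.subset⟩⟩
end

section
/- For every n ≥ 2 and every m ≥ 0, the geometric realization of the nerve of the poset 𝔎^{(n)}_m is (n−3)-connected: it is nonempty, and for every basepoint x and every natural number k with k ≤ n−3 the homotopy group π_k of the realization at x is trivial. In particular, if n ≥ 4 the geometric realization of the nerve of 𝔎^{(n)}_m is simply connected. -/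
/-- The blocks of `P`: the members of `P` together with the full interval `W_m`. -/
def blocks {m : ℕ} (P : Finset (Finset (Fin m))) : Finset (Finset (Fin m)) :=
  insert Finset.univ P

open scoped Classical in
/-- The children of a block `b`: the maximal members of `P` strictly contained in `b`,
together with the singletons of elements of `b` not lying in any member of `P`
strictly contained in `b`. -/
noncomputable def children {m : ℕ} (P : Finset (Finset (Fin m))) (b : Finset (Fin m)) :
    Finset (Finset (Fin m)) :=
  (P.filter fun p => p ⊂ b ∧ ∀ q ∈ P, q ⊂ b → p ⊆ q → p = q) ∪
    ((b.filter fun x => ∀ p ∈ P, p ⊂ b → x ∉ p).image fun x => {x})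

/-- The valence of a block: its number of children. -/
noncomputable def valence {m : ℕ} (P : Finset (Finset (Fin m))) (b : Finset (Fin m)) : ℕ :=
  (children P b).card

open CategoryTheory

/-- The `n`-th filtration `𝔎⁽ⁿ⁾_m` of the associahedral poset: parenthesized words
all of whose blocks have valence at most `n`, ordered by reverse inclusion. -/
def KFilt (n m : ℕ) : Type :=
  {P : Finset (Finset (Fin m)) // IsParenWord m P ∧ ∀ b ∈ blocks P, valence P b ≤ n}

noncomputable instance (n m : ℕ) : PartialOrder (KFilt n m) where
  le P Q := Q.1 ⊆ P.1
  le_refl P := Finset.Subset.refl _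
  le_trans P Q R h h' := Finset.Subset.trans h' h
  le_antisymm P Q h h' := Subtype.ext (Finset.Subset.antisymm h' h)

namespace KConn

open Set Topology

/-! ### Extension of maps into clique complexes -/

section Extension

variable {ι : Type*} [Fintype ι]

/-- The geometric realization, in barycentric coordinates, of the clique complex of the relation
`r` on the vertex set `B`: the probability vectors supported on pairwise related elements of `B`.
When `r` is the comparability relation of a poset this is the order complex of `B`. -/
def Cx (r : ι → ι → Prop) (B : Set ι) : Set (ι → ℝ) :=
  {w | (∀ x, 0 ≤ w x) ∧ ∑ x, w x = 1 ∧ (∀ x, w x ≠ 0 → x ∈ B) ∧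
    ∀ x y, w x ≠ 0 → w y ≠ 0 → r x y}

open scoped Classical in
/-- Subtract from each coordinate in `B` the sizes of the coordinates not related to it, and cut
off at `0`. The support of the result is a clique of `r`, and points of `Cx r B` are fixed; after
normalization this retracts a neighbourhood of `Cx r B` onto `Cx r B`. -/
noncomputable def trunc (r : ι → ι → Prop) (B : Set ι) (w : ι → ℝ) (x : ι) : ℝ :=
  if x ∈ B then max 0 (w x - ∑ y, if r x y then 0 else |w y|) else 0

/-- The total mass left after truncation. -/
noncomputable def mass (r : ι → ι → Prop) (B : Set ι) (w : ι → ℝ) : ℝ := ∑ x, trunc r B w x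

/-- The neighbourhood retraction onto `Cx r B`, meaningful where the mass is positive. -/
noncomputable def retr (r : ι → ι → Prop) (B : Set ι) (w : ι → ℝ) : ι → ℝ :=
  fun x => trunc r B w x / mass r B w

variable {r : ι → ι → Prop} {B : Set ι}

theorem trunc_nonneg (w : ι → ℝ) (x : ι) : 0 ≤ trunc r B w x := by
  unfold trunc; split_ifs <;> simp

theorem continuous_trunc : Continuous (trunc r B) := by
  refine continuous_pi fun x => ?_
  unfold trunc
  by_cases hx : x ∈ B
  · simp only [hx, if_true]
    refine continuous_const.max ((continuous_apply x).sub (continuous_finsetSum _ fun y _ => ?_))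
    by_cases h : r x y
    · simp only [h, if_true]; exact continuous_const
    · simp only [h, if_false]; exact (continuous_apply y).abs
  · simp only [hx, if_false]; exact continuous_const

theorem continuous_mass : Continuous (mass r B) :=
  continuous_finsetSum _ fun x _ => (continuous_apply x).comp continuous_trunc

theorem mass_nonneg (w : ι → ℝ) : 0 ≤ mass r B w :=
  Finset.sum_nonneg fun x _ => trunc_nonneg w x

theorem mass_pos_of_trunc {w : ι → ℝ} {x : ι} (h : 0 < trunc r B w x) : 0 < mass r B w :=
  Finset.sum_pos' (fun x _ => trunc_nonneg w x) ⟨x, Finset.mem_univ _, h⟩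

open scoped Classical in
theorem trunc_ne_zero {w : ι → ℝ} {x : ι} (h : trunc r B w x ≠ 0) :
    x ∈ B ∧ (∑ y, if r x y then 0 else |w y|) < w x := by
  unfold trunc at h
  split_ifs at h with hx
  · refine ⟨hx, ?_⟩
    by_contra h'
    exact h (max_eq_left (by linarith))
  · exact absurd rfl h

open scoped Classical in
theorem trunc_ne_zero_ne {w : ι → ℝ} {x : ι} (h : trunc r B w x ≠ 0) : w x ≠ 0 := by
  have h1 := (trunc_ne_zero h).2
  have h2 : 0 ≤ ∑ y, if r x y then 0 else |w y| :=
    Finset.sum_nonneg fun y _ => by split_ifs <;> positivity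
  exact (lt_of_le_of_lt h2 h1).ne'

open scoped Classical in
theorem abs_lt_of_trunc {w : ι → ℝ} {x y : ι} (h : trunc r B w x ≠ 0) (hxy : ¬ r x y) :
    |w y| < w x := by
  refine lt_of_le_of_lt ?_ (trunc_ne_zero h).2
  have := Finset.single_le_sum (f := fun y => if r x y then 0 else |w y|)
    (fun y _ => by split_ifs <;> positivity) (Finset.mem_univ y)
  simpa [hxy] using this

theorem trunc_eq_of_related {w : ι → ℝ} (hw : ∀ x, 0 ≤ w x) {x : ι} (hx : x ∈ B)
    (h : ∀ y, w y ≠ 0 → r x y) : trunc r B w x = w x := by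
  unfold trunc
  rw [if_pos hx, Finset.sum_eq_zero, sub_zero, max_eq_right (hw x)]
  intro y _
  split_ifs with hxy
  · rfl
  · by_contra h'
    exact hxy (h y (by simpa using h'))

theorem trunc_eq_self {w : ι → ℝ} (hw : w ∈ Cx r B) : trunc r B w = w := by
  funext x
  by_cases hx : w x = 0
  · by_contra h
    exact trunc_ne_zero_ne (r := r) (B := B) (by rwa [hx] at h) hx
  · exact trunc_eq_of_related hw.1 (hw.2.2.1 x hx) fun y hy => hw.2.2.2 x y hx hy

theorem mass_eq_one {w : ι → ℝ} (hw : w ∈ Cx r B) : mass r B w = 1 := by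
  unfold mass; rw [trunc_eq_self hw]; exact hw.2.1

theorem retr_eq_self {w : ι → ℝ} (hw : w ∈ Cx r B) : retr r B w = w := by
  funext x
  simp [retr, mass_eq_one hw, trunc_eq_self hw]

theorem retr_mem {w : ι → ℝ} (hw : 0 < mass r B w) (hs : ∀ x y, r x y → r y x) :
    retr r B w ∈ Cx r B := by
  have key : ∀ x, retr r B w x ≠ 0 → trunc r B w x ≠ 0 := fun x h h' => h (by simp [retr, h'])
  refine ⟨fun x => div_nonneg (trunc_nonneg w x) hw.le, ?_,
    fun x hx => (trunc_ne_zero (key x hx)).1, fun x y hx hy => ?_⟩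
  · simp only [retr]
    rw [← Finset.sum_div]
    exact div_self hw.ne'
  · by_contra hxy
    have h1 := abs_lt_of_trunc (key x hx) hxy
    have h2 := abs_lt_of_trunc (key y hy) fun h => hxy (hs _ _ h)
    have h3 := le_abs_self (w x)
    have h4 := le_abs_self (w y)
    linarith

theorem retr_ne_zero {w : ι → ℝ} {x : ι} (h : retr r B w x ≠ 0) : w x ≠ 0 :=
  trunc_ne_zero_ne (r := r) (B := B) fun h' => h (by simp [retr, h'])

theorem continuousOn_retr : ContinuousOn (retr r B) {w | 0 < mass r B w} := by
  refine continuousOn_pi.2 fun x => ContinuousOn.div ?_ continuous_mass.continuousOn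
    fun w hw => ne_of_gt hw
  exact ((continuous_apply x).comp continuous_trunc).continuousOn

theorem Cx_mono {B' : Set ι} (h : B ⊆ B') : Cx r B ⊆ Cx r B' :=
  fun _ hw => ⟨hw.1, hw.2.1, fun x hx => h (hw.2.2.1 x hx), hw.2.2.2⟩

/-- Tietze's theorem in the form used below. -/
theorem tietze {κ E : Type*} [TopologicalSpace E] [NormalSpace E] {A : Set E} (hA : IsClosed A)
    {f : E → κ → ℝ} (hf : ContinuousOn f A) : ∃ g : E → κ → ℝ, Continuous g ∧ EqOn g f A := by
  obtain ⟨g, hg⟩ := ContinuousMap.exists_restrict_eq hA ⟨A.domRestrict f, hf.domRestrict⟩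
  exact ⟨g, g.continuous, fun x hx => DFunLike.congr_fun hg ⟨x, hx⟩⟩

theorem glue {κ E : Type*} [TopologicalSpace E] [NormalSpace E] {A A' : Set E} (hA : IsClosed A)
    (hA' : IsClosed A') {f f' : E → κ → ℝ} (hf : ContinuousOn f A) (hf' : ContinuousOn f' A')
    (h : EqOn f f' (A ∩ A')) :
    ∃ g : E → κ → ℝ, Continuous g ∧ EqOn g f A ∧ EqOn g f' A' := by
  classical
  have e1 : EqOn (A.piecewise f f') f A := fun x hx => by simp [hx]
  have e2 : EqOn (A.piecewise f f') f' A' := fun x hx => by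
    by_cases hxA : x ∈ A
    · simp [hxA, h ⟨hxA, hx⟩]
    · simp [hxA]
  obtain ⟨g, hg, hg'⟩ := tietze (hA.union hA')
    (ContinuousOn.union_of_isClosed (hf.congr e1) (hf'.congr e2) hA hA')
  exact ⟨g, hg, fun x hx => (hg' (Or.inl hx)).trans (e1 hx),
    fun x hx => (hg' (Or.inr hx)).trans (e2 hx)⟩

/-- Homotopy extension: if a map `g` on the closed set `A` is, pointwise on `A`, in a common
simplex with a map `f` defined on all of `M`, then `g` extends to `M` as well. -/
theorem extend_of_contiguous {E : Type*} [TopologicalSpace E] [NormalSpace E]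
    (hs : ∀ x y, r x y → r y x) {M A : Set E} (hM : IsClosed M) (hA : IsClosed A)
    {f g : E → ι → ℝ} (hf : Continuous f) (hg : Continuous g) (hfM : MapsTo f M (Cx r B))
    (hgA : MapsTo g A (Cx r B)) (hAM : A ⊆ M)
    (hfg : ∀ x ∈ A, ∀ u v, f x u ≠ 0 → g x v ≠ 0 → r u v) :
    ∃ G : E → ι → ℝ, Continuous G ∧ MapsTo G M (Cx r B) ∧ EqOn G g A := by
  have hseg : Continuous fun q : unitInterval × E =>
      mass r B ((1 - (q.1 : ℝ)) • f q.2 + (q.1 : ℝ) • g q.2) :=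
    continuous_mass.comp (by fun_prop)
  -- the points over which some point of the segment from `f` to `g` cannot be retracted to the
  -- complex; a cut-off function moves from `f` to `g` only away from them
  let K : Set E := Prod.snd '' {q : unitInterval × E |
      mass r B ((1 - (q.1 : ℝ)) • f q.2 + (q.1 : ℝ) • g q.2) ≤ 0}
  have hK : IsClosed K :=
    isClosedMap_snd_of_compactSpace _ (isClosed_le hseg continuous_const)
  have hdisj : Disjoint K A := by
    rw [Set.disjoint_left]
    rintro _ ⟨⟨t, x⟩, hx, rfl⟩ hxA
    have hf1 := hfM (hAM hxA)
    have hg1 := hgA hxA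
    have ht0 : 0 ≤ (t : ℝ) := t.2.1
    have ht1 : 0 ≤ 1 - (t : ℝ) := sub_nonneg.2 t.2.2
    have hor : ∀ u, ((1 - (t : ℝ)) • f x + (t : ℝ) • g x) u ≠ 0 → f x u ≠ 0 ∨ g x u ≠ 0 := by
      intro u hu
      by_contra! h
      exact hu (by simp [h.1, h.2])
    have : (1 - (t : ℝ)) • f x + (t : ℝ) • g x ∈ Cx r B := by
      refine ⟨fun u => ?_, ?_, fun u hu => ?_, fun u v hu hv => ?_⟩
      · have := hf1.1 u
        have := hg1.1 u
        simp only [Pi.add_apply, Pi.smul_apply, smul_eq_mul]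
        positivity
      · simp only [Pi.add_apply, Pi.smul_apply, smul_eq_mul]
        rw [Finset.sum_add_distrib, ← Finset.mul_sum, ← Finset.mul_sum, hf1.2.1, hg1.2.1]
        ring
      · exact (hor u hu).elim (hf1.2.2.1 u) (hg1.2.2.1 u)
      · rcases hor u hu with h1 | h1 <;> rcases hor v hv with h2 | h2
        · exact hf1.2.2.2 _ _ h1 h2
        · exact hfg x hxA _ _ h1 h2
        · exact hs _ _ (hfg x hxA _ _ h2 h1)
        · exact hg1.2.2.2 _ _ h1 h2
    have h1 := mass_eq_one this
    simp only [mem_ofPred_eq] at hx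
    linarith
  obtain ⟨u, hu0, hu1, hu⟩ := exists_continuous_zero_one_of_isClosed hK hA hdisj
  let v : E → ι → ℝ := fun x => (1 - u x) • f x + u x • g x
  have hv : Continuous v := by
    have := u.continuous
    fun_prop
  have hvM : ∀ x ∈ M, 0 < mass r B (v x) := by
    intro x hx
    by_cases hxK : x ∈ K
    · have : v x = f x := by simp [v, hu0 hxK]
      rw [this, mass_eq_one (hfM hx)]
      exact one_pos
    · by_contra h
      exact hxK ⟨(⟨u x, hu x⟩, x), not_lt.1 h, rfl⟩
  have hc : ContinuousOn (fun x => retr r B (v x)) M :=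
    continuousOn_retr.comp hv.continuousOn hvM
  obtain ⟨G, hG, hG'⟩ := tietze hM hc
  refine ⟨G, hG, fun x hx => ?_, fun x hx => ?_⟩
  · rw [hG' hx]
    exact retr_mem (hvM x hx) hs
  · rw [hG' (hAM hx)]
    have : v x = g x := by simp [v, hu1 hx]
    simp only [this, retr_eq_self (hgA hx)]

/-! ### Thin partitions of Euclidean space -/

/-- Two disjoint compact sets in `ℝᵏ` are separated by a set whose frontier consists of points
having a coordinate in `ℚ + θ`: discretize space by a fine grid of hyperplanes. -/
theorem exists_partition {k : ℕ} (θ : ℝ) {C D : Set (Fin k → ℝ)} (hC : IsCompact C)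
    (hD : IsCompact D) (hCD : Disjoint C D) :
    ∃ P : Set (Fin k → ℝ), C ⊆ interior P ∧ D ⊆ interior Pᶜ ∧
      ∀ x ∈ frontier P, ∃ c, ∃ q : ℚ, x c = q + θ := by
  obtain ⟨δ, hδ, hdis⟩ := hCD.exists_thickenings hC hD.isClosed
  obtain ⟨N, hN⟩ := exists_nat_gt (4 / δ)
  have hN0 : (0 : ℝ) < N := lt_trans (by positivity) hN
  have hN1 : 1 / (N : ℝ) < δ / 4 := by
    rw [div_lt_iff₀ hδ] at hN
    rw [div_lt_div_iff₀ hN0 (by norm_num)]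
    linarith
  let F : (Fin k → ℝ) → (Fin k → ℝ) := fun x c => (⌊N * (x c - θ)⌋ : ℝ) / N + θ
  have hF : ∀ x, dist (F x) x ≤ 1 / N := by
    intro x
    rw [dist_pi_le_iff (by positivity)]
    intro c
    have h1 := Int.floor_le (N * (x c - θ))
    have h2 := Int.lt_floor_add_one (N * (x c - θ))
    have h3 : F x c - x c = ((⌊N * (x c - θ)⌋ : ℝ) - N * (x c - θ)) / N := by
      simp only [F]; field_simp; ring
    rw [Real.dist_eq, h3, abs_div, abs_of_pos hN0, div_le_div_iff_of_pos_right hN0, abs_le]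
    constructor <;> linarith
  refine ⟨F ⁻¹' Metric.thickening (δ / 2) C, fun x hx => ?_, fun y hy => ?_, fun x hx => ?_⟩
  · rw [mem_interior_iff_mem_nhds]
    filter_upwards [Metric.ball_mem_nhds x (show 0 < δ / 4 by positivity)] with z hz
    rw [mem_preimage, Metric.mem_thickening_iff]
    refine ⟨x, hx, ?_⟩
    have := dist_triangle (F z) z x
    have := hF z
    rw [Metric.mem_ball] at hz
    linarith
  · rw [mem_interior_iff_mem_nhds]
    filter_upwards [Metric.ball_mem_nhds y (show 0 < δ / 4 by positivity)] with z hz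
    rw [mem_compl_iff, mem_preimage, Metric.mem_thickening_iff]
    rintro ⟨x, hx, hzx⟩
    have h1 := hF z
    rw [Metric.mem_ball] at hz
    exact Set.disjoint_left.1 hdis
      (Metric.mem_thickening_iff.2 ⟨x, hx, hzx.trans (by linarith)⟩)
      (Metric.mem_thickening_iff.2 ⟨y, hy, by linarith [dist_triangle (F z) z y]⟩)
  -- away from the grid hyperplanes the rounding map `F` is locally constant
  · by_contra! hgrid
    have hloc : ∀ᶠ z in 𝓝 x, F z = F x := by
      have : ∀ᶠ z in 𝓝 x, ∀ c, ⌊N * (z c - θ)⌋ = ⌊N * (x c - θ)⌋ := by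
        rw [Filter.eventually_all]
        intro c
        have h1 : (⌊N * (x c - θ)⌋ : ℝ) < N * (x c - θ) := by
          refine lt_of_le_of_ne (Int.floor_le _) fun h => ?_
          refine hgrid c ((⌊N * (x c - θ)⌋ : ℚ) / N) ?_
          push_cast
          rw [h]
          field_simp
          ring
        have h2 := Int.lt_floor_add_one (N * (x c - θ))
        have hc : Continuous fun z : Fin k → ℝ => (N : ℝ) * (z c - θ) := by fun_prop
        filter_upwards [hc.continuousAt.eventually (lt_mem_nhds h1),
          hc.continuousAt.eventually (gt_mem_nhds h2)] with z hz1 hz2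
        exact Int.floor_eq_iff.2 ⟨hz1.le, hz2⟩
      filter_upwards [this] with z hz
      funext c
      simp only [F, hz c]
    rw [frontier_eq_closure_inter_closure, mem_inter_iff, mem_closure_iff_frequently,
      mem_closure_iff_frequently] at hx
    obtain ⟨z, hz, hz'⟩ := (hx.1.and_eventually hloc).exists
    obtain ⟨y, hy, hy'⟩ := (hx.2.and_eventually hloc).exists
    refine hy ?_
    rw [mem_preimage] at hz ⊢
    rwa [hy', ← hz']

/-- `M ⊆ ℝᵏ` is `i`-thin if each point has, for every `a < i`, a coordinate in `ℚ + a√2`. As these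
cosets are disjoint, the coordinates are distinct, so `M` has covering dimension at most `k - i`;
only the inductive use in `exists_partition` matters here. -/
def Thin {k : ℕ} (i : ℕ) (M : Set (Fin k → ℝ)) : Prop :=
  ∀ x ∈ M, ∀ a < i, ∃ c, ∃ q : ℚ, x c = q + a * √2

theorem Thin.le {k i : ℕ} {M : Set (Fin k → ℝ)} (h : Thin i M) (hM : M.Nonempty) : i ≤ k := by
  obtain ⟨x, hx⟩ := hM
  choose c hc using fun a : Fin i => h x hx a a.2
  have hinj : Function.Injective fun a : Fin i => c a := by
    intro a b hab
    simp only at hab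
    obtain ⟨q, hq⟩ := hc a
    obtain ⟨q', hq'⟩ := hc b
    rw [hab, hq'] at hq
    by_contra hne
    have hne' : ((a : ℕ) : ℝ) - (b : ℕ) ≠ 0 := by
      rw [sub_ne_zero]
      exact_mod_cast fun h => hne (Fin.ext h)
    refine irrational_sqrt_two ⟨(q' - q) / ((a : ℕ) - (b : ℕ)), ?_⟩
    push_cast
    rw [div_eq_iff hne']
    linarith
  simpa using Fintype.card_le_of_injective _ hinj

/-- `Ext r B e` says that `Cx r B` is an absolute extensor for compact subsets of Euclidean space
of dimension less than `e`. For a finite complex this amounts to being `(e - 2)`-connected. -/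
def Ext (r : ι → ι → Prop) (B : Set ι) (e : ℕ) : Prop :=
  ∀ (k i : ℕ) (M A : Set (Fin k → ℝ)) (g : (Fin k → ℝ) → ι → ℝ), k + 1 ≤ e + i →
    IsCompact M → Thin i M → IsClosed A → A ⊆ M → Continuous g → MapsTo g A (Cx r B) →
    ∃ G : (Fin k → ℝ) → ι → ℝ, Continuous G ∧ MapsTo G M (Cx r B) ∧ EqOn G g A

theorem ext_zero : Ext r B 0 := by
  intro k i M A g hk _ hT _ hAM hg _
  have hM : M = ∅ := by
    rw [← Set.not_nonempty_iff_eq_empty]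
    intro h
    have := hT.le h
    omega
  subst hM
  exact ⟨g, hg, fun x hx => hx.elim, fun _ _ => rfl⟩

theorem single_mem (hr : ∀ x, r x x) {p : ι} (hp : p ∈ B) [DecidableEq ι] :
    (Pi.single p 1 : ι → ℝ) ∈ Cx r B := by
  have h0 : ∀ x, (Pi.single p 1 : ι → ℝ) x ≠ 0 → x = p := by
    intro x hx
    by_contra h
    exact hx (Pi.single_eq_of_ne h _)
  refine ⟨fun x => ?_, ?_, fun x hx => h0 x hx ▸ hp, fun x y hx hy => ?_⟩
  · by_cases h : x = p
    · subst h; simp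
    · simp [Pi.single_eq_of_ne h]
  · simp
  · rw [h0 x hx, h0 y hy]; exact hr p

theorem ext_singleton (hr : ∀ x, r x x) (p : ι) (e : ℕ) : Ext r {p} e := by
  classical
  intro k i M A g hk _ _ _ _ hg hgA
  have h1 : (Pi.single p 1 : ι → ℝ) ∈ Cx r {p} := single_mem hr (mem_singleton p)
  refine ⟨fun _ => Pi.single p 1, continuous_const, fun _ _ => h1, fun x hx => ?_⟩
  have hg1 := hgA hx
  have hz : ∀ y, y ≠ p → g x y = 0 := fun y hy => by
    by_contra h
    exact hy (hg1.2.2.1 y h)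
  have hp : g x p = 1 := by
    rw [← hg1.2.1]
    exact (Finset.sum_eq_single p (fun y _ hy => hz y hy) (by simp)).symm
  funext y
  by_cases hy : y = p
  · subst hy; simp [hp]
  · simp [Pi.single_eq_of_ne hy, hz y hy]

theorem Ext.of_succ {e : ℕ} (h : Ext r B (e + 1)) : Ext r B e := by
  intro k i M A g hk
  exact h k i M A g (by omega)

/-- Radial projection of a point other than the vertex `p` away from `p`. -/
theorem delete_mem {p : ι} [DecidableEq ι] {w : ι → ℝ} (hw : w ∈ Cx r (insert p B))
    (hp : w p < 1) : (fun y => if y = p then 0 else w y / (1 - w p)) ∈ Cx r B := by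
  have h1 : 0 < 1 - w p := sub_pos.2 hp
  have hne : ∀ y, (if y = p then 0 else w y / (1 - w p)) ≠ 0 → y ≠ p ∧ w y ≠ 0 := by
    intro y hy
    split_ifs at hy with h
    · exact absurd rfl hy
    · exact ⟨h, fun h' => hy (by simp [h'])⟩
  refine ⟨fun y => ?_, ?_, fun y hy => ?_, fun x y hx hy => ?_⟩
  · have := hw.1 y
    dsimp only
    split_ifs <;> positivity
  · have h2 : ∀ y, (if y = p then 0 else w y / (1 - w p)) =
        (w y - if y = p then w y else 0) / (1 - w p) := by
      intro y
      split_ifs <;> simp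
    simp only [h2]
    rw [← Finset.sum_div, Finset.sum_sub_distrib, hw.2.1, Finset.sum_ite_eq']
    simp [h1.ne']
  · exact (hw.2.2.1 y (hne y hy).2).resolve_left (hne y hy).1
  · exact hw.2.2.2 x y (hne x hx).2 (hne y hy).2

/-- Attaching a vertex `p` along its link: if the base has the extension property in dimensions
below `e + 1` and the link of `p` in dimensions below `e`, then so does the result in dimensions
below `e + 1`. A map into the new complex is split along a thin hypersurface `S` separating the
region near `p` from the region away from `p`; on `S` it is first pushed into the link. -/
theorem ext_insert (hs : ∀ x y, r x y → r y x) (hr : ∀ x, r x x) {p : ι} {e : ℕ}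
    (h1 : Ext r B (e + 1)) (h2 : Ext r {y | y ∈ B ∧ r p y} e) :
    Ext r (insert p B) (e + 1) := by
  classical
  intro k i M A g hk hM hT hA hAM hg hgA
  have hgp : Continuous fun x => g x p := (continuous_apply p).comp hg
  have hAc : IsCompact A := hM.of_isClosed_subset hA hAM
  -- on the part `MD` of `M` near `D` a map into `Cx r B` is built and then bent towards `p`; on the
  -- part `MC` near `C` the extension is constant at `p`; they meet in the thin set `S`
  let C : Set (Fin k → ℝ) := A ∩ {x | 2 / 3 ≤ g x p}
  let D : Set (Fin k → ℝ) := A ∩ {x | g x p ≤ 1 / 3}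
  have hD : IsCompact D := hAc.inter_right (isClosed_le hgp continuous_const)
  obtain ⟨P, hCP, hDP, hfr⟩ := exists_partition (i * √2) (C := C) (D := D)
    (hAc.inter_right (isClosed_le continuous_const hgp)) hD (by
      rw [Set.disjoint_left]
      rintro x ⟨_, hx⟩ ⟨_, hx'⟩
      simp only [mem_ofPred_eq] at hx hx'
      linarith)
  rw [interior_compl] at hDP
  let MD := M ∩ closure Pᶜ
  let MC := M ∩ closure P
  let S := M ∩ frontier P
  have hMD : IsCompact MD := hM.inter_right isClosed_closure
  have hMC : IsCompact MC := hM.inter_right isClosed_closure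
  have hS : IsCompact S := hM.inter_right isClosed_frontier
  have hST : Thin (i + 1) S := by
    rintro x ⟨hxM, hxP⟩ a ha
    rcases Nat.lt_succ_iff_lt_or_eq.1 ha with h | rfl
    · exact hT x hxM a h
    · exact hfr x hxP
  have hSMD : S ⊆ MD := fun x hx => ⟨hx.1, (frontier_eq_closure_inter_closure (s := P) ▸ hx.2).2⟩
  have hMDC : MD ∩ MC ⊆ S := fun x hx =>
    ⟨hx.1.1, by rw [frontier_eq_closure_inter_closure]; exact ⟨hx.2.2, hx.1.2⟩⟩
  have hlt : ∀ x ∈ A ∩ MD, g x p < 2 / 3 := by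
    intro x hx
    by_contra! h
    have h3 := hx.2.2
    rw [closure_compl] at h3
    exact h3 (hCP ⟨hx.1, h⟩)
  have hgt : ∀ x ∈ A ∩ MC, 1 / 3 < g x p := by
    intro x hx
    by_contra! h
    exact hDP ⟨hx.1, h⟩ hx.2.2
  -- `rg` is `g` projected radially away from `p`; on `S`, where `g` has positive `p`-coordinate, it
  -- lies in the link
  obtain ⟨rg, hrg, hrg'⟩ := tietze (A := A ∩ MD) (hA.inter hMD.isClosed)
    (f := fun x y => if y = p then 0 else g x y / (1 - g x p)) (by
      refine continuousOn_pi.2 fun y => ?_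
      by_cases hy : y = p
      · simp only [hy, if_true]; exact continuousOn_const
      · simp only [hy, if_false]
        refine ContinuousOn.div ((continuous_apply y).comp hg).continuousOn
          (continuous_const.sub hgp).continuousOn fun x hx => ?_
        have := hlt x hx
        linarith)
  have hrgB : MapsTo rg (A ∩ MD) (Cx r B) := by
    intro x hx
    rw [hrg' hx]
    exact delete_mem (hgA hx.1) (by linarith [hlt x hx])
  have hrgne : ∀ x ∈ A ∩ MD, ∀ y, rg x y ≠ 0 → g x y ≠ 0 := by
    intro x hx y hy h
    rw [hrg' hx] at hy
    exact hy (by simp [h])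
  have hrgL : MapsTo rg (A ∩ S) (Cx r {y | y ∈ B ∧ r p y}) := by
    intro x hx
    have hx' : x ∈ A ∩ MD := ⟨hx.1, hSMD hx.2⟩
    have h3 := hrgB hx'
    refine ⟨h3.1, h3.2.1, fun y hy => ⟨h3.2.2.1 y hy, ?_⟩, h3.2.2.2⟩
    have h4 := hgt x ⟨hx.1, hx.2.1, frontier_subset_closure hx.2.2⟩
    exact (hgA hx.1).2.2.2 p y (by linarith) (hrgne x hx' y hy)
  -- `S` is thinner than `M`, so the weaker extension property of the link suffices on it
  obtain ⟨s, hs1, hs2, hs3⟩ := h2 k (i + 1) S (A ∩ S) rg (by omega) hS hST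
    (hA.inter hS.isClosed) inter_subset_right hrg hrgL
  obtain ⟨g1, hg1, hg2, hg3⟩ := glue (hA.inter hMD.isClosed) hS.isClosed hrg.continuousOn
    hs1.continuousOn fun x hx => (hs3 ⟨hx.1.1, hx.2⟩).symm
  obtain ⟨γ, hγ1, hγ2, hγ3⟩ := h1 k i MD ((A ∩ MD) ∪ S) g1 hk hMD (fun x hx => hT x hx.1)
    ((hA.inter hMD.isClosed).union hS.isClosed) (union_subset inter_subset_right hSMD) hg1 (by
      rintro x (hx | hx)
      · rw [hg2 hx]; exact hrgB hx
      · rw [hg3 hx]; exact Cx_mono (fun y hy => hy.1) (hs2 hx))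
  obtain ⟨μ, hμ0, hμ1, hμ⟩ := exists_continuous_zero_one_of_isClosed hD.isClosed
    (isClosed_closure (s := P)) (Set.disjoint_left.2 fun x hx => hDP hx)
  -- `κ` measures the distance from `γ` to the link of `p`, and `l` is the amount by which `γ` is moved
  -- towards `p`: fully on `S`, not at all on `D` or away from the link
  let κ : (Fin k → ℝ) → ℝ := fun x => ∑ y, if r p y then 0 else γ x y
  have hκ : Continuous κ := by
    refine continuous_finsetSum _ fun y _ => ?_
    by_cases h : r p y
    · simp only [h, if_true]; exact continuous_const
    · simp only [h, if_false]; exact (continuous_apply y).comp hγ1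
  let l : (Fin k → ℝ) → ℝ := fun x => max 0 (μ x - 4 * κ x)
  have hl : Continuous l := continuous_const.max (μ.continuous.sub (hκ.const_mul 4))
  let v : (Fin k → ℝ) → ι → ℝ := fun x => (1 - l x) • γ x + l x • Pi.single p 1
  have hv : Continuous v := by fun_prop
  have hl0 : ∀ x, 0 ≤ l x := fun x => le_max_left _ _
  have hκ0 : ∀ x ∈ MD, 0 ≤ κ x := fun x hx => Finset.sum_nonneg fun y _ => by
    have := (hγ2 hx).1 y
    split_ifs <;> positivity
  have hl1 : ∀ x ∈ MD, l x ≤ 1 := fun x hx =>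
    max_le zero_le_one (by linarith [hκ0 x hx, (hμ x).2])
  have hvm : ∀ x ∈ MD, 0 < mass r (insert p B) (v x) := by
    intro x hx
    have hγx := hγ2 hx
    have hv0 : ∀ y, 0 ≤ v x y := by
      intro y
      have h3 : (0 : ι → ℝ) ≤ Pi.single p 1 := by simp
      have h4 := h3 y
      have h5 := hγx.1 y
      have h6 := hl0 x
      have h7 : 0 ≤ 1 - l x := sub_nonneg.2 (hl1 x hx)
      simp only [v, Pi.add_apply, Pi.smul_apply, smul_eq_mul]
      simp only [Pi.zero_apply] at h4
      positivity
    rcases eq_or_lt_of_le (hl0 x) with h0 | h0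
    · have : v x = γ x := by simp [v, ← h0]
      rw [this, mass_eq_one (Cx_mono (subset_insert p B) hγx)]
      exact one_pos
    rcases eq_or_lt_of_le (hl1 x hx) with h3 | h3
    · have : v x = Pi.single p 1 := by simp [v, h3]
      rw [this, mass_eq_one (single_mem hr (mem_insert p B))]
      exact one_pos
    have hκ4 : κ x < 1 := by
      by_contra! h
      have : l x = 0 := max_eq_left (by linarith [(hμ x).2])
      linarith
    obtain ⟨y, hy1, hy2⟩ : ∃ y, r p y ∧ γ x y ≠ 0 := by
      by_contra! h
      refine hκ4.ne ?_
      rw [← hγx.2.1]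
      refine Finset.sum_congr rfl fun y _ => ?_
      split_ifs with h4
      · exact (h y h4).symm
      · rfl
    refine mass_pos_of_trunc (x := y) ?_
    rw [trunc_eq_of_related hv0 (mem_insert_of_mem _ (hγx.2.2.1 y hy2))]
    · refine lt_of_le_of_ne (hv0 y) (Ne.symm ?_)
      have h4 : 0 < γ x y := lt_of_le_of_ne (hγx.1 y) hy2.symm
      have h5 : 0 ≤ (Pi.single p 1 : ι → ℝ) y := (single_mem hr (mem_insert p B)).1 y
      have h7 : 0 < 1 - l x := sub_pos.2 h3
      simp only [v, Pi.add_apply, Pi.smul_apply, smul_eq_mul]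
      positivity
    · intro z hz
      by_cases hzp : z = p
      · subst hzp; exact hs _ _ hy1
      · refine hγx.2.2.2 y z hy2 fun h => hz ?_
        simp [v, h, Pi.single_eq_of_ne hzp]
  obtain ⟨G, hG1, hG2, hG3⟩ := glue hMD.isClosed hMC.isClosed
    (f := fun x => retr r (insert p B) (v x)) (f' := fun _ => Pi.single p 1)
    (continuousOn_retr.comp hv.continuousOn hvm) continuousOn_const (by
      intro x hx
      have hxS := hMDC hx
      have h3 : γ x ∈ Cx r {y | y ∈ B ∧ r p y} := by
        rw [hγ3 (Or.inr hxS), hg3 hxS]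
        exact hs2 hxS
      have h4 : κ x = 0 := Finset.sum_eq_zero fun y _ => by
        split_ifs with h
        · rfl
        · by_contra h'
          exact h (h3.2.2.1 y h').2
      have h5 : l x = 1 := by
        have := hμ1 hx.2.2
        simp only [Pi.one_apply] at this
        simp [l, h4, this]
      have h6 : v x = Pi.single p 1 := by simp [v, h5]
      simp only [h6]
      exact retr_eq_self (single_mem hr (mem_insert p B)))
  have hcov : ∀ x ∈ M, x ∈ MD ∨ x ∈ MC := by
    intro x hx
    by_cases hxP : x ∈ P
    · exact Or.inr ⟨hx, subset_closure hxP⟩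
    · exact Or.inl ⟨hx, subset_closure hxP⟩
  -- `G` does not extend `g`, but on `A` its support is contained in that of `g`
  refine extend_of_contiguous hs hM.isClosed hA hG1 hg ?_ hgA hAM ?_
  · intro x hx
    rcases hcov x hx with h | h
    · rw [hG2 h]; exact retr_mem (hvm x h) hs
    · rw [hG3 h]; exact single_mem hr (mem_insert p B)
  · intro x hx u w hu hw
    refine (hgA hx).2.2.2 u w ?_ hw
    rcases hcov x (hAM hx) with h | h
    · rw [hG2 h] at hu
      have h3 := retr_ne_zero hu
      by_cases h4 : γ x u = 0
      · have h5 : u = p := by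
          by_contra h5
          exact h3 (by simp [v, h4, Pi.single_eq_of_ne h5])
        subst h5
        intro h6
        have h7 : μ x = 0 := hμ0 ⟨hx, by simp [h6]⟩
        have h8 : l x = 0 := max_eq_left (by linarith [hκ0 x h])
        exact h3 (by simp [v, h4, h8])
      · rw [hγ3 (Or.inl ⟨hx, h⟩), hg2 ⟨hx, h⟩] at h4
        exact hrgne x ⟨hx, h⟩ u h4
    · rw [hG3 h] at hu
      have h5 : u = p := by
        by_contra h5
        exact hu (Pi.single_eq_of_ne h5 _)
      subst h5
      linarith [hgt x ⟨hx, h⟩]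

/-- A complex with a vertex related to all the others is contractible. -/
theorem ext_cone (hs : ∀ x y, r x y → r y x) (hr : ∀ x, r x x) {q : ι} (hq : q ∈ B)
    (h : ∀ x ∈ B, r q x) (e : ℕ) : Ext r B e := by
  induction hn : B.ncard using Nat.strong_induction_on generalizing B e with
  | _ n ih =>
    by_cases hB : ∃ p ∈ B, p ≠ q
    · obtain ⟨p, hp, hpq⟩ := hB
      have hlt : (B \ {p}).ncard < n := hn ▸ ncard_sdiff_singleton_lt_of_mem hp
      have hle : ({y | y ∈ B \ {p} ∧ r p y} : Set ι).ncard < n :=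
        lt_of_le_of_lt (ncard_le_ncard (fun y hy => hy.1) (toFinite _)) hlt
      cases e with
      | zero => exact ext_zero
      | succ e =>
        rw [← insert_sdiff_self_of_mem hp]
        have hq' : q ∈ B \ {p} := ⟨hq, fun h => hpq h.symm⟩
        have hq'' : q ∈ {y | y ∈ B \ {p} ∧ r p y} := ⟨hq', hs _ _ (h p hp)⟩
        exact ext_insert hs hr (ih _ hlt hq' (fun x hx => h x hx.1) _ rfl)
          (ih _ hle hq'' (fun x hx => h x hx.1.1) _ rfl)
    · push Not at hB
      have : B = {q} := by
        ext x
        exact ⟨hB x, fun hx => by rw [mem_singleton_iff.1 hx]; exact hq⟩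
      rw [this]
      exact ext_singleton hr q e

/-- Attaching the vertices of `B \ B₀` to `B₀` in order of increasing height `h`, where no two
vertices of the same height are related. -/
theorem ext_add (hs : ∀ x y, r x y → r y x) (hr : ∀ x, r x x) {B₀ : Set ι} (h : ι → ℕ) {e : ℕ}
    (hB : B₀ ⊆ B) (hh : ∀ x ∈ B \ B₀, ∀ y ∈ B \ B₀, r x y → x ≠ y → h x ≠ h y)
    (h0 : Ext r B₀ (e + 1))
    (hl : ∀ p ∈ B \ B₀, Ext r {x | (x ∈ B₀ ∨ (x ∈ B ∧ h x < h p)) ∧ r p x} e) :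
    Ext r B (e + 1) := by
  induction hn : (B \ B₀).ncard generalizing B with
  | zero =>
    rw [ncard_eq_zero, sdiff_eq_empty] at hn
    rwa [Subset.antisymm hn hB]
  | succ n ih =>
    have hne : (B \ B₀).Nonempty := by
      rw [← ncard_pos]
      omega
    obtain ⟨p, hp, hmax⟩ := (toFinite (B \ B₀)).exists_maximalFor h _ hne
    have hmax' : ∀ x ∈ B \ B₀, h x ≤ h p := fun x hx => by
      by_contra! hlt
      exact absurd (hmax hx hlt.le) (not_le.2 hlt)
    have hB' : B₀ ⊆ B \ {p} := fun x hx => ⟨hB hx, fun h => hp.2 (mem_singleton_iff.1 h ▸ hx)⟩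
    have hsub : (B \ {p}) \ B₀ ⊆ B \ B₀ := fun x hx => ⟨hx.1.1, hx.2⟩
    rw [← insert_sdiff_self_of_mem hp.1]
    refine ext_insert hs hr (ih hB' (fun x hx y hy => hh x (hsub hx) y (hsub hy)) ?_ ?_) ?_
    · intro x hx
      convert hl x (hsub hx) using 1
      ext y
      refine and_congr_left fun _ => or_congr_right ⟨fun hy => ⟨hy.1.1, hy.2⟩, fun hy =>
        ⟨⟨hy.1, fun hyp => ?_⟩, hy.2⟩⟩
      rw [mem_singleton_iff.1 hyp] at hy
      exact absurd (hmax' x (hsub hx)) (not_le.2 hy.2)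
    · have : (B \ {p}) \ B₀ = (B \ B₀) \ {p} := by
        ext x
        simp only [mem_sdiff]
        tauto
      rw [this, ncard_sdiff_singleton_of_mem hp, hn]
      rfl
    · convert hl p hp using 1
      ext y
      refine and_congr_left fun hpy => ⟨fun hy => ?_, ?_⟩
      · by_cases hy0 : y ∈ B₀
        · exact Or.inl hy0
        · have hy1 : y ∈ B \ B₀ := ⟨hy.1, hy0⟩
          refine Or.inr ⟨hy.1, lt_of_le_of_ne (hmax' y hy1) (Ne.symm ?_)⟩
          exact hh p hp y hy1 hpy fun h => hy.2 h.symm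
      · rintro (hy | hy)
        · exact hB' hy
        · exact ⟨hy.1, fun hyp => absurd (mem_singleton_iff.1 hyp ▸ hy.2) (lt_irrefl _)⟩

/-- The extension property transfers along an isomorphism of relations. -/
theorem ext_transfer {X : Type*} [Fintype X] {j : X → ι} (hj : Function.Injective j) {e : ℕ}
    (h : Ext r (range j) e) : Ext (fun x y => r (j x) (j y)) univ e := by
  classical
  intro k i M A g hk hM hT hA hAM hg hgA
  have hsum : ∀ (w : X → ℝ) x, (∑ z, if j z = j x then w z else 0) = w x := by
    intro w x
    simp [hj.eq_iff]
  have hne : ∀ (w : X → ℝ) y, (∑ z, if j z = y then w z else 0) ≠ 0 →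
      ∃ x, j x = y ∧ w x ≠ 0 := by
    intro w y hy
    obtain ⟨x, _, hx⟩ := Finset.exists_ne_zero_of_sum_ne_zero hy
    split_ifs at hx with h1
    · exact ⟨x, h1, hx⟩
    · exact absurd rfl hx
  obtain ⟨G, hG1, hG2, hG3⟩ := h k i M A (fun z y => ∑ x, if j x = y then g z x else 0) hk hM hT
    hA hAM (by
      refine continuous_pi fun y => continuous_finsetSum _ fun x _ => ?_
      by_cases hxy : j x = y
      · simp only [hxy, if_true]; exact (continuous_apply x).comp hg
      · simp only [hxy, if_false]; exact continuous_const) (by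
      intro z hz
      have h1 := hgA hz
      refine ⟨fun y => Finset.sum_nonneg fun x _ => ?_, ?_, fun y hy => ?_, fun y y' hy hy' => ?_⟩
      · have := h1.1 x
        split_ifs <;> positivity
      · rw [Finset.sum_comm]
        simp [h1.2.1]
      · obtain ⟨x, hx, _⟩ := hne _ _ hy
        exact ⟨x, hx⟩
      · obtain ⟨x, rfl, hx⟩ := hne _ _ hy
        obtain ⟨x', rfl, hx'⟩ := hne _ _ hy'
        exact h1.2.2.2 x x' hx hx')
  refine ⟨fun z x => G z (j x), continuous_pi fun x => (continuous_apply (j x)).comp hG1,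
    fun z hz => ?_, fun z hz => ?_⟩
  · have h1 := hG2 hz
    refine ⟨fun x => h1.1 _, ?_, fun _ _ => mem_univ _, fun x y => h1.2.2.2 _ _⟩
    rw [← h1.2.1]
    refine Fintype.sum_of_injective j hj _ _ (fun y hy => ?_) fun _ => rfl
    by_contra hy'
    exact hy (h1.2.2.1 y hy')
  · funext x
    have h1 := congrFun (hG3 hz) (j x)
    exact h1.trans (hsum (g z) x)

end Extension

section Closure

variable {α : Type*} [PartialOrder α]

/-- Comparability in a partial order. -/
def Cmp (x y : α) : Prop := x ≤ y ∨ y ≤ x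

theorem Cmp.symm (x y : α) (h : Cmp x y) : Cmp y x := Or.symm h

theorem Cmp.refl (x : α) : Cmp x x := Or.inl le_rfl

/-- If `f` maps every element of `B \ K` to the least element of `K` above it, then the order
complex of `B` is at least as connected as that of `K`. -/
theorem ext_closure [Fintype α] {h : α → ℕ} (hh : StrictMono h) {K B : Set α} (hKB : K ⊆ B) (f : α → α)
    (hf : ∀ x ∈ B, x ∉ K → f x ∈ K ∧ x ≤ f x ∧ ∀ y ∈ K, x ≤ y → f x ≤ y) {e : ℕ}
    (hK : Ext Cmp K e) : Ext Cmp B e := by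
  cases e with
  | zero => exact ext_zero
  | succ e =>
    refine ext_add Cmp.symm Cmp.refl h hKB ?_ hK ?_
    · rintro x - y - (hxy | hxy) hne
      · exact (hh (lt_of_le_of_ne hxy hne)).ne
      · exact (hh (lt_of_le_of_ne hxy hne.symm)).ne'
    · intro x hx
      obtain ⟨h1, h2, h3⟩ := hf x hx.1 hx.2
      refine ext_cone Cmp.symm Cmp.refl (q := f x) ?_ ?_ e
      · exact ⟨Or.inl h1, Or.inl h2⟩
      rintro y ⟨hy | hy, hxy | hxy⟩
      · exact Or.inl (h3 y hy hxy)
      · exact Or.inr (hxy.trans h2)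
      · exact absurd (hh.monotone hxy) (not_le.2 hy.2)
      · exact Or.inr (hxy.trans h2)

end Closure
end KConn

namespace KConn

open Set

/-! ### Full words -/

section Words

variable {m : ℕ}

/-- A full word: a laminar family of nonempty intervals of `Fin m` containing all singletons and
the whole of `Fin m`. Adding these trivial blocks identifies parenthesized words with full
words (for `m ≥ 2`). -/
def FW (F : Finset (Finset (Fin m))) : Prop :=
  (∀ p ∈ F, p.Nonempty ∧ IsInterval p) ∧ Laminar F ∧ (∀ x, {x} ∈ F) ∧ Finset.univ ∈ F

/-- If `w` is the smallest member of `P` strictly containing `c`, and `c` is an initial part of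
`w`, then `w \ c` can be added to `P`. -/
theorem FW.insert_sdiff {P : Finset (Finset (Fin m))} (hP : FW P) {c w : Finset (Fin m)}
    (hc : c ∈ P) (hw : w ∈ P) (hcw : c ⊂ w) (hmin : ∀ x ∈ P, c ⊂ x → w ⊆ x)
    (hini : ∃ a ∈ c, ∀ y ∈ w, a ≤ y) : FW (insert (w \ c) P) := by
  obtain ⟨a, hac, ha⟩ := hini
  have hlam : ∀ x ∈ P, x ⊆ w \ c ∨ w \ c ⊆ x ∨ Disjoint x (w \ c) := by
    intro x hx
    rcases hP.2.1 hx hw with h | h | h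
    · rcases hP.2.1 hx hc with h' | h' | h'
      · exact Or.inr (Or.inr (Finset.disjoint_of_subset_left h' Finset.disjoint_sdiff))
      · rcases eq_or_ne c x with rfl | hne
        · exact Or.inr (Or.inr Finset.disjoint_sdiff)
        · exact Or.inr (Or.inl (Finset.sdiff_subset.trans
            (hmin x hx (Finset.ssubset_iff_subset_ne.2 ⟨h', hne⟩))))
      · exact Or.inl fun y hy => Finset.mem_sdiff.2 ⟨h hy, Finset.disjoint_left.1 h' hy⟩
    · exact Or.inr (Or.inl (Finset.sdiff_subset.trans h))
    · exact Or.inr (Or.inr (Finset.disjoint_of_subset_right Finset.sdiff_subset h))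
  refine ⟨fun p hp => ?_, fun p hp q hq => ?_, fun x => Finset.mem_insert_of_mem (hP.2.2.1 x),
    Finset.mem_insert_of_mem hP.2.2.2⟩
  · rcases Finset.mem_insert.1 hp with rfl | hp
    · refine ⟨Finset.sdiff_nonempty.2 hcw.2, fun x y z hx hz hxy hyz => ?_⟩
      rw [Finset.mem_sdiff] at hx hz ⊢
      refine ⟨(hP.1 w hw).2 hx.1 hz.1 hxy hyz, fun hy => hx.2 ?_⟩
      exact (hP.1 c hc).2 hac hy (ha x hx.1) hxy
    · exact hP.1 p hp
  · rcases Finset.mem_insert.1 hp with rfl | hp <;> rcases Finset.mem_insert.1 hq with rfl | hq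
    · exact Or.inl subset_rfl
    · rcases hlam q hq with h | h | h
      · exact Or.inr (Or.inl h)
      · exact Or.inl h
      · exact Or.inr (Or.inr h.symm)
    · exact hlam p hp
    · exact hP.2.1 hp hq

/-- Once both `w` and `w \ c` are present, no member lies strictly between `c` and `w`. -/
theorem FW.subset_of_sdiff {P : Finset (Finset (Fin m))} (hP : FW P) {c w x : Finset (Fin m)}
    (hc : c ∈ P) (hw : w ∈ P) (hcw : c ⊂ w) (hu : w \ c ∈ P) (hx : x ∈ P) (hcx : c ⊂ x) :
    w ⊆ x := by
  obtain ⟨a, ha⟩ := (hP.1 c hc).1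
  rcases hP.2.1 hx hw with h | h | h
  · rcases hP.2.1 hx hu with h' | h' | h'
    · exact absurd ha (Finset.mem_sdiff.1 (h' (hcx.1 ha))).2
    · intro y hy
      by_cases hyc : y ∈ c
      · exact hcx.1 hyc
      · exact h' (Finset.mem_sdiff.2 ⟨hy, hyc⟩)
    · refine absurd (fun y hy => ?_) hcx.2
      by_contra hyc
      exact Finset.disjoint_left.1 h' hy (Finset.mem_sdiff.2 ⟨h hy, hyc⟩)
  · exact h
  · exact absurd (hcw.1 ha) (Finset.disjoint_left.1 h (hcx.1 ha))

/-- A smallest member strictly containing `c`, by size, is smallest by inclusion. -/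
theorem FW.subset_of_card {P : Finset (Finset (Fin m))} (hP : FW P) {c w x : Finset (Fin m)}
    (hc : c ∈ P) (hw : w ∈ P) (hcw : c ⊂ w) (hx : x ∈ P) (hcx : c ⊂ x)
    (hcard : w.card ≤ x.card) : w ⊆ x := by
  obtain ⟨a, ha⟩ := (hP.1 c hc).1
  rcases hP.2.1 hx hw with h | h | h
  · exact (Finset.eq_of_subset_of_card_le h hcard).ge
  · exact h
  · exact absurd (hcw.1 ha) (Finset.disjoint_left.1 h (hcx.1 ha))

/-- A full word with fewer than `2m - 1` members is not binary: some member `b` with first child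
`c` has more than two children, that is, `b \ c` is not a member. -/
theorem FW.exists_pair {Q : Finset (Finset (Fin m))} (hQ : FW Q) (hcard : Q.card + 2 ≤ 2 * m) :
    ∃ b ∈ Q, ∃ c ∈ Q, c ⊂ b ∧ (∀ x ∈ Q, c ⊂ x → b ⊆ x) ∧ (∃ a ∈ c, ∀ y ∈ b, a ≤ y) ∧
      b \ c ∉ Q := by
  by_contra! hcon
  -- if every block splits off its first child, a block of size `n` contains at least `2n - 1` members
  have key : ∀ n, ∀ b ∈ Q, b.card = n → 2 * b.card ≤ (Q.filter (· ⊆ b)).card + 1 := by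
    intro n
    induction n using Nat.strong_induction_on with
    | _ n ih =>
      intro b hb hbn
      have hbne := (hQ.1 b hb).1
      have hpos : 0 < (Q.filter (· ⊆ b)).card :=
        Finset.card_pos.2 ⟨b, Finset.mem_filter.2 ⟨hb, subset_rfl⟩⟩
      rcases Nat.lt_or_ge 1 b.card with h1 | h1
      swap
      · omega
      let a := b.min' hbne
      have hab : a ∈ b := b.min'_mem hbne
      have hne : (Q.filter fun q => a ∈ q ∧ q ⊂ b).Nonempty := by
        refine ⟨{a}, Finset.mem_filter.2 ⟨hQ.2.2.1 a, Finset.mem_singleton_self a, ?_⟩⟩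
        refine Finset.ssubset_iff_subset_ne.2 ⟨Finset.singleton_subset_iff.2 hab, fun h => ?_⟩
        rw [← h, Finset.card_singleton] at h1
        omega
      obtain ⟨c, hc⟩ := Finset.exists_maximal hne
      obtain ⟨hcQ, hac, hcb⟩ := Finset.mem_filter.1 hc.1
      have hpar : ∀ x ∈ Q, c ⊂ x → b ⊆ x := by
        intro x hx hcx
        rcases hQ.2.1 hx hb with h | h | h
        · rcases eq_or_ne x b with rfl | hxb
          · exact subset_rfl
          · refine absurd (hc.2 (Finset.mem_filter.2 ⟨hx, hcx.1 hac,
              Finset.ssubset_iff_subset_ne.2 ⟨h, hxb⟩⟩) hcx.1) hcx.2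
        · exact h
        · exact absurd hab (Finset.disjoint_left.1 h (hcx.1 hac))
      have hu := hcon b hb c hcQ hcb hpar ⟨a, hac, fun y hy => b.min'_le y hy⟩
      have hsum : (b \ c).card + c.card = b.card := Finset.card_sdiff_add_card_eq_card hcb.1
      have hcpos : 0 < c.card := Finset.card_pos.2 (hQ.1 c hcQ).1
      have hupos : 0 < (b \ c).card := Finset.card_pos.2 (hQ.1 _ hu).1
      have i1 := ih c.card (by omega) c hcQ rfl
      have i2 := ih (b \ c).card (by omega) (b \ c) hu rfl
      have hdis : Disjoint (Q.filter (· ⊆ c)) (Q.filter (· ⊆ b \ c)) := by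
        rw [Finset.disjoint_left]
        intro x hx hx'
        rw [Finset.mem_filter] at hx hx'
        obtain ⟨y, hy⟩ := (hQ.1 x hx.1).1
        exact (Finset.mem_sdiff.1 (hx'.2 hy)).2 (hx.2 hy)
      have hnot : b ∉ (Q.filter (· ⊆ c)) ∪ (Q.filter (· ⊆ b \ c)) := by
        simp only [Finset.mem_union, Finset.mem_filter, not_or, not_and]
        exact ⟨fun _ h => hcb.2 h, fun _ h => (Finset.mem_sdiff.1 (h hab)).2 hac⟩
      have hsub : insert b ((Q.filter (· ⊆ c)) ∪ (Q.filter (· ⊆ b \ c))) ⊆ Q.filter (· ⊆ b) := by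
        intro x hx
        simp only [Finset.mem_insert, Finset.mem_union, Finset.mem_filter] at hx ⊢
        rcases hx with rfl | hx | hx
        · exact ⟨hb, subset_rfl⟩
        · exact ⟨hx.1, hx.2.trans hcb.1⟩
        · exact ⟨hx.1, hx.2.trans Finset.sdiff_subset⟩
      have h3 := Finset.card_le_card hsub
      rw [Finset.card_insert_of_notMem hnot, Finset.card_union_of_disjoint hdis] at h3
      omega
  have h1 := key _ Finset.univ hQ.2.2.2 rfl
  have h2 := Finset.card_le_card (Finset.filter_subset (· ⊆ (Finset.univ : Finset (Fin m))) Q)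
  rw [Finset.card_univ, Fintype.card_fin] at h1
  omega

/-- Let `L` be an upward closed set of full words. If all full words above `Q` outside `L` have
codimension at least `e` among binary full words (which have `2m - 1` members), then the part
of `L` above `Q` has the extension property in dimensions below `e`.

Pick `b`, `c` as in `FW.exists_pair`. The words in which nothing lies strictly between `c` and `b`
deform onto those containing `b \ c`, which the induction handles. The others are attached
according to the size `s` of the smallest member `w` strictly between `c` and `b`: those
containing `w \ c` in order of decreasing cardinality, along links that are cones or
covered by the induction; and then those not containing `w \ c`, along contractible links. -/
theorem ext_words (Q : Finset (Finset (Fin m))) (hQ : FW Q) (e : ℕ)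
    (L : Set (Finset (Finset (Fin m)))) (hL : ∀ P ∈ L, FW P)
    (hup : ∀ P ∈ L, ∀ P', FW P' → P ⊆ P' → P' ∈ L)
    (hcod : ∀ P, FW P → Q ⊆ P → P ∉ L → P.card + e + 1 ≤ 2 * m) :
    Ext Cmp {P | P ∈ L ∧ Q ⊆ P} e := by
  induction Q using WellFoundedGT.induction generalizing e L with
  | _ Q ih =>
    by_cases hQL : Q ∈ L
    · refine ext_cone Cmp.symm Cmp.refl (q := Q) ?_ ?_ e
      · exact ⟨hQL, subset_rfl⟩
      · exact fun x hx => Or.inl hx.2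
    cases e with
    | zero => exact ext_zero
    | succ e =>
      obtain ⟨b, hb, c, hc, hcb, hpar, hini, hu⟩ :=
        hQ.exists_pair (by have := hcod Q hQ subset_rfl hQL; omega)
      -- `h` orders words by decreasing number of members
      let N := Fintype.card (Finset (Fin m))
      let h : Finset (Finset (Fin m)) → ℕ := fun P => N - P.card
      have hN : ∀ P : Finset (Finset (Fin m)), P.card ≤ N := fun P => Finset.card_le_univ P
      have hlt : ∀ P P' : Finset (Finset (Fin m)), h P < h P' ↔ P'.card < P.card := by
        intro P P'
        have := hN P
        have := hN P'
        simp only [h]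
        omega
      have hh : ∀ P P' : Finset (Finset (Fin m)), Cmp P P' → P ≠ P' → h P ≠ h P' := by
        rintro P P' (hPP | hPP) hne
        · exact ((hlt _ _).2 (Finset.card_lt_card (lt_of_le_of_ne hPP hne))).ne'
        · exact ((hlt _ _).2 (Finset.card_lt_card (lt_of_le_of_ne hPP hne.symm))).ne
      -- the words in which every member strictly containing `c` has at least `s` elements; this is
      -- everything for `s = 0`
      let M : ℕ → Set (Finset (Finset (Fin m))) := fun s =>
        {P | P ∈ L ∧ Q ⊆ P ∧ ∀ x ∈ P, c ⊂ x → s ≤ x.card}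
      -- a member strictly between `c` and `b` has `c` as an initial part
      have hwini : ∀ P, FW P → Q ⊆ P → ∀ w ∈ P, c ⊂ w → w.card ≤ b.card →
          ∃ a ∈ c, ∀ y ∈ w, a ≤ y := by
        intro P hP hQP w hw hcw hwb
        obtain ⟨a, ha, ha'⟩ := hini
        exact ⟨a, ha, fun y hy => ha' y (hP.subset_of_card (hQP hc) hw hcw (hQP hb) hcb hwb hy)⟩
      have htop : Ext Cmp (M b.card) (e + 1) := by
        have hK : Ext Cmp {P | P ∈ L ∧ insert (b \ c) Q ⊆ P} (e + 1) := by
          refine ih _ (Finset.ssubset_insert hu) (hQ.insert_sdiff hc hb hcb hpar hini) _ L hL hup ?_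
          exact fun P hP hQP => hcod P hP ((Finset.subset_insert _ _).trans hQP)
        refine ext_closure (h := Finset.card) (fun _ _ h => Finset.card_lt_card h) ?_
          (fun P => insert (b \ c) P) ?_ hK
        · rintro P ⟨hPL, hQP⟩
          rw [Finset.insert_subset_iff] at hQP
          refine ⟨hPL, hQP.2, fun x hx hcx => Finset.card_le_card ?_⟩
          exact (hL P hPL).subset_of_sdiff (hQP.2 hc) (hQP.2 hb) hcb hQP.1 hx hcx
        · rintro P ⟨hPL, hQP, hPb⟩ -
          have hP := hL P hPL
          have hins : FW (insert (b \ c) P) := hP.insert_sdiff (hQP hc) (hQP hb) hcb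
            (fun x hx hcx => hP.subset_of_card (hQP hc) (hQP hb) hcb hx hcx (hPb x hx hcx)) hini
          refine ⟨⟨hup P hPL _ hins (Finset.subset_insert _ _),
            Finset.insert_subset_insert _ hQP⟩, Finset.subset_insert _ _, fun y hy hPy => ?_⟩
          exact Finset.insert_subset (hy.2 (Finset.mem_insert_self _ _)) hPy
      have hstep : ∀ s < b.card, Ext Cmp (M (s + 1)) (e + 1) → Ext Cmp (M s) (e + 1) := by
        intro s hsb hM
        have hMM : M (s + 1) ⊆ M s := fun P hP =>
          ⟨hP.1, hP.2.1, fun x hx hcx => (Nat.le_succ s).trans (hP.2.2 x hx hcx)⟩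
        let A : Set (Finset (Finset (Fin m))) :=
          {P | P ∈ M s ∧ ∃ w ∈ P, c ⊂ w ∧ w.card = s ∧ w \ c ∈ P}
        have hBM : M (s + 1) ∪ A ⊆ M s := union_subset hMM fun P hP => hP.1
        have hB : Ext Cmp (M (s + 1) ∪ A) (e + 1) := by
          refine ext_add Cmp.symm Cmp.refl h subset_union_left (fun x _ y _ => hh x y) hM ?_
          rintro P ⟨hPB, hPM⟩
          obtain ⟨⟨hPL, hQP, hPs⟩, w, hw, hcw, hws, hwu⟩ := hPB.resolve_left hPM
          have hP := hL P hPL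
          have hwQ : w ∉ Q := fun hwQ => by
            have := Finset.card_le_card (hpar w hwQ hcw)
            omega
          have hle : ∀ y ∈ M (s + 1), y ⊆ P → y ⊆ P.erase w := fun y hy hyP =>
            Finset.subset_erase.2 ⟨hyP, fun hwy => by
              have := hy.2.2 w hwy hcw
              omega⟩
          -- If `P` without `w` is in `L`, it is a cone point of the link of `P`. Otherwise no word of the
          -- link is below `P`, and the link consists of all full words strictly above `P`.
          by_cases hEL : P.erase w ∈ L
          · refine ext_cone Cmp.symm Cmp.refl (q := P.erase w) ?_ ?_ e
            · refine ⟨Or.inl ⟨hEL, Finset.subset_erase.2 ⟨hQP, hwQ⟩, fun x hx hcx => ?_⟩,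
                Or.inr (Finset.erase_subset w P)⟩
              rw [Finset.mem_erase] at hx
              refine lt_of_le_of_ne (hPs x hx.2 hcx) fun hsx => hx.1 ?_
              have := hP.subset_of_card (hQP hc) hw hcw hx.2 hcx (by omega)
              exact (Finset.eq_of_subset_of_card_le this (by omega)).symm
            · rintro y ⟨hy, hPy | hPy⟩
              · exact Or.inl ((Finset.erase_subset w P).trans hPy)
              · rcases hy with hy | hy
                · exact Or.inr (hle y hy hPy)
                · exact absurd (Finset.card_le_card hPy) (not_le.2 ((hlt _ _).1 hy.2))
          · have hE : FW (P.erase w) := by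
              refine ⟨fun p hp => hP.1 p (Finset.mem_of_mem_erase hp), fun p hp q hq =>
                hP.2.1 (Finset.mem_of_mem_erase hp) (Finset.mem_of_mem_erase hq), fun x => ?_, ?_⟩
              · refine Finset.mem_erase.2 ⟨fun hx => ?_, hP.2.2.1 x⟩
                have h1 := Finset.card_lt_card hcw
                have h2 := Finset.card_pos.2 (hQ.1 c hc).1
                rw [← hx, Finset.card_singleton] at h1
                omega
              · refine Finset.mem_erase.2 ⟨fun hx => ?_, hP.2.2.2⟩
                have h1 := Finset.card_le_card (Finset.subset_univ b)
                rw [hx] at h1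
                omega
            have hcard := hcod _ hE (Finset.subset_erase.2 ⟨hQP, hwQ⟩) hEL
            rw [Finset.card_erase_of_mem hw] at hcard
            have hQP' : Q ⊂ P := ⟨hQP, fun h => hwQ (h hw)⟩
            have := ih P hQP' hP e {P' | FW P' ∧ P ⊂ P'} (fun P' hP' => hP'.1)
              (fun P₁ h₁ P₂ h₂ h₁₂ => ⟨h₂, h₁.2.trans_subset h₁₂⟩) (fun P' hP' hPP' hnot => by
                have : P = P' := by
                  by_contra hne
                  exact hnot ⟨hP', Finset.ssubset_iff_subset_ne.2 ⟨hPP', hne⟩⟩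
                rw [← this]
                omega)
            convert this using 1
            ext y
            constructor
            · rintro ⟨hy, hPy⟩
              have hyM : y ∈ M s := hy.elim (fun h => hMM h) fun h => hBM h.1
              have hyP : ¬ y ⊆ P := fun hyP => by
                rcases hy with hy | hy
                · exact hEL (hup y hyM.1 _ hE (hle y hy hyP))
                · exact absurd (Finset.card_le_card hyP) (not_le.2 ((hlt _ _).1 hy.2))
              have hPy' : P ⊆ y := hPy.resolve_right hyP
              exact ⟨⟨hL y hyM.1, hPy', hyP⟩, hPy'⟩
            · rintro ⟨⟨hy, hPy⟩, hPy'⟩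
              refine ⟨Or.inr ⟨Or.inr ⟨⟨hup P hPL y hy hPy', hQP.trans hPy', fun x hx hcx => ?_⟩,
                w, hPy' hw, hcw, hws, hPy' hwu⟩, (hlt _ _).2 (Finset.card_lt_card hPy)⟩,
                Or.inl hPy'⟩
              rw [← hws]
              exact Finset.card_le_card (hy.subset_of_sdiff (hPy' (hQP hc)) (hPy' hw) hcw
                (hPy' hwu) hx hcx)
        refine ext_add Cmp.symm Cmp.refl h hBM (fun x _ y _ => hh x y) hB ?_
        rintro P ⟨hPM, hPB⟩
        obtain ⟨hPL, hQP, hPs⟩ := hPM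
        obtain ⟨w, hw, hcw, hws⟩ : ∃ w ∈ P, c ⊂ w ∧ w.card = s := by
          by_contra! hcon
          exact hPB (Or.inl ⟨hPL, hQP, fun x hx hcx =>
            lt_of_le_of_ne (hPs x hx hcx) (hcon x hx hcx).symm⟩)
        have hins : ∀ x ∈ M s, P ⊆ x → insert (w \ c) x ∈ A := by
          rintro x ⟨hxL, hQx, hxs⟩ hPx
          have hx := hL x hxL
          have hFW : FW (insert (w \ c) x) := hx.insert_sdiff (hQx hc) (hPx hw) hcw
            (fun y hy hcy => hx.subset_of_card (hQx hc) (hPx hw) hcw hy hcy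
              (hws ▸ hxs y hy hcy)) (hwini x hx hQx w (hPx hw) hcw (by omega))
          refine ⟨⟨hup x hxL _ hFW (Finset.subset_insert _ _),
            hQx.trans (Finset.subset_insert _ _), fun y hy hcy => ?_⟩, w,
            Finset.mem_insert_of_mem (hPx hw), hcw, hws, Finset.mem_insert_self _ _⟩
          rcases Finset.mem_insert.1 hy with rfl | hy
          · obtain ⟨a, ha⟩ := (hQ.1 c hc).1
            exact absurd ha (Finset.mem_sdiff.1 (hcy.1 ha)).2
          · exact hxs y hy hcy
        -- inserting `w \ c` retracts the link of `P` onto this cone with cone point `insert (w \ c) P`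
        have hK : Ext Cmp {x | ((x ∈ M (s + 1) ∪ A ∨ (x ∈ M s ∧ h x < h P)) ∧ Cmp P x) ∧
            (w \ c ∈ x ∨ x ⊆ P)} e := by
          refine ext_cone Cmp.symm Cmp.refl (q := insert (w \ c) P) ?_ ?_ e
          · exact ⟨⟨Or.inl (Or.inr (hins P ⟨hPL, hQP, hPs⟩ subset_rfl)),
              Or.inl (Finset.subset_insert _ _)⟩, Or.inl (Finset.mem_insert_self _ _)⟩
          · rintro y ⟨⟨-, hPy | hPy⟩, hy⟩
            · rcases hy with hy | hy
              · exact Or.inl (Finset.insert_subset hy hPy)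
              · exact Or.inr (hy.trans (Finset.subset_insert _ _))
            · exact Or.inr (le_trans hPy (Finset.subset_insert _ _))
        refine ext_closure (h := Finset.card) (fun _ _ h => Finset.card_lt_card h)
          (fun x hx => hx.1) (fun x => insert (w \ c) x) ?_ hK
        rintro x ⟨hx, hPx⟩ hxK
        have hxP : ¬ x ⊆ P := fun h => hxK ⟨⟨hx, hPx⟩, Or.inr h⟩
        have hPx' : P ⊆ x := hPx.resolve_right hxP
        have hxM : x ∈ M s := hx.elim (fun h => hBM h) fun h => h.1
        refine ⟨⟨⟨Or.inl (Or.inr (hins x hxM hPx')), Or.inl (hPx'.trans (Finset.subset_insert _ _))⟩,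
          Or.inl (Finset.mem_insert_self _ _)⟩, Finset.subset_insert _ _, fun y hy hxy => ?_⟩
        rcases hy.2 with hy | hy
        · exact Finset.insert_subset hy hxy
        · exact absurd (le_trans hxy hy) hxP
      have hall : ∀ d ≤ b.card, Ext Cmp (M (b.card - d)) (e + 1) := by
        intro d
        induction d with
        | zero => exact fun _ => htop
        | succ d ihd =>
          intro hd
          refine hstep _ (by omega) ?_
          have : b.card - (d + 1) + 1 = b.card - d := by omega
          rw [this]
          exact ihd (by omega)
      have h0 := hall b.card le_rfl
      rw [Nat.sub_self] at h0
      convert h0 using 1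
      ext P
      exact ⟨fun hP => ⟨hP.1, hP.2, fun _ _ _ => Nat.zero_le _⟩, fun hP => ⟨hP.1, hP.2.1⟩⟩

end Words
end KConn

namespace KConn

open Set

/-! ### Valences of full words -/

section Valence

variable {m : ℕ}

/-- The maximal members of `F` strictly contained in `b`. -/
def kids (F : Finset (Finset (Fin m))) (b : Finset (Fin m)) : Finset (Finset (Fin m)) :=
  F.filter fun p => p ⊂ b ∧ ∀ q ∈ F, q ⊂ b → p ⊆ q → p = q

theorem mem_kids {F : Finset (Finset (Fin m))} {b p : Finset (Fin m)} :
    p ∈ kids F b ↔ p ∈ F ∧ p ⊂ b ∧ ∀ q ∈ F, q ⊂ b → p ⊆ q → p = q :=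
  Finset.mem_filter

variable {F : Finset (Finset (Fin m))}

theorem FW.exists_kid (hF : FW F) {b : Finset (Fin m)} (hb : 2 ≤ b.card) {x : Fin m} (hx : x ∈ b) :
    ∃ k ∈ kids F b, x ∈ k := by
  have hne : (F.filter fun q => x ∈ q ∧ q ⊂ b).Nonempty := by
    refine ⟨{x}, Finset.mem_filter.2 ⟨hF.2.2.1 x, Finset.mem_singleton_self x, ?_⟩⟩
    refine Finset.ssubset_iff_subset_ne.2 ⟨Finset.singleton_subset_iff.2 hx, fun h => ?_⟩
    rw [← h, Finset.card_singleton] at hb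
    omega
  obtain ⟨k, hk⟩ := Finset.exists_maximal hne
  obtain ⟨hkF, hxk, hkb⟩ := Finset.mem_filter.1 hk.1
  refine ⟨k, mem_kids.2 ⟨hkF, hkb, fun q hq hqb hkq => ?_⟩, hxk⟩
  exact Finset.Subset.antisymm hkq (hk.2 (Finset.mem_filter.2 ⟨hq, hkq hxk, hqb⟩) hkq)

theorem FW.kid_unique (hF : FW F) {b k k' : Finset (Fin m)} (hk : k ∈ kids F b) (hk' : k' ∈ kids F b)
    {x : Fin m} (hx : x ∈ k) (hx' : x ∈ k') : k = k' := by
  rw [mem_kids] at hk hk'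
  rcases hF.2.1 hk.1 hk'.1 with h | h | h
  · exact hk.2.2 k' hk'.1 hk'.2.1 h
  · exact (hk'.2.2 k hk.1 hk.2.1 h).symm
  · exact absurd hx' (Finset.disjoint_left.1 h hx)

theorem FW.two_le_card_kids (hF : FW F) {b : Finset (Fin m)} (hb : 2 ≤ b.card) : 2 ≤ (kids F b).card := by
  obtain ⟨x, hx⟩ : b.Nonempty := Finset.card_pos.1 (by omega)
  obtain ⟨k, hk, hxk⟩ := hF.exists_kid hb hx
  obtain ⟨y, hy, hyk⟩ := Finset.exists_of_ssubset (mem_kids.1 hk).2.1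
  obtain ⟨k', hk', hyk'⟩ := hF.exists_kid hb hy
  exact Finset.one_lt_card.2 ⟨k, hk, k', hk', fun h => hyk (h ▸ hyk')⟩

/-- Refining a word does not increase the maximal valence: the children of a block `b` of `F'`
inject into the children of the smallest block of `F` containing `b`. -/
theorem FW.card_kids_le (hF : FW F) {F' : Finset (Finset (Fin m))} (hF' : FW F') (hFF : F ⊆ F')
    {b : Finset (Fin m)} (hb : b ∈ F') (hb2 : 2 ≤ b.card) :
    ∃ B ∈ F, 2 ≤ B.card ∧ (kids F' b).card ≤ (kids F B).card := by
  obtain ⟨B, hB⟩ := Finset.exists_minimal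
    (s := F.filter (b ⊆ ·)) ⟨_, Finset.mem_filter.2 ⟨hF.2.2.2, Finset.subset_univ b⟩⟩
  obtain ⟨hBF, hbB⟩ := Finset.mem_filter.1 hB.1
  have hB2 : 2 ≤ B.card := hb2.trans (Finset.card_le_card hbB)
  have key : ∀ k ∈ kids F' b, ∃ K ∈ kids F B, K ⊆ k := by
    intro k hk
    obtain ⟨hk1, hk2, hk3⟩ := mem_kids.1 hk
    obtain ⟨x, hx⟩ := (hF'.1 k hk1).1
    obtain ⟨K, hK, hxK⟩ := hF.exists_kid hB2 (hbB (hk2.1 hx))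
    refine ⟨K, hK, ?_⟩
    obtain ⟨hK1, hK2, -⟩ := mem_kids.1 hK
    have hbK : ¬ b ⊆ K := fun h => hK2.2 (hB.2 (Finset.mem_filter.2 ⟨hK1, h⟩) hK2.1)
    have hKb : K ⊂ b := by
      rcases hF'.2.1 (hFF hK1) hb with h | h | h
      · exact ⟨h, hbK⟩
      · exact absurd h hbK
      · exact absurd (hk2.1 hx) (Finset.disjoint_left.1 h hxK)
    rcases hF'.2.1 (hFF hK1) hk1 with h | h | h
    · exact h
    · exact (hk3 K (hFF hK1) hKb h).ge
    · exact absurd hx (Finset.disjoint_left.1 h hxK)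
  choose! f hf using key
  refine ⟨B, hBF, hB2, Finset.card_le_card_of_injOn f (fun k hk => (hf k hk).1) ?_⟩
  intro k hk k' hk' hkk
  obtain ⟨x, hx⟩ := (hF.1 _ (mem_kids.1 (hf k hk).1).1).1
  exact hF'.kid_unique hk hk' ((hf k hk).2 hx) ((hf k' hk').2 (hkk ▸ hx))

/-- A full word with a block of valence greater than `n` has at most `2m - n` members: every member
but the whole interval is a child of exactly one of the non-singleton blocks, each of which has at
least two children. -/
theorem FW.card_add_le (hF : FW F) {n : ℕ} {b : Finset (Fin m)} (hb : b ∈ F) (hb2 : 2 ≤ b.card)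
    (hn : n < (kids F b).card) : F.card + n ≤ 2 * m := by
  classical
  let N := F.filter fun p => 2 ≤ p.card
  have hbN : b ∈ N := Finset.mem_filter.2 ⟨hb, hb2⟩
  have hsmall : (F.filter fun p => ¬ 2 ≤ p.card).card = m := by
    have : (F.filter fun p => ¬ 2 ≤ p.card) =
        Finset.univ.image fun x : Fin m => ({x} : Finset (Fin m)) := by
      ext p
      simp only [Finset.mem_filter, Finset.mem_image, Finset.mem_univ, true_and]
      constructor
      · rintro ⟨hp, hp2⟩
        have := Finset.card_pos.2 (hF.1 p hp).1
        obtain ⟨x, hx⟩ := Finset.card_eq_one.1 (show p.card = 1 by omega)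
        exact ⟨x, hx.symm⟩
      · rintro ⟨x, rfl⟩
        exact ⟨hF.2.2.1 x, by simp⟩
    rw [this, Finset.card_image_of_injective _ Finset.singleton_injective, Finset.card_univ,
      Fintype.card_fin]
  have hsplit : N.card + m = F.card := by
    have := Finset.card_filter_add_card_filter_not (s := F) fun p => 2 ≤ p.card
    rwa [hsmall] at this
  have hdisj : (N : Set (Finset (Fin m))).PairwiseDisjoint (kids F) := by
    intro p hp q hq hpq
    rw [Function.onFun, Finset.disjoint_left]
    intro k hkp hkq
    have hpF := (Finset.mem_filter.1 hp).1
    have hqF := (Finset.mem_filter.1 hq).1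
    rw [mem_kids] at hkp hkq
    obtain ⟨x, hx⟩ := (hF.1 k hkp.1).1
    rcases hF.2.1 hpF hqF with h | h | h
    · have := hkq.2.2 p hpF (Finset.ssubset_iff_subset_ne.2 ⟨h, hpq⟩) hkp.2.1.1
      exact hkp.2.1.ne this
    · have := hkp.2.2 q hqF (Finset.ssubset_iff_subset_ne.2 ⟨h, hpq.symm⟩) hkq.2.1.1
      exact hkq.2.1.ne this
    · exact Finset.disjoint_left.1 h (hkp.2.1.1 hx) (hkq.2.1.1 hx)
  have hle : ∑ p ∈ N, (kids F p).card ≤ (F.erase Finset.univ).card := by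
    rw [← Finset.card_biUnion hdisj]
    refine Finset.card_le_card fun k hk => ?_
    obtain ⟨p, _, hkp⟩ := Finset.mem_biUnion.1 hk
    rw [mem_kids] at hkp
    refine Finset.mem_erase.2 ⟨fun h => ?_, hkp.1⟩
    rw [h] at hkp
    exact hkp.2.1.2 (Finset.subset_univ p)
  rw [Finset.card_erase_of_mem hF.2.2.2, ← Finset.add_sum_erase N _ hbN] at hle
  have h2 := Finset.card_nsmul_le_sum (N.erase b) (fun p => (kids F p).card) 2 fun p hp =>
    hF.two_le_card_kids (Finset.mem_filter.1 (Finset.mem_of_mem_erase hp)).2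
  rw [Finset.card_erase_of_mem hbN, smul_eq_mul] at h2
  have h3 := Finset.card_pos.2 ⟨b, hbN⟩
  have h4 := Finset.card_pos.2 ⟨b, hb⟩
  omega

end Valence

/-! ### The filtration of the associahedral poset -/

section Filtration

variable {m : ℕ}

open scoped Classical in
/-- The full word of a parenthesized word: add the singletons and the whole interval. -/
noncomputable def hat (P : Finset (Finset (Fin m))) : Finset (Finset (Fin m)) :=
  P ∪ (Finset.univ.image fun x => {x}) ∪ {Finset.univ}

theorem mem_hat {P : Finset (Finset (Fin m))} {p : Finset (Fin m)} :
    p ∈ hat P ↔ p ∈ P ∨ (∃ x, {x} = p) ∨ p = Finset.univ := by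
  simp only [hat, Finset.mem_union, Finset.mem_image, Finset.mem_univ, true_and,
    Finset.mem_singleton, or_assoc]

theorem mem_iff_mem_hat {P : Finset (Finset (Fin m))} (hP : IsParenWord m P)
    {p : Finset (Fin m)} : p ∈ P ↔ p ∈ hat P ∧ 2 ≤ p.card ∧ p.card < m := by
  rw [mem_hat]
  constructor
  · exact fun h => ⟨Or.inl h, (hP.1 p h).2⟩
  · rintro ⟨h | ⟨x, rfl⟩ | rfl, h1, h2⟩
    · exact h
    · simp at h1
    · simp at h2

theorem hat_fw (hm : 2 ≤ m) {P : Finset (Finset (Fin m))} (hP : IsParenWord m P) : FW (hat P) := by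
  refine ⟨fun p hp => ?_, fun p hp q hq => ?_, fun x => mem_hat.2 (Or.inr (Or.inl ⟨x, rfl⟩)),
    mem_hat.2 (Or.inr (Or.inr rfl))⟩
  · rcases mem_hat.1 hp with h | ⟨x, rfl⟩ | rfl
    · have := hP.1 p h
      exact ⟨Finset.card_pos.1 (by omega), this.1⟩
    · refine ⟨Finset.singleton_nonempty x, fun a y b ha hb h1 h2 => ?_⟩
      rw [Finset.mem_singleton] at *
      subst ha
      subst hb
      exact le_antisymm h2 h1
    · exact ⟨⟨⟨0, by omega⟩, Finset.mem_univ _⟩, fun _ _ _ _ _ _ _ => Finset.mem_univ _⟩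
  · have hsing : ∀ (x : Fin m) (q : Finset (Fin m)), {x} ⊆ q ∨ Disjoint {x} q := by
      intro x q
      by_cases h : x ∈ q
      · exact Or.inl (Finset.singleton_subset_iff.2 h)
      · exact Or.inr (Finset.disjoint_singleton_left.2 h)
    rcases mem_hat.1 hp with h | ⟨x, rfl⟩ | rfl
    · rcases mem_hat.1 hq with h' | ⟨x, rfl⟩ | rfl
      · exact hP.2 h h'
      · exact Or.inr ((hsing x p).imp id fun h => h.symm)
      · exact Or.inl (Finset.subset_univ _)
    · exact (hsing x q).imp id Or.inr
    · exact Or.inr (Or.inl (Finset.subset_univ _))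

theorem children_eq_kids {P : Finset (Finset (Fin m))} (hP : IsParenWord m P)
    {b : Finset (Fin m)} (hb : 2 ≤ b.card) : children P b = kids (hat P) b := by
  classical
  have huniv : ¬ Finset.univ ⊂ b := fun h => h.2 (Finset.subset_univ b)
  ext p
  simp only [children, Finset.mem_union, Finset.mem_filter, Finset.mem_image, mem_kids]
  constructor
  · rintro (⟨hp, hpb, hmax⟩ | ⟨x, ⟨hxb, hx⟩, rfl⟩)
    · refine ⟨mem_hat.2 (Or.inl hp), hpb, fun q hq hqb hpq => ?_⟩
      rcases mem_hat.1 hq with h | ⟨y, rfl⟩ | rfl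
      · exact hmax q h hqb hpq
      · have h1 := Finset.card_le_card hpq
        have h2 := (hP.1 p hp).2.1
        rw [Finset.card_singleton] at h1
        omega
      · exact absurd hqb huniv
    · refine ⟨mem_hat.2 (Or.inr (Or.inl ⟨x, rfl⟩)), Finset.ssubset_iff_subset_ne.2
        ⟨Finset.singleton_subset_iff.2 hxb, fun h => ?_⟩, fun q hq hqb hpq => ?_⟩
      · rw [← h, Finset.card_singleton] at hb
        omega
      · rw [Finset.singleton_subset_iff] at hpq
        rcases mem_hat.1 hq with h | ⟨y, rfl⟩ | rfl
        · exact absurd hpq (hx q h hqb)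
        · rw [Finset.mem_singleton.1 hpq]
        · exact absurd hqb huniv
  · rintro ⟨hp, hpb, hmax⟩
    rcases mem_hat.1 hp with h | ⟨x, rfl⟩ | rfl
    · exact Or.inl ⟨h, hpb, fun q hq => hmax q (mem_hat.2 (Or.inl hq))⟩
    · refine Or.inr ⟨x, ⟨hpb.1 (Finset.mem_singleton_self x), fun q hq hqb hxq => ?_⟩, rfl⟩
      have h1 := hmax q (mem_hat.2 (Or.inl hq)) hqb (Finset.singleton_subset_iff.2 hxq)
      have h2 := (hP.1 q hq).2.1
      rw [← h1, Finset.card_singleton] at h2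
      omega
    · exact absurd hpb huniv

/-- The full words all of whose blocks have valence at most `n`. -/
def LowVal (n m : ℕ) : Set (Finset (Finset (Fin m))) :=
  {F | FW F ∧ ∀ b ∈ F, 2 ≤ b.card → (kids F b).card ≤ n}

theorem hat_mem_lowVal_iff (hm : 2 ≤ m) {n : ℕ} {P : Finset (Finset (Fin m))}
    (hP : IsParenWord m P) : hat P ∈ LowVal n m ↔ ∀ b ∈ blocks P, valence P b ≤ n := by
  have hu : (Finset.univ : Finset (Fin m)).card = m := by simp
  constructor
  · intro h b hb
    have hb2 : b ∈ hat P ∧ 2 ≤ b.card := by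
      rcases Finset.mem_insert.1 hb with rfl | hb
      · exact ⟨mem_hat.2 (Or.inr (Or.inr rfl)), by rwa [hu]⟩
      · exact ⟨mem_hat.2 (Or.inl hb), (hP.1 b hb).2.1⟩
    rw [valence, children_eq_kids hP hb2.2]
    exact h.2 b hb2.1 hb2.2
  · refine fun h => ⟨hat_fw hm hP, fun b hb hb2 => ?_⟩
    rw [← children_eq_kids hP hb2]
    refine h b ?_
    rcases mem_hat.1 hb with hb | ⟨x, rfl⟩ | rfl
    · exact Finset.mem_insert_of_mem hb
    · simp at hb2
    · exact Finset.mem_insert_self _ _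

theorem exists_hat_eq {F : Finset (Finset (Fin m))} (hF : FW F) :
    ∃ P, IsParenWord m P ∧ hat P = F := by
  classical
  refine ⟨F.filter fun p => 2 ≤ p.card ∧ p.card < m, ⟨fun p hp => ?_, fun p hp q hq => ?_⟩, ?_⟩
  · rw [Finset.mem_filter] at hp
    exact ⟨(hF.1 p hp.1).2, hp.2⟩
  · exact hF.2.1 (Finset.mem_filter.1 hp).1 (Finset.mem_filter.1 hq).1
  · ext p
    rw [mem_hat, Finset.mem_filter]
    constructor
    · rintro (h | ⟨x, rfl⟩ | rfl)
      · exact h.1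
      · exact hF.2.2.1 x
      · exact hF.2.2.2
    · intro hp
      have h1 := Finset.card_pos.2 (hF.1 p hp).1
      have h2 := Finset.card_le_univ p
      rw [Fintype.card_fin] at h2
      by_cases h3 : p.card = 1
      · obtain ⟨x, hx⟩ := Finset.card_eq_one.1 h3
        exact Or.inr (Or.inl ⟨x, hx.symm⟩)
      by_cases h4 : p.card = m
      · exact Or.inr (Or.inr ((Finset.card_eq_iff_eq_univ p).1 (by simpa using h4)))
      · exact Or.inl ⟨hp, by omega, by omega⟩

noncomputable instance (n m : ℕ) : Fintype (KFilt n m) :=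
  Fintype.ofInjective (fun P : KFilt n m => P.1) Subtype.val_injective

theorem kfilt_ext (n m : ℕ) (hn : 2 ≤ n) :
    Ext (Cmp : KFilt n m → KFilt n m → Prop) univ (n - 1) := by
  classical
  by_cases hmn : m ≤ n
  · -- the empty word has valence at most `n` and is the greatest element
    have hempty : IsParenWord m ∅ ∧ ∀ b ∈ blocks (∅ : Finset (Finset (Fin m))), valence ∅ b ≤ n := by
      refine ⟨⟨by simp, fun p hp => by simp at hp⟩, fun b _ => ?_⟩
      rw [valence, children, Finset.filter_empty, Finset.empty_union]
      refine Finset.card_image_le.trans ((Finset.card_filter_le _ _).trans ?_)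
      have := Finset.card_le_univ b
      rw [Fintype.card_fin] at this
      omega
    refine ext_cone Cmp.symm Cmp.refl (q := (show KFilt n m from ⟨∅, hempty⟩)) (mem_univ _) ?_ _
    exact fun P _ => Or.inr (Finset.empty_subset P.1)
  · have hm : 2 ≤ m := by omega
    have hempty : IsParenWord m ∅ := ⟨by simp, fun p hp => by simp at hp⟩
    let j : KFilt n m → Finset (Finset (Fin m)) := fun P => hat P.1
    have hmono : ∀ P Q : KFilt n m, j P ⊆ j Q ↔ P.1 ⊆ Q.1 := by
      intro P Q
      constructor
      · intro h p hp
        rw [mem_iff_mem_hat P.2.1] at hp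
        exact (mem_iff_mem_hat Q.2.1).2 ⟨h hp.1, hp.2⟩
      · intro h p hp
        exact mem_hat.2 ((mem_hat.1 hp).imp (fun hp => h hp) id)
    have hj : Function.Injective j := fun P Q hPQ => Subtype.ext
      (Finset.Subset.antisymm ((hmono P Q).1 hPQ.le) ((hmono Q P).1 hPQ.ge))
    have hrange : range j = {F | F ∈ LowVal n m ∧ hat ∅ ⊆ F} := by
      ext F
      constructor
      · rintro ⟨P, rfl⟩
        refine ⟨(hat_mem_lowVal_iff hm P.2.1).2 P.2.2, fun p hp => ?_⟩
        exact mem_hat.2 ((mem_hat.1 hp).imp (fun hp => by simp at hp) id)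
      · rintro ⟨hF, -⟩
        obtain ⟨P, hP, rfl⟩ := exists_hat_eq hF.1
        exact ⟨⟨P, hP, (hat_mem_lowVal_iff hm hP).1 hF⟩, rfl⟩
    have hext : Ext Cmp (range j) (n - 1) := by
      rw [hrange]
      refine ext_words _ (hat_fw hm hempty) _ _ (fun P hP => hP.1) ?_ ?_
      · refine fun F hF F' hF' hFF => ⟨hF', fun b hb hb2 => ?_⟩
        obtain ⟨B, hB, hB2, hle⟩ := hF.1.card_kids_le hF' hFF hb hb2
        exact hle.trans (hF.2 B hB hB2)
      · intro F hF _ hFn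
        obtain ⟨b, hb, hb2, hbn⟩ : ∃ b ∈ F, 2 ≤ b.card ∧ n < (kids F b).card := by
          by_contra! hcon
          exact hFn ⟨hF, hcon⟩
        have := hF.card_add_le hb hb2 hbn
        omega
    have hrel : (Cmp : KFilt n m → KFilt n m → Prop) = fun P Q => Cmp (j P) (j Q) := by
      funext P Q
      exact propext (by
        rw [show Cmp (j P) (j Q) ↔ (j P ⊆ j Q ∨ j Q ⊆ j P) from Iff.rfl, hmono, hmono]
        exact Or.comm)
    rw [hrel]
    exact ext_transfer hj hext

end Filtration
end KConn

namespace KConn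

open Set Topology Opposite

/-! ### The realization of the nerve of a finite poset -/

section Realization

/-- The characteristic map of a simplex of a simplicial set. -/
noncomputable def cell (S : SSet.{0}) {n : SimplexCategory} (σ : S.obj (op n)) :
    C(stdSimplex ℝ (Fin (n.len + 1)), SSet.toTop.obj S) :=
  TopCat.toSSetObjEquiv _ (op n) ((sSetTopAdj.unit.app S).app _ σ)

theorem app_map {S T : SSet.{0}} (η : S ⟶ T) {n k : SimplexCategory} (f : k ⟶ n)
    (σ : S.obj (op n)) : η.app (op k) (S.map f.op σ) = T.map f.op (η.app (op n) σ) :=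
  ConcreteCategory.congr_hom (η.naturality f.op) σ

theorem cell_map (S : SSet.{0}) {n k : SimplexCategory} (f : k ⟶ n) (σ : S.obj (op n))
    (s : stdSimplex ℝ (Fin (k.len + 1))) :
    cell S (S.map f.op σ) s = cell S σ (stdSimplex.map f.toOrderHom s) := by
  have h := app_map (T := TopCat.toSSet.obj (SSet.toTop.obj S)) (sSetTopAdj.unit.app S) f σ
  exact congrArg (fun τ => TopCat.toSSetObjEquiv _ (op k) τ s) h

theorem map_cell (S : SSet.{0}) (Y : TopCat.{0}) (a : SSet.toTop.obj S ⟶ Y) {n : SimplexCategory}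
    (σ : S.obj (op n)) (s : stdSimplex ℝ (Fin (n.len + 1))) :
    a (cell S σ s) =
      TopCat.toSSetObjEquiv Y (op n) ((sSetTopAdj.homEquiv S Y a).app (op n) σ) s := by
  rw [Adjunction.homEquiv_unit]
  rfl

theorem hom_ext_cell (S : SSet.{0}) (Y : TopCat.{0}) (a b : SSet.toTop.obj S ⟶ Y)
    (h : ∀ (n : SimplexCategory) (σ : S.obj (op n)) s, a (cell S σ s) = b (cell S σ s)) :
    a = b := by
  apply (sSetTopAdj.homEquiv S Y).injective
  ext n σ
  obtain ⟨n⟩ := n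
  apply (TopCat.toSSetObjEquiv Y (op n)).injective
  ext s
  exact (map_cell S Y a σ s).symm.trans ((h n σ s).trans (map_cell S Y b σ s))

/-- The cells cover the realization: two maps to an indiscrete space which agree on the union of
the cells are equal. -/
theorem exists_cell (S : SSet.{0}) (y : SSet.toTop.obj S) :
    ∃ (n : SimplexCategory) (σ : S.obj (op n)) (s : _), cell S σ s = y := by
  let : TopologicalSpace Prop := ⊤
  let a : SSet.toTop.obj S ⟶ TopCat.of Prop := TopCat.ofHom ⟨fun _ => True, continuous_top⟩
  let b : SSet.toTop.obj S ⟶ TopCat.of Prop := TopCat.ofHom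
    ⟨fun y => ∃ (n : SimplexCategory) (σ : S.obj (op n)) (s : _), cell S σ s = y, continuous_top⟩
  have hab : a = b := hom_ext_cell S _ a b fun n σ s => (eq_true ⟨n, σ, s, rfl⟩).symm
  have : a y = b y := by rw [hab]
  exact this.mp trivial

theorem stdSimplex_map_injective {α β : Type*} [Fintype α] [Fintype β] {f : α → β}
    (hf : f.Injective) : (stdSimplex.map (S := ℝ) f).Injective := by
  classical
  intro s t h
  refine stdSimplex.ext (funext fun i => ?_)
  have := DFunLike.congr_fun h (f i)
  simpa [FunOnFinite.linearMap_apply_apply, hf.eq_iff, Finset.sum_filter] using this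

theorem exists_stdSimplex_map {α β : Type*} [Fintype α] [Fintype β] {f : α → β}
    (hf : f.Injective) (w : stdSimplex ℝ β) (hw : ∀ y, w y ≠ 0 → y ∈ range f) :
    ∃ t, stdSimplex.map f t = w := by
  classical
  have key : ∀ y, ∑ i, (if f i = y then w (f i) else 0) = w y := by
    intro y
    by_cases hy : y ∈ range f
    · obtain ⟨j, rfl⟩ := hy
      simp [hf.eq_iff]
    · rw [Finset.sum_eq_zero]
      · by_contra h
        exact hy (hw y (Ne.symm h))
      · intro i _
        exact if_neg fun h => hy ⟨i, h⟩
  refine ⟨⟨fun i => w (f i), fun i => stdSimplex.zero_le _ _, ?_⟩, ?_⟩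
  · rw [← stdSimplex.sum_eq_one w, ← Finset.sum_congr rfl fun y _ => key y, Finset.sum_comm]
    simp
  · refine stdSimplex.ext (funext fun y => ?_)
    rw [stdSimplex.map_coe, FunOnFinite.linearMap_apply_apply, Finset.sum_filter]
    exact key y

theorem exists_enum {X : Type*} [PartialOrder X] (T : Finset X) (hT : T.Nonempty)
    (hc : ∀ x ∈ T, ∀ y ∈ T, Cmp x y) :
    ∃ (p : ℕ) (ρ : Fin (p + 1) → X), StrictMono ρ ∧ range ρ = T := by
  classical
  let : LinearOrder T :=
    { (inferInstance : PartialOrder T) with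
      le_total := fun a b => hc a a.2 b b.2
      toDecidableLE := Classical.decRel _ }
  obtain ⟨p, hp⟩ : ∃ p, T.card = p + 1 := Nat.exists_eq_succ_of_ne_zero hT.card_pos.ne'
  have e : Fin (p + 1) ≃o T := Fintype.orderIsoFinOfCardEq T (by simpa using hp)
  refine ⟨p, fun i => e i, fun i j h => e.strictMono h, ?_⟩
  ext x
  constructor
  · rintro ⟨i, rfl⟩
    exact (e i).2
  · intro hx
    exact ⟨e.symm ⟨x, hx⟩, by simp⟩

theorem map_ne_zero {X : Type*} [Fintype X] {p : ℕ} (ρ : Fin (p + 1) → X)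
    (s : stdSimplex ℝ (Fin (p + 1))) (x : X) :
    stdSimplex.map ρ s x ≠ 0 ↔ ∃ i, s i ≠ 0 ∧ ρ i = x := by
  classical
  rw [stdSimplex.map_coe, FunOnFinite.linearMap_apply_apply, Ne,
    Finset.sum_eq_zero_iff_of_nonneg fun i _ => stdSimplex.zero_le _ _]
  simp [and_comm]

/-- The support of a point of the standard simplex on `X`. -/
noncomputable def supp {X : Type*} [Fintype X] (w : stdSimplex ℝ X) : Finset X := by
  classical exact Finset.univ.filter fun x => w x ≠ 0

theorem mem_supp {X : Type*} [Fintype X] (w : stdSimplex ℝ X) (x : X) : x ∈ supp w ↔ w x ≠ 0 := by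
  simp [supp]

theorem supp_nonempty {X : Type*} [Fintype X] (w : stdSimplex ℝ X) : (supp w).Nonempty := by
  by_contra! h0
  have := stdSimplex.sum_eq_one w
  rw [Finset.sum_eq_zero] at this
  · exact zero_ne_one this
  · intro x _
    by_contra h
    have := (mem_supp w x).2 h
    simp [h0] at this

variable {X : Type} [PartialOrder X]

/-- The cell of the nerve spanned by a monotone sequence. -/
noncomputable def mcell {p : ℕ} (ρ : Fin (p + 1) → X) (hρ : Monotone ρ) :
    C(stdSimplex ℝ (Fin (p + 1)), SSet.toTop.obj (nerve X)) :=
  cell (nerve X) (n := SimplexCategory.mk p) hρ.functor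

theorem mcell_comp {p q : ℕ} (ρ : Fin (p + 1) → X) (hρ : Monotone ρ) (f : Fin (q + 1) → Fin (p + 1))
    (hf : Monotone f) (s : stdSimplex ℝ (Fin (q + 1))) :
    mcell (ρ ∘ f) (hρ.comp hf) s = mcell ρ hρ (stdSimplex.map f s) :=
  cell_map (nerve X) (n := SimplexCategory.mk p) (k := SimplexCategory.mk q)
    (SimplexCategory.Hom.mk ⟨f, hf⟩) hρ.functor s

theorem exists_mcell (y : SSet.toTop.obj (nerve X)) :
    ∃ (p : ℕ) (ρ : Fin (p + 1) → X) (hρ : Monotone ρ) (s : _), mcell ρ hρ s = y := by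
  obtain ⟨n, σ, s, rfl⟩ := exists_cell _ y
  exact ⟨n.len, σ.obj, σ.monotone, s, rfl⟩

variable [Fintype X]

/-- The barycentric coordinates as a map from the nerve to a singular simplicial set: a simplex
`σ` is sent to the affine map with vertices `σ 0, …, σ n`. -/
noncomputable def coordHom : nerve X ⟶ TopCat.toSSet.obj (TopCat.of (stdSimplex ℝ X)) where
  app n := ↾fun σ : ComposableArrows X n.unop.len =>
    (TopCat.toSSetObjEquiv (TopCat.of (stdSimplex ℝ X)) n).symm
      ⟨stdSimplex.map σ.obj, stdSimplex.continuous_map σ.obj⟩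
  naturality n k f := by
    ext σ
    apply (TopCat.toSSetObjEquiv (TopCat.of (stdSimplex ℝ X)) k).injective
    refine ContinuousMap.ext fun s => ?_
    exact (stdSimplex.map_comp_apply (SimplexCategory.Hom.toOrderHom f.unop)
      (Functor.obj σ) s).symm

/-- The barycentric coordinate map on the realization of the nerve. -/
theorem exists_coord : ∃ a : C(SSet.toTop.obj (nerve X), stdSimplex ℝ X),
    ∀ (p : ℕ) (ρ : Fin (p + 1) → X) (hρ : Monotone ρ) (s : _),
      a (mcell ρ hρ s) = stdSimplex.map ρ s := by
  let Y : TopCat := TopCat.of (stdSimplex ℝ X)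
  refine ⟨((sSetTopAdj.homEquiv _ Y).symm coordHom).hom, fun p ρ hρ s => ?_⟩
  refine (map_cell _ Y ((sSetTopAdj.homEquiv _ Y).symm coordHom) (n := SimplexCategory.mk p)
    hρ.functor s).trans ?_
  rw [Equiv.apply_symm_apply]
  rfl

/-- Every point of a cell lies in the nondegenerate cell spanned by the support of its barycentric
coordinates. -/
theorem mcell_normal {q : ℕ} (σ : Fin (q + 1) → X) (hσ : Monotone σ)
    (s : stdSimplex ℝ (Fin (q + 1))) {p : ℕ} (ρ : Fin (p + 1) → X) (hρ : StrictMono ρ)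
    (h : ∀ x, x ∈ range ρ ↔ stdSimplex.map σ s x ≠ 0) :
    ∃ t, stdSimplex.map ρ t = stdSimplex.map σ s ∧ mcell ρ hρ.monotone t = mcell σ hσ s := by
  classical
  obtain ⟨i₀, hi₀⟩ : ∃ i, s i ≠ 0 := by
    by_contra! h0
    have := stdSimplex.sum_eq_one s
    simp [h0] at this
  obtain ⟨k, f, hf, hfr⟩ := exists_enum (Finset.univ.filter fun i => s i ≠ 0)
    ⟨i₀, by simpa using hi₀⟩ (fun x _ y _ => le_total x y)
  have hfr' : ∀ i, i ∈ range f ↔ s i ≠ 0 := by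
    intro i
    rw [hfr]
    simp
  obtain ⟨s', rfl⟩ := exists_stdSimplex_map hf.injective s fun i hi => (hfr' i).2 hi
  have hex : ∀ i, ∃ j, ρ j = σ (f i) := fun i =>
    (h _).2 ((map_ne_zero _ _ _).2 ⟨f i, (hfr' _).1 ⟨i, rfl⟩, rfl⟩)
  choose g hg using hex
  have hgm : Monotone g := fun i j hij => by
    have : ρ (g i) ≤ ρ (g j) := by
      rw [hg, hg]
      exact hσ (hf.monotone hij)
    by_contra hlt
    exact absurd (hρ (not_le.1 hlt)) this.not_gt
  have hcomp : ρ ∘ g = σ ∘ f := funext hg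
  refine ⟨stdSimplex.map g s', ?_, ?_⟩
  · rw [stdSimplex.map_comp_apply, stdSimplex.map_comp_apply]
    exact congrArg (fun u => stdSimplex.map u s') hcomp
  · rw [← mcell_comp _ _ _ hgm, ← mcell_comp _ _ _ hf.monotone]
    congr 2

theorem supp_map_chain {p : ℕ} (ρ : Fin (p + 1) → X) (hρ : Monotone ρ)
    (s : stdSimplex ℝ (Fin (p + 1))) :
    ∀ x ∈ supp (stdSimplex.map ρ s), ∀ y ∈ supp (stdSimplex.map ρ s), Cmp x y := by
  intro x hx y hy
  obtain ⟨i, -, rfl⟩ := (map_ne_zero _ _ _).1 ((mem_supp _ _).1 hx)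
  obtain ⟨j, -, rfl⟩ := (map_ne_zero _ _ _).1 ((mem_supp _ _).1 hy)
  exact (le_total i j).imp (fun h => hρ h) fun h => hρ h

/-- The realization of the nerve of a finite poset is its order complex. -/
theorem nonempty_homeomorph :
    Nonempty (SSet.toTop.obj (nerve X) ≃ₜ Cx (Cmp : X → X → Prop) univ) := by
  classical
  obtain ⟨a, ha⟩ := exists_coord (X := X)
  have hinj : Function.Injective a := by
    intro y y' h
    obtain ⟨p, σ, hσ, s, rfl⟩ := exists_mcell y
    obtain ⟨p', σ', hσ', s', rfl⟩ := exists_mcell y'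
    rw [ha, ha] at h
    obtain ⟨k, ρ, hρ, hr⟩ := exists_enum _ (supp_nonempty _) (supp_map_chain σ hσ s)
    have hr' : ∀ x, x ∈ range ρ ↔ stdSimplex.map σ s x ≠ 0 := fun x => by
      rw [hr, Finset.mem_coe, mem_supp]
    obtain ⟨t, ht, ht'⟩ := mcell_normal σ hσ s ρ hρ hr'
    obtain ⟨u, hu, hu'⟩ := mcell_normal σ' hσ' s' ρ hρ (by rwa [← h])
    rw [← ht', ← hu', stdSimplex_map_injective hρ.injective (ht.trans (h.trans hu.symm))]
  have hcpt : CompactSpace (SSet.toTop.obj (nerve X)) := by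
    let I := {T : Finset X // T.Nonempty ∧ ∀ x ∈ T, ∀ y ∈ T, Cmp x y}
    have hI : ∀ T : I, ∃ (p : ℕ) (ρ : Fin (p + 1) → X), StrictMono ρ ∧ range ρ = (T.1 : Set X) :=
      fun T => exists_enum T.1 T.2.1 T.2.2
    choose p ρ hρ hr using hI
    refine ⟨?_⟩
    have : (univ : Set (SSet.toTop.obj (nerve X))) =
        ⋃ T : I, range (mcell (ρ T) (hρ T).monotone) := by
      refine (eq_univ_of_forall fun y => ?_).symm
      obtain ⟨q, σ, hσ, s, rfl⟩ := exists_mcell y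
      let T : I := ⟨supp (stdSimplex.map σ s), supp_nonempty _, supp_map_chain σ hσ s⟩
      obtain ⟨t, -, ht⟩ := mcell_normal σ hσ s (ρ T) (hρ T) fun x => by
        rw [hr, Finset.mem_coe, mem_supp]
      exact mem_iUnion.2 ⟨T, t, ht⟩
    rw [this]
    exact isCompact_iUnion fun T => isCompact_range (mcell _ _).continuous
  let b : SSet.toTop.obj (nerve X) → X → ℝ := fun y => (a y).1
  have hb : IsClosedEmbedding b := Continuous.isClosedEmbedding
    (continuous_subtype_val.comp a.continuous) (Subtype.val_injective.comp hinj)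
  have hrange : range b = Cx (Cmp : X → X → Prop) univ := by
    ext w
    constructor
    · rintro ⟨y, rfl⟩
      obtain ⟨p, σ, hσ, s, rfl⟩ := exists_mcell y
      refine ⟨(a _).2.1, (a _).2.2, fun x _ => mem_univ x, fun x y hx hy => ?_⟩
      refine supp_map_chain σ hσ s x ((mem_supp _ _).2 ?_) y ((mem_supp _ _).2 ?_)
      · rw [← ha p σ hσ s]; exact hx
      · rw [← ha p σ hσ s]; exact hy
    · rintro ⟨h1, h2, -, h4⟩
      let w' : stdSimplex ℝ X := ⟨w, h1, h2⟩
      obtain ⟨k, ρ, hρ, hr⟩ := exists_enum _ (supp_nonempty w')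
        fun x hx y hy => h4 x y ((mem_supp w' x).1 hx) ((mem_supp w' y).1 hy)
      obtain ⟨t, ht⟩ := exists_stdSimplex_map hρ.injective w' fun x hx => by
        rw [hr, Finset.mem_coe, mem_supp]; exact hx
      refine ⟨mcell ρ hρ.monotone t, ?_⟩
      change (a _).1 = _
      rw [ha, ht]
  exact ⟨hb.isEmbedding.toHomeomorph.trans (Homeomorph.setCongr hrange)⟩

end Realization
end KConn

namespace KConn

open Set Topology

/-! ### Homotopy groups from the extension property -/

section HomotopyGroups

variable {ι : Type*} [Fintype ι] {r : ι → ι → Prop} {B : Set ι} {e : ℕ}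
  {Y : Type*} [TopologicalSpace Y]

theorem nonempty_of_ext (φ : Y ≃ₜ Cx r B) (hE : Ext r B e) (he : 1 ≤ e) : Nonempty Y := by
  obtain ⟨G, -, hG, -⟩ := hE 0 0 univ ∅ (fun _ _ => 0) (by omega) isCompact_univ
    (fun x _ a ha => absurd ha (Nat.not_lt_zero a)) isClosed_empty (empty_subset _)
    continuous_const (mapsTo_empty _ _)
  exact ⟨φ.symm ⟨G 0, hG (mem_univ _)⟩⟩

/-- A map from the `k`-cube constant on the boundary is null-homotopic: extend the map on the
boundary of the `(k + 1)`-cube given by the loop on the face `z₀ = 0` and constant on the other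
faces. -/
theorem genLoop_null (φ : Y ≃ₜ Cx r B) (hE : Ext r B e) {k : ℕ} (hk : k + 2 ≤ e) (x : Y)
    (f : GenLoop (Fin k) Y x) : GenLoop.Homotopic f GenLoop.const := by
  classical
  let M : Set (Fin (k + 1) → ℝ) := Icc 0 1
  let A₀ : Set (Fin (k + 1) → ℝ) := M ∩ {z | z 0 = 0}
  let A₁ : Set (Fin (k + 1) → ℝ) :=
    M ∩ ({z | z 0 = 1} ∪ ⋃ i : Fin k, ({z | z i.succ = 0} ∪ {z | z i.succ = 1}))
  have hco : ∀ (i : Fin (k + 1)) (c : ℝ), IsClosed {z : Fin (k + 1) → ℝ | z i = c} := fun i c =>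
    isClosed_eq (continuous_apply i) continuous_const
  have hM : IsCompact M := isCompact_Icc
  have hA₀ : IsClosed A₀ := hM.isClosed.inter (hco 0 0)
  have hA₁ : IsClosed A₁ := hM.isClosed.inter
    ((hco 0 1).union (isClosed_iUnion_of_finite fun i => (hco _ _).union (hco _ _)))
  let F : (Fin (k + 1) → ℝ) → Y := fun z => f fun i => projIcc 0 1 zero_le_one (z i.succ)
  have hF : Continuous F := f.1.continuous.comp
    (continuous_pi fun i => continuous_projIcc.comp (continuous_apply _))
  have hproj : ∀ y : Fin k → unitInterval, (fun i => projIcc 0 1 zero_le_one (y i : ℝ)) = y :=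
    fun y => funext fun i => projIcc_val _ _
  obtain ⟨g, hg, hg₀, hg₁⟩ := glue hA₀ hA₁ (f := fun z => (φ (F z)).1) (f' := fun _ => (φ x).1)
    (continuous_subtype_val.comp (φ.continuous.comp hF)).continuousOn continuousOn_const (by
      rintro z ⟨⟨-, hz0⟩, -, hz⟩
      have : F z = x := by
        refine f.2 _ ?_
        rcases hz with hz | hz
        · exact absurd (hz0.symm.trans hz) zero_ne_one
        · obtain ⟨i, hi⟩ := mem_iUnion.1 hz
          refine ⟨i, hi.imp (fun h => ?_) fun h => ?_⟩
          · rw [mem_ofPred_eq] at h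
            change projIcc 0 1 zero_le_one (z i.succ) = _
            rw [h]
            exact projIcc_left _
          · rw [mem_ofPred_eq] at h
            change projIcc 0 1 zero_le_one (z i.succ) = _
            rw [h]
            exact projIcc_right _
      simp only [this])
  obtain ⟨G, hG, hGM, hGA⟩ := hE (k + 1) 0 M (A₀ ∪ A₁) g (by omega) hM
    (fun x _ a ha => absurd ha (Nat.not_lt_zero a)) (hA₀.union hA₁)
    (union_subset inter_subset_left inter_subset_left) hg (by
      rintro z (hz | hz)
      · rw [hg₀ hz]; exact (φ _).2
      · rw [hg₁ hz]; exact (φ _).2)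
  let Z : unitInterval × (Fin k → unitInterval) → Fin (k + 1) → ℝ := fun q =>
    Fin.cons (q.1 : ℝ) fun i => (q.2 i : ℝ)
  have hZ : Continuous Z := by
    refine continuous_pi fun i => ?_
    refine Fin.cases ?_ (fun i => ?_) i
    · exact continuous_subtype_val.comp continuous_fst
    · exact continuous_subtype_val.comp ((continuous_apply i).comp continuous_snd)
  have hZM : ∀ q, Z q ∈ M := by
    intro q
    refine ⟨fun i => ?_, fun i => ?_⟩ <;> refine Fin.cases ?_ (fun i => ?_) i
    · exact q.1.2.1
    · exact (q.2 i).2.1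
    · exact q.1.2.2
    · exact (q.2 i).2.2
  let H : unitInterval × (Fin k → unitInterval) → Y := fun q => φ.symm ⟨G (Z q), hGM (hZM q)⟩
  have hH : Continuous H := φ.symm.continuous.comp ((hG.comp hZ).subtype_mk _)
  have hH₁ : ∀ q, Z q ∈ A₁ → H q = x := by
    intro q hq
    have : (⟨G (Z q), hGM (hZM q)⟩ : Cx r B) = φ x :=
      Subtype.ext ((hGA (Or.inr hq)).trans (hg₁ hq))
    simp only [H, this, φ.symm_apply_apply]
  refine ⟨⟨⟨⟨H, hH⟩, fun y => ?_, fun y => ?_⟩, fun t y hy => ?_⟩⟩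
  · have h0 : Z (0, y) ∈ A₀ := ⟨hZM _, rfl⟩
    have h1 : F (Z (0, y)) = f y := congrArg f (hproj y)
    have : (⟨G (Z (0, y)), hGM (hZM _)⟩ : Cx r B) = φ (f y) :=
      Subtype.ext ((hGA (Or.inl h0)).trans ((hg₀ h0).trans (by simp only [h1])))
    change φ.symm _ = f y
    rw [this, φ.symm_apply_apply]
  · exact hH₁ (1, y) ⟨hZM _, Or.inl rfl⟩
  · obtain ⟨i, hi⟩ := hy
    have h1 : H (t, y) = x := by
      refine hH₁ (t, y) ⟨hZM _, Or.inr (mem_iUnion.2 ⟨i, ?_⟩)⟩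
      refine hi.imp (fun h => ?_) fun h => ?_
      · change ((y i : unitInterval) : ℝ) = 0
        rw [h]
        rfl
      · change ((y i : unitInterval) : ℝ) = 1
        rw [h]
        rfl
    exact h1.trans (f.2 y ⟨i, hi⟩).symm

theorem homotopyGroup_subsingleton (φ : Y ≃ₜ Cx r B) (hE : Ext r B e) {k : ℕ} (hk : k + 2 ≤ e)
    (x : Y) : Subsingleton (HomotopyGroup (Fin k) Y x) := by
  refine ⟨fun a b => ?_⟩
  induction a using Quotient.inductionOn
  induction b using Quotient.inductionOn
  exact Quotient.sound ((genLoop_null φ hE hk x _).trans (genLoop_null φ hE hk x _).symm)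

theorem simplyConnectedSpace_of_homotopyGroup [Nonempty Y]
    (h0 : ∀ x : Y, Subsingleton (HomotopyGroup (Fin 0) Y x))
    (h1 : ∀ x : Y, Subsingleton (HomotopyGroup (Fin 1) Y x)) : SimplyConnectedSpace Y := by
  rw [simply_connected_iff_loops_nullhomotopic]
  refine ⟨?_, fun x p => ?_⟩
  · rw [pathConnectedSpace_iff_zerothHomotopy]
    obtain ⟨x⟩ := ‹Nonempty Y›
    have := h0 x
    exact ⟨⟨Quotient.mk _ x⟩, (HomotopyGroup.pi0EquivZerothHomotopy (X := Y) (x := x)).symm.subsingleton⟩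
  · have := h1 x
    have h2 : Subsingleton (FundamentalGroup Y x) :=
      (HomotopyGroup.pi1EquivFundamentalGroup (X := Y) (x := x)).symm.subsingleton
    have h3 : Subsingleton (Path.Homotopic.Quotient x x) := h2
    exact Path.Homotopic.Quotient.exact (h3.elim _ _)

end HomotopyGroups
end KConn

/-- Proposition 1.7 of the paper.  For `n ≥ 2` the geometric
realization of the nerve of `𝔎⁽ⁿ⁾_m` is `(n-3)`-connected: it is nonempty and all of
its homotopy groups `π_k` with `k ≤ n - 3` vanish; in particular for `n ≥ 4` it is
simply connected. -/
theorem filtration_nerve_connected (n m : ℕ) (hn : 2 ≤ n) :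
    Nonempty (SSet.toTop.obj (nerve (KFilt n m))) ∧
    (∀ (x : SSet.toTop.obj (nerve (KFilt n m))) (k : ℕ), (k : ℤ) ≤ (n : ℤ) - 3 →
      Subsingleton (HomotopyGroup (Fin k) (SSet.toTop.obj (nerve (KFilt n m))) x)) ∧
    (4 ≤ n → SimplyConnectedSpace (SSet.toTop.obj (nerve (KFilt n m)))) := by
  have hE := KConn.kfilt_ext n m hn
  obtain ⟨φ⟩ := KConn.nonempty_homeomorph (X := KFilt n m)
  have hne : Nonempty (SSet.toTop.obj (nerve (KFilt n m))) :=
    KConn.nonempty_of_ext φ hE (by omega)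
  refine ⟨hne, fun x k hk => KConn.homotopyGroup_subsingleton φ hE (by omega) x, fun h4 => ?_⟩
  exact KConn.simplyConnectedSpace_of_homotopyGroup
    (fun x => KConn.homotopyGroup_subsingleton φ hE (by omega) x)
    (fun x => KConn.homotopyGroup_subsingleton φ hE (by omega) x)
end

section
/- An undirected A_n-monoidal category is a monoidal category if n ≥ 4. Precisely: let C be an A_n-monoidal category with 4 ≤ n (n finite or n = ∞) such that every associator natural transformation α^{i,j,k} is a natural isomorphism. Then C admits a monoidal category structure (in the standard sense of Mac Lane, e.g. Mathlib's MonoidalCategory) whose tensor product bifunctor is μ₂, whose unit object is μ₀ = 0, and whose left and right unitors are identities. -/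
/-!
Write `X ⊗ Y = μ₂(X, Y)`.  The two associators
`leftAssoc : (X ⊗ Y) ⊗ Z ⟶ μ₃(X, Y, Z)` (that is, `α^{0,2,1}`) and
`rightAssoc : X ⊗ (Y ⊗ Z) ⟶ μ₃(X, Y, Z)` (that is, `α^{1,2,0}`) are invertible, and the
Mac Lane associator is `leftAssoc ≫ rightAssoc⁻¹`.

*Pentagon.*  All five bracketings of `W, X, Y, Z` map to `μ₄(W, X, Y, Z)` in a canonical way:
each vertex is the source of a composite of two associators in (at least) two ways, and these
agree by (vi) for the four bracketings with a nested product, and by (v) for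
`(W ⊗ X) ⊗ (Y ⊗ Z)`.  Hence every edge of the pentagon is compatible with the maps to `μ₄`,
and the pentagon commutes because these maps are isomorphisms (`pentagon_aux`).

*Triangle.*  By (iv) and (i), `leftAssoc X 0 Y` and `rightAssoc X 0 Y` are identities, as are the
unitors, so both sides of the triangle are identities.

All identifications of objects coming from the strict unit or from regrouping tuples are
transports along equalities.  They are handled by heterogeneous equality: the conditions
(v), (vi) and naturality are restated (`square_v`, `square_vi`, `square_natural`) for arbitrary
morphisms that are heterogeneously equal to the ones occurring in the structure.
-/

open CategoryTheory

universe v u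

section Tuples

variable {C : Type u} [Category.{v} C]

/-- The empty tuple of objects. -/
def emp : Fin 0 → C := fun i => i.elim0

/-- A one-element tuple of objects. -/
def sgl (X : C) : Fin 1 → C := fun _ => X

/-- A one-element family of morphisms. -/
def hsgl {X Y : C} (f : X ⟶ Y) : ∀ i : Fin 1, sgl X i ⟶ sgl Y i := fun _ => f

/-- The identity family of morphisms. -/
def hid {k : ℕ} (A : Fin k → C) : ∀ i, A i ⟶ A i := fun i => 𝟙 (A i)

/-- Concatenation of tuples of objects. -/
def app {a b : ℕ} (A : Fin a → C) (B : Fin b → C) : Fin (a + b) → C :=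
  fun i => if h : (i : ℕ) < a then A ⟨i, h⟩ else B ⟨(i : ℕ) - a, by have := i.isLt; omega⟩

/-- Concatenation of families of morphisms. -/
def happ {a b : ℕ} {A A' : Fin a → C} {B B' : Fin b → C}
    (f : ∀ i, A i ⟶ A' i) (g : ∀ j, B j ⟶ B' j) :
    ∀ l, app A B l ⟶ app A' B' l := fun l =>
  if h : (l : ℕ) < a then
    eqToHom (by simp [app, h]) ≫ f ⟨l, h⟩ ≫ eqToHom (by simp [app, h])
  else
    eqToHom (by simp [app, h]) ≫ g ⟨(l : ℕ) - a, by have := l.isLt; omega⟩ ≫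
      eqToHom (by simp [app, h])

/-- Concatenation of three tuples of objects. -/
def tri {a b c : ℕ} (A : Fin a → C) (B : Fin b → C) (D : Fin c → C) :
    Fin (a + b + c) → C := app (app A B) D

/-- Concatenation of three families of morphisms. -/
def htri {a b c : ℕ} {A A' : Fin a → C} {B B' : Fin b → C} {D D' : Fin c → C}
    (f : ∀ i, A i ⟶ A' i) (g : ∀ i, B i ⟶ B' i) (h : ∀ i, D i ⟶ D' i) :
    ∀ l, tri A B D l ⟶ tri A' B' D' l := happ (happ f g) h

/-- A two-element tuple of objects. -/
def pair (X Y : C) : Fin 2 → C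
  | ⟨0, _⟩ => X
  | ⟨_ + 1, _⟩ => Y

/-- A two-element family of morphisms. -/
def pairHom {X X' Y Y' : C} (f : X ⟶ X') (g : Y ⟶ Y') :
    ∀ i, pair X Y i ⟶ pair X' Y' i
  | ⟨0, _⟩ => f
  | ⟨_ + 1, _⟩ => g

end Tuples

/-- `k` is an admissible arity for an `A_n` structure: `k < n + 1`. -/
def Ok (n : ℕ∞) (k : ℕ) : Prop := (k : ℕ∞) < n + 1

/-- An `A_n`-monoidal category structure (Definition 2.1 of the paper) on a category
`C`, for `2 ≤ n ≤ ∞`: multiplication functors `μ_k : C^k → C` for `0 ≤ k < n + 1`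
with `μ₁` the identity and `μ₀` a strict unit `0`, together with associators
`α^{a,b,c} : μ_{a+1+c} ∘ (Id^a × μ_b × Id^c) ⟶ μ_{a+b+c}` satisfying the unit and
coherence conditions (i)–(vi).  (All identifications of objects forced by the strict
unit and by regrouping of tuples are recorded by universally quantified equality
proofs `e` and the corresponding `eqToHom`s.) -/
structure AMonCat (C : Type u) [Category.{v} C] (n : ℕ∞) : Type (max u v) where
  /-- the multiplication `μ_k` on objects -/
  μObj : ∀ (k : ℕ), Ok n k → (Fin k → C) → C
  /-- the multiplication `μ_k` on morphisms -/
  μMap : ∀ (k : ℕ) (hk : Ok n k) {A B : Fin k → C},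
    (∀ i, A i ⟶ B i) → (μObj k hk A ⟶ μObj k hk B)
  /-- `μ_k` is functorial: identities -/
  μMap_id : ∀ (k : ℕ) (hk : Ok n k) (A : Fin k → C),
    μMap k hk (hid A) = 𝟙 (μObj k hk A)
  /-- `μ_k` is functorial: composition -/
  μMap_comp : ∀ (k : ℕ) (hk : Ok n k) {A B D : Fin k → C}
    (f : ∀ i, A i ⟶ B i) (g : ∀ i, B i ⟶ D i),
    μMap k hk (fun i => f i ≫ g i) = μMap k hk f ≫ μMap k hk g
  /-- (1) `μ₁` is the identity functor, on objects -/
  one_obj : ∀ (h1 : Ok n 1) (A : Fin 1 → C), μObj 1 h1 A = A 0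
  /-- (1) `μ₁` is the identity functor, on morphisms -/
  one_map : ∀ (h1 : Ok n 1) {A B : Fin 1 → C} (f : ∀ i, A i ⟶ B i),
    μMap 1 h1 f = eqToHom (one_obj h1 A) ≫ f 0 ≫ eqToHom (one_obj h1 B).symm
  /-- (2) `μ₀ = 0` is a strict unit: `μ_k ∘ (Id^i × 0 × Id^j) = μ_{k-1}`, on objects -/
  unit_obj : ∀ (i j : ℕ) (hij1 : Ok n (i + 1 + j)) (hij : Ok n (i + j)) (h0 : Ok n 0)
    (A : Fin i → C) (B : Fin j → C),
    μObj (i + 1 + j) hij1 (tri A (sgl (μObj 0 h0 emp)) B) = μObj (i + j) hij (app A B)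
  /-- (2) the strict unit condition on morphisms -/
  unit_map : ∀ (i j : ℕ) (hij1 : Ok n (i + 1 + j)) (hij : Ok n (i + j)) (h0 : Ok n 0)
    {A A' : Fin i → C} {B B' : Fin j → C}
    (f : ∀ l, A l ⟶ A' l) (g : ∀ l, B l ⟶ B' l),
    μMap (i + 1 + j) hij1 (htri f (hsgl (𝟙 (μObj 0 h0 emp))) g) =
      eqToHom (unit_obj i j hij1 hij h0 A B) ≫ μMap (i + j) hij (happ f g) ≫
        eqToHom (unit_obj i j hij1 hij h0 A' B').symm
  /-- the associators `α^{a,b,c}` -/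
  assoc : ∀ (a b c : ℕ) (h : Ok n (a + b + c)) (h1 : Ok n (a + 1 + c)) (hb : Ok n b)
    (A : Fin a → C) (B : Fin b → C) (D : Fin c → C),
    μObj (a + 1 + c) h1 (tri A (sgl (μObj b hb B)) D) ⟶ μObj (a + b + c) h (tri A B D)
  /-- naturality of the associators -/
  assoc_natural : ∀ (a b c : ℕ) (h : Ok n (a + b + c)) (h1 : Ok n (a + 1 + c))
    (hb : Ok n b) {A A' : Fin a → C} {B B' : Fin b → C} {D D' : Fin c → C}
    (f : ∀ i, A i ⟶ A' i) (g : ∀ i, B i ⟶ B' i) (k : ∀ i, D i ⟶ D' i),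
    μMap (a + 1 + c) h1 (htri f (hsgl (μMap b hb g)) k) ≫ assoc a b c h h1 hb A' B' D' =
      assoc a b c h h1 hb A B D ≫ μMap (a + b + c) h (htri f g k)
  /-- (i) `α^{a,0,c}` is the identity -/
  assoc_zero : ∀ (a c : ℕ) (h : Ok n (a + 0 + c)) (h1 : Ok n (a + 1 + c)) (h0 : Ok n 0)
    (A : Fin a → C) (D : Fin c → C)
    (e : μObj (a + 1 + c) h1 (tri A (sgl (μObj 0 h0 emp)) D) =
      μObj (a + 0 + c) h (tri A emp D)),
    assoc a 0 c h h1 h0 A emp D = eqToHom e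
  /-- (i) `α^{a,1,c}` is the identity -/
  assoc_one : ∀ (a c : ℕ) (h : Ok n (a + 1 + c)) (h1 : Ok n (a + 1 + c)) (hone : Ok n 1)
    (A : Fin a → C) (B : Fin 1 → C) (D : Fin c → C)
    (e : μObj (a + 1 + c) h1 (tri A (sgl (μObj 1 hone B)) D) =
      μObj (a + 1 + c) h (tri A B D)),
    assoc a 1 c h h1 hone A B D = eqToHom e
  /-- (i) `α^{0,b,0}` is the identity -/
  assoc_mid : ∀ (b : ℕ) (h : Ok n (0 + b + 0)) (h1 : Ok n (0 + 1 + 0)) (hb : Ok n b)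
    (B : Fin b → C)
    (e : μObj (0 + 1 + 0) h1 (tri emp (sgl (μObj b hb B)) emp) =
      μObj (0 + b + 0) h (tri emp B emp)),
    assoc 0 b 0 h h1 hb emp B emp = eqToHom e
  /-- (ii) compatibility of the associators with a unit inserted in the left outer slot -/
  cond_ii : ∀ (a b c d : ℕ) (h : Ok n (a + 1 + b + c + d)) (h1 : Ok n (a + 1 + b + 1 + d))
    (h' : Ok n (a + b + c + d)) (h1' : Ok n (a + b + 1 + d)) (hc : Ok n c) (h0 : Ok n 0)
    (A : Fin a → C) (B : Fin b → C) (Cc : Fin c → C) (D : Fin d → C)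
    (e₁ : μObj (a + 1 + b + 1 + d) h1
        (tri (tri A (sgl (μObj 0 h0 emp)) B) (sgl (μObj c hc Cc)) D) =
      μObj (a + b + 1 + d) h1' (tri (app A B) (sgl (μObj c hc Cc)) D))
    (e₂ : μObj (a + 1 + b + c + d) h (tri (tri A (sgl (μObj 0 h0 emp)) B) Cc D) =
      μObj (a + b + c + d) h' (tri (app A B) Cc D)),
    assoc (a + 1 + b) c d h h1 hc (tri A (sgl (μObj 0 h0 emp)) B) Cc D ≫ eqToHom e₂ =
      eqToHom e₁ ≫ assoc (a + b) c d h' h1' hc (app A B) Cc D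
  /-- (iii) compatibility of the associators with a unit inserted in the right outer slot -/
  cond_iii : ∀ (a b c d : ℕ) (h : Ok n (a + b + (c + 1 + d))) (h1 : Ok n (a + 1 + (c + 1 + d)))
    (h' : Ok n (a + b + (c + d))) (h1' : Ok n (a + 1 + (c + d))) (hb : Ok n b) (h0 : Ok n 0)
    (A : Fin a → C) (B : Fin b → C) (Cc : Fin c → C) (D : Fin d → C)
    (e₁ : μObj (a + 1 + (c + 1 + d)) h1
        (tri A (sgl (μObj b hb B)) (tri Cc (sgl (μObj 0 h0 emp)) D)) =
      μObj (a + 1 + (c + d)) h1' (tri A (sgl (μObj b hb B)) (app Cc D)))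
    (e₂ : μObj (a + b + (c + 1 + d)) h (tri A B (tri Cc (sgl (μObj 0 h0 emp)) D)) =
      μObj (a + b + (c + d)) h' (tri A B (app Cc D))),
    assoc a b (c + 1 + d) h h1 hb A B (tri Cc (sgl (μObj 0 h0 emp)) D) ≫ eqToHom e₂ =
      eqToHom e₁ ≫ assoc a b (c + d) h' h1' hb A B (app Cc D)
  /-- (iv) compatibility of the associators with a unit inserted in the inner multiplication -/
  cond_iv : ∀ (a b c d : ℕ) (h : Ok n (a + (b + 1 + c) + d)) (h1 : Ok n (a + 1 + d))
    (h' : Ok n (a + (b + c) + d)) (hbc1 : Ok n (b + 1 + c)) (hbc : Ok n (b + c)) (h0 : Ok n 0)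
    (A : Fin a → C) (B : Fin b → C) (Cc : Fin c → C) (D : Fin d → C)
    (e₁ : μObj (a + 1 + d) h1
        (tri A (sgl (μObj (b + 1 + c) hbc1 (tri B (sgl (μObj 0 h0 emp)) Cc))) D) =
      μObj (a + 1 + d) h1 (tri A (sgl (μObj (b + c) hbc (app B Cc))) D))
    (e₂ : μObj (a + (b + 1 + c) + d) h (tri A (tri B (sgl (μObj 0 h0 emp)) Cc) D) =
      μObj (a + (b + c) + d) h' (tri A (app B Cc) D)),
    assoc a (b + 1 + c) d h h1 hbc1 A (tri B (sgl (μObj 0 h0 emp)) Cc) D ≫ eqToHom e₂ =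
      eqToHom e₁ ≫ assoc a (b + c) d h' h1 hbc A (app B Cc) D
  /-- (v) the square for two disjoint inner multiplications commutes -/
  cond_v : ∀ (a b c d e : ℕ)
    (hb : Ok n b) (hd : Ok n d)
    (hT : Ok n (a + b + (c + d + e)))
    (h₁ : Ok n (a + b + (c + 1 + e))) (h₂ : Ok n (a + 1 + (c + 1 + e)))
    (h₃ : Ok n (a + b + c + d + e)) (h₄ : Ok n (a + b + c + 1 + e))
    (h₅ : Ok n (a + 1 + c + d + e)) (h₆ : Ok n (a + 1 + c + 1 + e))
    (h₇ : Ok n (a + 1 + (c + d + e)))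
    (A : Fin a → C) (B : Fin b → C) (Cc : Fin c → C) (D : Fin d → C) (E : Fin e → C)
    (e₀ : μObj (a + 1 + (c + 1 + e)) h₂
        (tri A (sgl (μObj b hb B)) (tri Cc (sgl (μObj d hd D)) E)) =
      μObj (a + 1 + c + 1 + e) h₆
        (tri (tri A (sgl (μObj b hb B)) Cc) (sgl (μObj d hd D)) E))
    (e₁ : μObj (a + b + (c + 1 + e)) h₁ (tri A B (tri Cc (sgl (μObj d hd D)) E)) =
      μObj (a + b + c + 1 + e) h₄ (tri (tri A B Cc) (sgl (μObj d hd D)) E))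
    (e₂ : μObj (a + 1 + c + d + e) h₅ (tri (tri A (sgl (μObj b hb B)) Cc) D E) =
      μObj (a + 1 + (c + d + e)) h₇ (tri A (sgl (μObj b hb B)) (tri Cc D E)))
    (e₃ : μObj (a + b + c + d + e) h₃ (tri (tri A B Cc) D E) =
      μObj (a + b + (c + d + e)) hT (tri A B (tri Cc D E))),
    assoc a b (c + 1 + e) h₁ h₂ hb A B (tri Cc (sgl (μObj d hd D)) E) ≫ eqToHom e₁ ≫
        assoc (a + b + c) d e h₃ h₄ hd (tri A B Cc) D E ≫ eqToHom e₃ =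
      eqToHom e₀ ≫ assoc (a + 1 + c) d e h₅ h₆ hd (tri A (sgl (μObj b hb B)) Cc) D E ≫
        eqToHom e₂ ≫ assoc a b (c + d + e) hT h₇ hb A B (tri Cc D E)
  /-- (vi) the square for a nested inner multiplication commutes -/
  cond_vi : ∀ (a b c d e : ℕ)
    (hc : Ok n c) (hb1d : Ok n (b + 1 + d)) (hbcd : Ok n (b + c + d))
    (hA1E : Ok n (a + 1 + e)) (hL : Ok n (a + (b + 1 + d) + e))
    (hT : Ok n (a + (b + c + d) + e))
    (hM1 : Ok n (a + b + 1 + (d + e))) (hM : Ok n (a + b + c + (d + e)))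
    (A : Fin a → C) (B : Fin b → C) (Cc : Fin c → C) (D : Fin d → C) (E : Fin e → C)
    (e₁ : μObj (a + (b + 1 + d) + e) hL (tri A (tri B (sgl (μObj c hc Cc)) D) E) =
      μObj (a + b + 1 + (d + e)) hM1 (tri (app A B) (sgl (μObj c hc Cc)) (app D E)))
    (e₂ : μObj (a + b + c + (d + e)) hM (tri (app A B) Cc (app D E)) =
      μObj (a + (b + c + d) + e) hT (tri A (tri B Cc D) E)),
    μMap (a + 1 + e) hA1E (htri (hid A) (hsgl (assoc b c d hbcd hb1d hc B Cc D)) (hid E)) ≫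
        assoc a (b + c + d) e hT hA1E hbcd A (tri B Cc D) E =
      assoc a (b + 1 + d) e hL hA1E hb1d A (tri B (sgl (μObj c hc Cc)) D) E ≫ eqToHom e₁ ≫
        assoc (a + b) c (d + e) hM hM1 hc (app A B) Cc (app D E) ≫ eqToHom e₂

/-! ### Transport along equalities of objects and tuples -/

theorem ext_zero {C : Type u} {A B : Fin 0 → C} : A = B :=
  funext fun i => i.elim0

theorem ext_one {C : Type u} {A B : Fin 1 → C} (h0 : A 0 = B 0) : A = B := by
  funext i; fin_cases i; assumption

theorem ext_two {C : Type u} {A B : Fin 2 → C} (h0 : A 0 = B 0) (h1 : A 1 = B 1) : A = B := by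
  funext i; fin_cases i <;> assumption

theorem ext_three {C : Type u} {A B : Fin 3 → C} (h0 : A 0 = B 0) (h1 : A 1 = B 1) (h2 : A 2 = B 2) :
    A = B := by
  funext i; fin_cases i <;> assumption

theorem ext_four {C : Type u} {A B : Fin 4 → C} (h0 : A 0 = B 0) (h1 : A 1 = B 1) (h2 : A 2 = B 2)
    (h3 : A 3 = B 3) : A = B := by
  funext i; fin_cases i <;> assumption

section Transport

variable {C : Type u} [Category.{v} C] {n : ℕ∞}

theorem ok_of_le (hn : 4 ≤ n) {k : ℕ} (hk : k ≤ 4) : Ok n k := by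
  have h1 : (k : ℕ∞) ≤ 4 := by exact_mod_cast hk
  have h2 : (k : ℕ∞) ≤ n := h1.trans hn
  exact (ENat.lt_add_one_iff' (ENat.natCast_ne_top k)).2 h2

/-- Transport of a morphism along equalities of its source and target. -/
def conj {X Y X' Y' : C} (f : X ⟶ Y) (hX : X' = X) (hY : Y = Y') : X' ⟶ Y' :=
  eqToHom hX ≫ f ≫ eqToHom hY

theorem conj_heq {X Y X' Y' : C} (hX : X' = X) (hY : Y = Y') (f : X ⟶ Y) :
    HEq (conj f hX hY) f := by
  subst hX hY; simp [conj]

theorem isIso_conj {X Y X' Y' : C} (hX : X' = X) (hY : Y = Y') (f : X ⟶ Y) [IsIso f] :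
    IsIso (conj f hX hY) := by
  unfold conj; infer_instance

theorem comp_eqToHom_of_heq {X Y X' Y' : C} {f : X ⟶ Y} {g : X' ⟶ Y'} (hX : X = X')
    (hY : Y = Y') (h : HEq f g) : f ≫ eqToHom hY = eqToHom hX ≫ g := by
  subst hX hY; cases h; simp

theorem eqToHom_of_heq {X Y X' Y' : C} {f : X ⟶ Y} {g : X' ⟶ Y'} {e : X' = Y'}
    (hg : g = eqToHom e) (hX : X = X') (hY : Y = Y') (h : HEq f g) :
    ∃ e' : X = Y, f = eqToHom e' := by
  subst hX hY hg; cases h; exact ⟨e, rfl⟩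

theorem eq_eqToHom_of_square {X Y X' Y' : C} {f : X ⟶ Y} {g : X' ⟶ Y'} {hX : X = X'}
    {hY : Y = Y'} {e : X' = Y'} (h : f ≫ eqToHom hY = eqToHom hX ≫ g) (hg : g = eqToHom e) :
    f = eqToHom (hX.trans (e.trans hY.symm)) := by
  subst hX hY hg; simpa using h

theorem happ_left {a b : ℕ} {A A' : Fin a → C} {B B' : Fin b → C}
    (f : ∀ i, A i ⟶ A' i) (g : ∀ j, B j ⟶ B' j) (l : Fin (a + b)) (h : (l : ℕ) < a)
    {X Y : C} {k : X ⟶ Y} (hk : HEq (f ⟨l, h⟩) k) : HEq (happ f g l) k := by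
  refine HEq.trans ?_ hk
  simp only [happ, h, dif_pos]
  exact conj_heq _ _ _

theorem happ_right {a b : ℕ} {A A' : Fin a → C} {B B' : Fin b → C}
    (f : ∀ i, A i ⟶ A' i) (g : ∀ j, B j ⟶ B' j) (l : Fin (a + b)) (h : ¬ (l : ℕ) < a)
    {X Y : C} {k : X ⟶ Y}
    (hk : HEq (g ⟨(l : ℕ) - a, by have := l.isLt; omega⟩) k) : HEq (happ f g l) k := by
  refine HEq.trans ?_ hk
  simp only [happ, h, dif_neg, not_false_eq_true]
  exact conj_heq _ _ _

theorem htri_fst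
    {a b c : ℕ} {A A' : Fin a → C} {B B' : Fin b → C} {D D' : Fin c → C}
    (f : ∀ i, A i ⟶ A' i) (g : ∀ i, B i ⟶ B' i) (h : ∀ i, D i ⟶ D' i)
    (i : Fin a) (l : Fin (a + b + c)) (hl : (l : ℕ) = i) : HEq (htri f g h l) (f i) := by
  obtain ⟨l, hl'⟩ := l
  dsimp only at hl
  subst hl
  exact happ_left _ _ _ (by simp; omega) (happ_left _ _ _ i.isLt HEq.rfl)

theorem htri_snd
    {a b c : ℕ} {A A' : Fin a → C} {B B' : Fin b → C} {D D' : Fin c → C}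
    (f : ∀ i, A i ⟶ A' i) (g : ∀ i, B i ⟶ B' i) (h : ∀ i, D i ⟶ D' i)
    (i : Fin b) (l : Fin (a + b + c)) (hl : (l : ℕ) = a + i) : HEq (htri f g h l) (g i) := by
  obtain ⟨l, hl'⟩ := l
  dsimp only at hl
  subst hl
  refine happ_left _ _ _ (by simp) (happ_right _ _ _ (by simp) ?_)
  exact congr_arg_heq g (Fin.ext (by simp))

theorem htri_thd
    {a b c : ℕ} {A A' : Fin a → C} {B B' : Fin b → C} {D D' : Fin c → C}
    (f : ∀ i, A i ⟶ A' i) (g : ∀ i, B i ⟶ B' i) (h : ∀ i, D i ⟶ D' i)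
    (i : Fin c) (l : Fin (a + b + c)) (hl : (l : ℕ) = a + b + i) :
    HEq (htri f g h l) (h i) := by
  obtain ⟨l, hl'⟩ := l
  dsimp only at hl
  subst hl
  refine happ_right _ _ _ (by simp) ?_
  exact congr_arg_heq h (Fin.ext (by simp))

namespace AMonCat

variable (M : AMonCat C n)

theorem μMap_heq {k : ℕ} (hk : Ok n k) {A A' B B' : Fin k → C}
    (f : ∀ i, A i ⟶ B i) (f' : ∀ i, A' i ⟶ B' i) (hA : A = A') (hB : B = B')
    (hf : ∀ i, HEq (f i) (f' i)) : HEq (M.μMap k hk f) (M.μMap k hk f') := by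
  subst hA hB
  have : f = f' := by funext i; exact eq_of_heq (hf i)
  rw [this]

theorem assoc_heq {a b c : ℕ} (h : Ok n (a + b + c))
    (h1 : Ok n (a + 1 + c)) (hb : Ok n b) {A A' : Fin a → C} {B B' : Fin b → C}
    {D D' : Fin c → C} (hA : A = A') (hB : B = B') (hD : D = D') :
    HEq (M.assoc a b c h h1 hb A B D) (M.assoc a b c h h1 hb A' B' D') := by
  subst hA hB hD; rfl

/-- Naturality of the associators, up to transport. -/
theorem square_natural (a b c : ℕ) (h : Ok n (a + b + c)) (h1 : Ok n (a + 1 + c))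
    (hb : Ok n b) {A A' : Fin a → C} {B B' : Fin b → C} {D D' : Fin c → C}
    (f : ∀ i, A i ⟶ A' i) (g : ∀ i, B i ⟶ B' i) (k : ∀ i, D i ⟶ D' i)
    {O₁ O₂ O₃ O₄ : C} {w : O₁ ⟶ O₂} {x : O₂ ⟶ O₄} {y : O₁ ⟶ O₃} {z : O₃ ⟶ O₄}
    (h₁ : O₁ = M.μObj (a + 1 + c) h1 (tri A (sgl (M.μObj b hb B)) D))
    (h₂ : O₂ = M.μObj (a + 1 + c) h1 (tri A' (sgl (M.μObj b hb B')) D'))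
    (h₃ : O₃ = M.μObj (a + b + c) h (tri A B D))
    (h₄ : O₄ = M.μObj (a + b + c) h (tri A' B' D'))
    (hw : HEq w (M.μMap (a + 1 + c) h1 (htri f (hsgl (M.μMap b hb g)) k)))
    (hx : HEq x (M.assoc a b c h h1 hb A' B' D'))
    (hy : HEq y (M.assoc a b c h h1 hb A B D))
    (hz : HEq z (M.μMap (a + b + c) h (htri f g k))) :
    w ≫ x = y ≫ z := by
  subst h₁ h₂ h₃ h₄
  cases hw; cases hx; cases hy; cases hz
  exact M.assoc_natural a b c h h1 hb f g k

/-- Condition (v), up to transport. -/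
theorem square_v (a b c d e : ℕ)
    (hb : Ok n b) (hd : Ok n d)
    (hT : Ok n (a + b + (c + d + e)))
    (h₁ : Ok n (a + b + (c + 1 + e))) (h₂ : Ok n (a + 1 + (c + 1 + e)))
    (h₃ : Ok n (a + b + c + d + e)) (h₄ : Ok n (a + b + c + 1 + e))
    (h₅ : Ok n (a + 1 + c + d + e)) (h₆ : Ok n (a + 1 + c + 1 + e))
    (h₇ : Ok n (a + 1 + (c + d + e)))
    (A : Fin a → C) (B : Fin b → C) (Cc : Fin c → C) (D : Fin d → C) (E : Fin e → C)
    {O₁ O₂ O₃ O₄ : C} {w : O₁ ⟶ O₂} {x : O₂ ⟶ O₄} {y : O₁ ⟶ O₃} {z : O₃ ⟶ O₄}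
    (p₁ : O₁ = M.μObj (a + 1 + (c + 1 + e)) h₂
        (tri A (sgl (M.μObj b hb B)) (tri Cc (sgl (M.μObj d hd D)) E)))
    (p₁' : O₁ = M.μObj (a + 1 + c + 1 + e) h₆
        (tri (tri A (sgl (M.μObj b hb B)) Cc) (sgl (M.μObj d hd D)) E))
    (p₂ : O₂ = M.μObj (a + b + (c + 1 + e)) h₁ (tri A B (tri Cc (sgl (M.μObj d hd D)) E)))
    (p₂' : O₂ = M.μObj (a + b + c + 1 + e) h₄ (tri (tri A B Cc) (sgl (M.μObj d hd D)) E))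
    (p₃ : O₃ = M.μObj (a + 1 + c + d + e) h₅ (tri (tri A (sgl (M.μObj b hb B)) Cc) D E))
    (p₃' : O₃ = M.μObj (a + 1 + (c + d + e)) h₇ (tri A (sgl (M.μObj b hb B)) (tri Cc D E)))
    (p₄ : O₄ = M.μObj (a + b + c + d + e) h₃ (tri (tri A B Cc) D E))
    (p₄' : O₄ = M.μObj (a + b + (c + d + e)) hT (tri A B (tri Cc D E)))
    (hw : HEq w (M.assoc a b (c + 1 + e) h₁ h₂ hb A B (tri Cc (sgl (M.μObj d hd D)) E)))
    (hx : HEq x (M.assoc (a + b + c) d e h₃ h₄ hd (tri A B Cc) D E))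
    (hy : HEq y (M.assoc (a + 1 + c) d e h₅ h₆ hd (tri A (sgl (M.μObj b hb B)) Cc) D E))
    (hz : HEq z (M.assoc a b (c + d + e) hT h₇ hb A B (tri Cc D E))) :
    w ≫ x = y ≫ z := by
  have key := M.cond_v a b c d e hb hd hT h₁ h₂ h₃ h₄ h₅ h₆ h₇ A B Cc D E
    (p₁.symm.trans p₁') (p₂.symm.trans p₂') (p₃.symm.trans p₃') (p₄.symm.trans p₄')
  have hx' := comp_eqToHom_of_heq p₂' p₄ hx
  have hw' := comp_eqToHom_of_heq p₁ p₂ hw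
  have hy' := comp_eqToHom_of_heq p₁' p₃ hy
  have hz' := comp_eqToHom_of_heq p₃' p₄' hz
  rw [← cancel_mono (eqToHom p₄'), Category.assoc, Category.assoc, hz']
  rw [← cancel_epi (eqToHom p₁), ← reassoc_of% hw'] at key
  simp only [eqToHom_trans_assoc] at key
  rw [← reassoc_of% hx', ← reassoc_of% hy'] at key
  simpa using key

/-- Condition (vi), up to transport. -/
theorem square_vi (a b c d e : ℕ)
    (hc : Ok n c) (hb1d : Ok n (b + 1 + d)) (hbcd : Ok n (b + c + d))
    (hA1E : Ok n (a + 1 + e)) (hL : Ok n (a + (b + 1 + d) + e))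
    (hT : Ok n (a + (b + c + d) + e))
    (hM1 : Ok n (a + b + 1 + (d + e))) (hM : Ok n (a + b + c + (d + e)))
    (A : Fin a → C) (B : Fin b → C) (Cc : Fin c → C) (D : Fin d → C) (E : Fin e → C)
    {O₁ O₂ O₃ O₄ : C} {w : O₁ ⟶ O₂} {x : O₂ ⟶ O₄} {y : O₁ ⟶ O₃} {z : O₃ ⟶ O₄}
    (p₁ : O₁ = M.μObj (a + 1 + e) hA1E
      (tri A (sgl (M.μObj (b + 1 + d) hb1d (tri B (sgl (M.μObj c hc Cc)) D))) E))
    (p₂ : O₂ = M.μObj (a + 1 + e) hA1E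
      (tri A (sgl (M.μObj (b + c + d) hbcd (tri B Cc D))) E))
    (p₃ : O₃ = M.μObj (a + (b + 1 + d) + e) hL (tri A (tri B (sgl (M.μObj c hc Cc)) D) E))
    (p₃' : O₃ = M.μObj (a + b + 1 + (d + e)) hM1
      (tri (app A B) (sgl (M.μObj c hc Cc)) (app D E)))
    (p₄ : O₄ = M.μObj (a + b + c + (d + e)) hM (tri (app A B) Cc (app D E)))
    (p₄' : O₄ = M.μObj (a + (b + c + d) + e) hT (tri A (tri B Cc D) E))
    (hw : HEq w (M.μMap (a + 1 + e) hA1E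
      (htri (hid A) (hsgl (M.assoc b c d hbcd hb1d hc B Cc D)) (hid E))))
    (hx : HEq x (M.assoc a (b + c + d) e hT hA1E hbcd A (tri B Cc D) E))
    (hy : HEq y (M.assoc a (b + 1 + d) e hL hA1E hb1d A (tri B (sgl (M.μObj c hc Cc)) D) E))
    (hz : HEq z (M.assoc (a + b) c (d + e) hM hM1 hc (app A B) Cc (app D E))) :
    w ≫ x = y ≫ z := by
  have key := M.cond_vi a b c d e hc hb1d hbcd hA1E hL hT hM1 hM A B Cc D E
    (p₃.symm.trans p₃') (p₄.symm.trans p₄')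
  have hx' := comp_eqToHom_of_heq p₂ p₄' hx
  have hw' := comp_eqToHom_of_heq p₁ p₂ hw
  have hy' := comp_eqToHom_of_heq p₁ p₃ hy
  have hz' := comp_eqToHom_of_heq p₃' p₄ hz
  rw [← cancel_mono (eqToHom p₄'), Category.assoc, Category.assoc, hx', reassoc_of% hw', key,
    ← reassoc_of% hy', eqToHom_trans_assoc, ← reassoc_of% hz', eqToHom_trans]

end AMonCat

end Transport

/-! ### The monoidal structure -/

namespace AMonCat

variable {C : Type u} [Category.{v} C] {n : ℕ∞}

/-- The triple `(X, Y, Z)`. -/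
def triple (X Y Z : C) : Fin 3 → C := tri (sgl X) (sgl Y) (sgl Z)

/-- The quadruple `(W, X, Y, Z)`. -/
def quad (W X Y Z : C) : Fin 4 → C := tri (pair W X) (sgl Y) (sgl Z)

/-- The family of morphisms `(f, g, h)`. -/
def tripleHom {X X' Y Y' Z Z' : C} (f : X ⟶ X') (g : Y ⟶ Y') (h : Z ⟶ Z') :
    ∀ i, triple X Y Z i ⟶ triple X' Y' Z' i := htri (hsgl f) (hsgl g) (hsgl h)

variable (M : AMonCat C n) (hn : 4 ≤ n)

/-- The unit object `μ₀`. -/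
def one : C := M.μObj 0 (ok_of_le hn (by decide)) emp

/-- The binary product `μ₂(X, Y)`. -/
def ten (X Y : C) : C := M.μObj 2 (ok_of_le hn (by decide)) (pair X Y)

/-- The ternary product `μ₃(X, Y, Z)`. -/
def ten₃ (X Y Z : C) : C := M.μObj 3 (ok_of_le hn (by decide)) (triple X Y Z)

/-- The quaternary product `μ₄(W, X, Y, Z)`. -/
def ten₄ (W X Y Z : C) : C := M.μObj 4 (ok_of_le hn (by decide)) (quad W X Y Z)

/-- The action of `μ₂` on morphisms. -/
def tenHom {X X' Y Y' : C} (f : X ⟶ X') (g : Y ⟶ Y') : M.ten hn X Y ⟶ M.ten hn X' Y' :=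
  M.μMap 2 (ok_of_le hn (by decide)) (pairHom f g)

/-- The action of `μ₃` on morphisms. -/
def tenHom₃ {X X' Y Y' Z Z' : C} (f : X ⟶ X') (g : Y ⟶ Y') (h : Z ⟶ Z') :
    M.ten₃ hn X Y Z ⟶ M.ten₃ hn X' Y' Z' :=
  M.μMap 3 (ok_of_le hn (by decide)) (tripleHom f g h)

theorem tenHom_id (X Y : C) : M.tenHom hn (𝟙 X) (𝟙 Y) = 𝟙 (M.ten hn X Y) := by
  refine Eq.trans (congrArg (M.μMap 2 _) ?_) (M.μMap_id 2 _ (pair X Y))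
  funext i; fin_cases i <;> rfl

theorem tenHom_comp {X X' X'' Y Y' Y'' : C} (f : X ⟶ X') (g : Y ⟶ Y') (f' : X' ⟶ X'')
    (g' : Y' ⟶ Y'') :
    M.tenHom hn (f ≫ f') (g ≫ g') = M.tenHom hn f g ≫ M.tenHom hn f' g' := by
  refine Eq.trans (congrArg (M.μMap 2 _) ?_) (M.μMap_comp 2 _ (pairHom f g) (pairHom f' g'))
  funext i; fin_cases i <;> rfl

theorem tenHom_eqToHom {X X' Y Y' : C} (e : X = X') (e' : Y = Y') :
    ∃ e'', M.tenHom hn (eqToHom e) (eqToHom e') = eqToHom e'' := by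
  subst e e'; exact ⟨rfl, M.tenHom_id hn _ _⟩

/-- `α^{0,2,1} : (X ⊗ Y) ⊗ Z ⟶ μ₃(X, Y, Z)`. -/
def leftAssoc (X Y Z : C) : M.ten hn (M.ten hn X Y) Z ⟶ M.ten₃ hn X Y Z :=
  conj
    (M.assoc 0 2 1 (ok_of_le hn (by decide)) (ok_of_le hn (by decide)) (ok_of_le hn (by decide))
      emp (pair X Y) (sgl Z))
    (congrArg (M.μObj 2 _) (ext_two rfl rfl))
    (congrArg (M.μObj 3 _) (ext_three rfl rfl rfl))

/-- `α^{1,2,0} : X ⊗ (Y ⊗ Z) ⟶ μ₃(X, Y, Z)`. -/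
def rightAssoc (X Y Z : C) : M.ten hn X (M.ten hn Y Z) ⟶ M.ten₃ hn X Y Z :=
  conj
    (M.assoc 1 2 0 (ok_of_le hn (by decide)) (ok_of_le hn (by decide)) (ok_of_le hn (by decide))
      (sgl X) (pair Y Z) emp)
    (congrArg (M.μObj 2 _) (ext_two rfl rfl))
    (congrArg (M.μObj 3 _) (ext_three rfl rfl rfl))

/-- `α^{0,3,1} : μ₃(W, X, Y) ⊗ Z ⟶ μ₄(W, X, Y, Z)`. -/
def assoc₀₃₁ (W X Y Z : C) : M.ten hn (M.ten₃ hn W X Y) Z ⟶ M.ten₄ hn W X Y Z :=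
  conj
    (M.assoc 0 3 1 (ok_of_le hn (by decide)) (ok_of_le hn (by decide)) (ok_of_le hn (by decide))
      emp (triple W X Y) (sgl Z))
    (congrArg (M.μObj 2 _) (ext_two rfl rfl))
    (congrArg (M.μObj 4 _) (ext_four rfl rfl rfl rfl))

/-- `α^{1,3,0} : W ⊗ μ₃(X, Y, Z) ⟶ μ₄(W, X, Y, Z)`. -/
def assoc₁₃₀ (W X Y Z : C) : M.ten hn W (M.ten₃ hn X Y Z) ⟶ M.ten₄ hn W X Y Z :=
  conj
    (M.assoc 1 3 0 (ok_of_le hn (by decide)) (ok_of_le hn (by decide)) (ok_of_le hn (by decide))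
      (sgl W) (triple X Y Z) emp)
    (congrArg (M.μObj 2 _) (ext_two rfl rfl))
    (congrArg (M.μObj 4 _) (ext_four rfl rfl rfl rfl))

/-- `α^{0,2,2} : μ₃(W ⊗ X, Y, Z) ⟶ μ₄(W, X, Y, Z)`. -/
def assoc₀₂₂ (W X Y Z : C) : M.ten₃ hn (M.ten hn W X) Y Z ⟶ M.ten₄ hn W X Y Z :=
  conj
    (M.assoc 0 2 2 (ok_of_le hn (by decide)) (ok_of_le hn (by decide)) (ok_of_le hn (by decide))
      emp (pair W X) (pair Y Z))
    (congrArg (M.μObj 3 _) (ext_three rfl rfl rfl))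
    (congrArg (M.μObj 4 _) (ext_four rfl rfl rfl rfl))

/-- `α^{1,2,1} : μ₃(W, X ⊗ Y, Z) ⟶ μ₄(W, X, Y, Z)`. -/
def assoc₁₂₁ (W X Y Z : C) : M.ten₃ hn W (M.ten hn X Y) Z ⟶ M.ten₄ hn W X Y Z :=
  conj
    (M.assoc 1 2 1 (ok_of_le hn (by decide)) (ok_of_le hn (by decide)) (ok_of_le hn (by decide))
      (sgl W) (pair X Y) (sgl Z))
    (congrArg (M.μObj 3 _) (ext_three rfl rfl rfl))
    (congrArg (M.μObj 4 _) (ext_four rfl rfl rfl rfl))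

/-- `α^{2,2,0} : μ₃(W, X, Y ⊗ Z) ⟶ μ₄(W, X, Y, Z)`. -/
def assoc₂₂₀ (W X Y Z : C) : M.ten₃ hn W X (M.ten hn Y Z) ⟶ M.ten₄ hn W X Y Z :=
  conj
    (M.assoc 2 2 0 (ok_of_le hn (by decide)) (ok_of_le hn (by decide)) (ok_of_le hn (by decide))
      (pair W X) (pair Y Z) emp)
    (congrArg (M.μObj 3 _) (ext_three rfl rfl rfl))
    (congrArg (M.μObj 4 _) (ext_four rfl rfl rfl rfl))

/-- `f ⊗ g`, up to transport, is `μ₂` of the concatenation of families of lengths `0, 1, 1`. -/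
theorem tenHom_heq_left {X X' Y Y' A A' : C} (f : X ⟶ X') (g : Y ⟶ Y') (f' : A ⟶ A')
    (k : ∀ i : Fin 0, (emp i : C) ⟶ emp i) (hX : X = A) (hX' : X' = A') (hf : HEq f f') :
    HEq (M.tenHom hn f g)
      (M.μMap (0 + 1 + 1) (ok_of_le hn (by decide)) (htri k (hsgl f') (hsgl g))) := by
  subst hX hX'
  cases hf
  refine M.μMap_heq (k := 2) _ _ _ ?_ ?_ ?_
  · exact ext_two rfl rfl
  · exact ext_two rfl rfl
  intro i
  fin_cases i
  · exact (htri_snd k (hsgl f) (hsgl g) 0 _ rfl).symm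
  · exact (htri_thd k (hsgl f) (hsgl g) 0 _ rfl).symm

/-- `f ⊗ g`, up to transport, is `μ₂` of the concatenation of families of lengths `1, 1, 0`. -/
theorem tenHom_heq_right {X X' Y Y' B B' : C} (f : X ⟶ X') (g : Y ⟶ Y') (g' : B ⟶ B')
    (k : ∀ i : Fin 0, (emp i : C) ⟶ emp i) (hY : Y = B) (hY' : Y' = B') (hg : HEq g g') :
    HEq (M.tenHom hn f g)
      (M.μMap (1 + 1 + 0) (ok_of_le hn (by decide)) (htri (hsgl f) (hsgl g') k)) := by
  subst hY hY'
  cases hg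
  refine M.μMap_heq (k := 2) _ _ _ ?_ ?_ ?_
  · exact ext_two rfl rfl
  · exact ext_two rfl rfl
  intro i
  fin_cases i
  · exact (htri_fst (hsgl f) (hsgl g) k 0 _ rfl).symm
  · exact (htri_snd (hsgl f) (hsgl g) k 0 _ rfl).symm

theorem leftAssoc_natural {X X' Y Y' Z Z' : C} (f : X ⟶ X') (g : Y ⟶ Y') (h : Z ⟶ Z') :
    M.tenHom hn (M.tenHom hn f g) h ≫ M.leftAssoc hn X' Y' Z' =
      M.leftAssoc hn X Y Z ≫ M.tenHom₃ hn f g h := by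
  refine M.square_natural 0 2 1 (ok_of_le hn (by decide)) (ok_of_le hn (by decide))
    (ok_of_le hn (by decide)) (hid emp) (pairHom f g) (hsgl h)
    (congrArg (M.μObj 2 _) (ext_two rfl rfl)) (congrArg (M.μObj 2 _) (ext_two rfl rfl))
    (congrArg (M.μObj 3 _) (ext_three rfl rfl rfl)) (congrArg (M.μObj 3 _) (ext_three rfl rfl rfl))
    (M.tenHom_heq_left hn _ _ _ _ rfl rfl HEq.rfl) (conj_heq _ _ _) (conj_heq _ _ _) ?_
  refine M.μMap_heq (k := 3) _ _ _ ?_ ?_ ?_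
  · exact ext_three rfl rfl rfl
  · exact ext_three rfl rfl rfl
  intro i
  fin_cases i
  · exact (htri_fst (hsgl f) (hsgl g) (hsgl h) 0 _ rfl).trans
      (htri_snd (hid emp) (pairHom f g) (hsgl h) 0 _ rfl).symm
  · exact (htri_snd (hsgl f) (hsgl g) (hsgl h) 0 _ rfl).trans
      (htri_snd (hid emp) (pairHom f g) (hsgl h) 1 _ rfl).symm
  · exact (htri_thd (hsgl f) (hsgl g) (hsgl h) 0 _ rfl).trans
      (htri_thd (hid emp) (pairHom f g) (hsgl h) 0 _ rfl).symm

theorem rightAssoc_natural {X X' Y Y' Z Z' : C} (f : X ⟶ X') (g : Y ⟶ Y') (h : Z ⟶ Z') :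
    M.tenHom hn f (M.tenHom hn g h) ≫ M.rightAssoc hn X' Y' Z' =
      M.rightAssoc hn X Y Z ≫ M.tenHom₃ hn f g h := by
  refine M.square_natural 1 2 0 (ok_of_le hn (by decide)) (ok_of_le hn (by decide))
    (ok_of_le hn (by decide)) (hsgl f) (pairHom g h) (hid emp)
    (congrArg (M.μObj 2 _) (ext_two rfl rfl)) (congrArg (M.μObj 2 _) (ext_two rfl rfl))
    (congrArg (M.μObj 3 _) (ext_three rfl rfl rfl)) (congrArg (M.μObj 3 _) (ext_three rfl rfl rfl))
    (M.tenHom_heq_right hn _ _ _ _ rfl rfl HEq.rfl) (conj_heq _ _ _) (conj_heq _ _ _) ?_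
  refine M.μMap_heq (k := 3) _ _ _ ?_ ?_ ?_
  · exact ext_three rfl rfl rfl
  · exact ext_three rfl rfl rfl
  intro i
  fin_cases i
  · exact (htri_fst (hsgl f) (hsgl g) (hsgl h) 0 _ rfl).trans
      (htri_fst (hsgl f) (pairHom g h) (hid emp) 0 _ rfl).symm
  · exact (htri_snd (hsgl f) (hsgl g) (hsgl h) 0 _ rfl).trans
      (htri_snd (hsgl f) (pairHom g h) (hid emp) 0 _ rfl).symm
  · exact (htri_thd (hsgl f) (hsgl g) (hsgl h) 0 _ rfl).trans
      (htri_snd (hsgl f) (pairHom g h) (hid emp) 1 _ rfl).symm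

/-! ### The squares over `μ₄` -/

theorem leftAssoc_whiskerRight (W X Y Z : C) :
    M.tenHom hn (M.leftAssoc hn W X Y) (𝟙 Z) ≫ M.assoc₀₃₁ hn W X Y Z =
      M.leftAssoc hn (M.ten hn W X) Y Z ≫ M.assoc₀₂₂ hn W X Y Z := by
  refine M.square_vi 0 0 2 1 1 (ok_of_le hn (by decide)) (ok_of_le hn (by decide))
    (ok_of_le hn (by decide)) (ok_of_le hn (by decide)) (ok_of_le hn (by decide))
    (ok_of_le hn (by decide)) (ok_of_le hn (by decide)) (ok_of_le hn (by decide))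
    emp emp (pair W X) (sgl Y) (sgl Z)
    (congrArg (M.μObj 2 _) (ext_two (congrArg (M.μObj 2 _) (ext_two rfl rfl)) rfl))
    (congrArg (M.μObj 2 _) (ext_two (congrArg (M.μObj 3 _) (ext_three rfl rfl rfl)) rfl))
    (congrArg (M.μObj 3 _) (ext_three rfl rfl rfl)) (congrArg (M.μObj 3 _) (ext_three rfl rfl rfl))
    (congrArg (M.μObj 4 _) (ext_four rfl rfl rfl rfl))
    (congrArg (M.μObj 4 _) (ext_four rfl rfl rfl rfl)) ?_ ?_ ?_ ?_
  · exact M.tenHom_heq_left hn _ _ _ _ (congrArg (M.μObj 2 _) (ext_two rfl rfl))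
      (congrArg (M.μObj 3 _) (ext_three rfl rfl rfl)) (conj_heq _ _ _)
  · exact (conj_heq _ _ _).trans
      (M.assoc_heq (a := 0) (b := 3) (c := 1) _ _ _ rfl (ext_three rfl rfl rfl) rfl)
  · exact (conj_heq _ _ _).trans
      (M.assoc_heq (a := 0) (b := 2) (c := 1) _ _ _ rfl (ext_two rfl rfl) rfl)
  · exact (conj_heq _ _ _).trans
      (M.assoc_heq (a := 0) (b := 2) (c := 2) _ _ _ ext_zero rfl (ext_two rfl rfl))

theorem rightAssoc_whiskerRight (W X Y Z : C) :
    M.tenHom hn (M.rightAssoc hn W X Y) (𝟙 Z) ≫ M.assoc₀₃₁ hn W X Y Z =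
      M.leftAssoc hn W (M.ten hn X Y) Z ≫ M.assoc₁₂₁ hn W X Y Z := by
  refine M.square_vi 0 1 2 0 1 (ok_of_le hn (by decide)) (ok_of_le hn (by decide))
    (ok_of_le hn (by decide)) (ok_of_le hn (by decide)) (ok_of_le hn (by decide))
    (ok_of_le hn (by decide)) (ok_of_le hn (by decide)) (ok_of_le hn (by decide))
    emp (sgl W) (pair X Y) emp (sgl Z)
    (congrArg (M.μObj 2 _) (ext_two (congrArg (M.μObj 2 _) (ext_two rfl rfl)) rfl))
    (congrArg (M.μObj 2 _) (ext_two (congrArg (M.μObj 3 _) (ext_three rfl rfl rfl)) rfl))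
    (congrArg (M.μObj 3 _) (ext_three rfl rfl rfl)) (congrArg (M.μObj 3 _) (ext_three rfl rfl rfl))
    (congrArg (M.μObj 4 _) (ext_four rfl rfl rfl rfl))
    (congrArg (M.μObj 4 _) (ext_four rfl rfl rfl rfl)) ?_ ?_ ?_ ?_
  · exact M.tenHom_heq_left hn _ _ _ _ (congrArg (M.μObj 2 _) (ext_two rfl rfl))
      (congrArg (M.μObj 3 _) (ext_three rfl rfl rfl)) (conj_heq _ _ _)
  · exact (conj_heq _ _ _).trans
      (M.assoc_heq (a := 0) (b := 3) (c := 1) _ _ _ rfl (ext_three rfl rfl rfl) rfl)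
  · exact (conj_heq _ _ _).trans
      (M.assoc_heq (a := 0) (b := 2) (c := 1) _ _ _ rfl (ext_two rfl rfl) rfl)
  · exact (conj_heq _ _ _).trans
      (M.assoc_heq (a := 1) (b := 2) (c := 1) _ _ _ (ext_one rfl) rfl (ext_one rfl))

theorem leftAssoc_whiskerLeft (W X Y Z : C) :
    M.tenHom hn (𝟙 W) (M.leftAssoc hn X Y Z) ≫ M.assoc₁₃₀ hn W X Y Z =
      M.rightAssoc hn W (M.ten hn X Y) Z ≫ M.assoc₁₂₁ hn W X Y Z := by
  refine M.square_vi 1 0 2 1 0 (ok_of_le hn (by decide)) (ok_of_le hn (by decide))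
    (ok_of_le hn (by decide)) (ok_of_le hn (by decide)) (ok_of_le hn (by decide))
    (ok_of_le hn (by decide)) (ok_of_le hn (by decide)) (ok_of_le hn (by decide))
    (sgl W) emp (pair X Y) (sgl Z) emp
    (congrArg (M.μObj 2 _) (ext_two rfl (congrArg (M.μObj 2 _) (ext_two rfl rfl))))
    (congrArg (M.μObj 2 _) (ext_two rfl (congrArg (M.μObj 3 _) (ext_three rfl rfl rfl))))
    (congrArg (M.μObj 3 _) (ext_three rfl rfl rfl)) (congrArg (M.μObj 3 _) (ext_three rfl rfl rfl))
    (congrArg (M.μObj 4 _) (ext_four rfl rfl rfl rfl))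
    (congrArg (M.μObj 4 _) (ext_four rfl rfl rfl rfl)) ?_ ?_ ?_ ?_
  · exact M.tenHom_heq_right hn _ _ _ _ (congrArg (M.μObj 2 _) (ext_two rfl rfl))
      (congrArg (M.μObj 3 _) (ext_three rfl rfl rfl)) (conj_heq _ _ _)
  · exact (conj_heq _ _ _).trans
      (M.assoc_heq (a := 1) (b := 3) (c := 0) _ _ _ rfl (ext_three rfl rfl rfl) rfl)
  · exact (conj_heq _ _ _).trans
      (M.assoc_heq (a := 1) (b := 2) (c := 0) _ _ _ rfl (ext_two rfl rfl) rfl)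
  · exact (conj_heq _ _ _).trans
      (M.assoc_heq (a := 1) (b := 2) (c := 1) _ _ _ (ext_one rfl) rfl (ext_one rfl))

theorem rightAssoc_whiskerLeft (W X Y Z : C) :
    M.tenHom hn (𝟙 W) (M.rightAssoc hn X Y Z) ≫ M.assoc₁₃₀ hn W X Y Z =
      M.rightAssoc hn W X (M.ten hn Y Z) ≫ M.assoc₂₂₀ hn W X Y Z := by
  refine M.square_vi 1 1 2 0 0 (ok_of_le hn (by decide)) (ok_of_le hn (by decide))
    (ok_of_le hn (by decide)) (ok_of_le hn (by decide)) (ok_of_le hn (by decide))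
    (ok_of_le hn (by decide)) (ok_of_le hn (by decide)) (ok_of_le hn (by decide))
    (sgl W) (sgl X) (pair Y Z) emp emp
    (congrArg (M.μObj 2 _) (ext_two rfl (congrArg (M.μObj 2 _) (ext_two rfl rfl))))
    (congrArg (M.μObj 2 _) (ext_two rfl (congrArg (M.μObj 3 _) (ext_three rfl rfl rfl))))
    (congrArg (M.μObj 3 _) (ext_three rfl rfl rfl)) (congrArg (M.μObj 3 _) (ext_three rfl rfl rfl))
    (congrArg (M.μObj 4 _) (ext_four rfl rfl rfl rfl))
    (congrArg (M.μObj 4 _) (ext_four rfl rfl rfl rfl)) ?_ ?_ ?_ ?_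
  · exact M.tenHom_heq_right hn _ _ _ _ (congrArg (M.μObj 2 _) (ext_two rfl rfl))
      (congrArg (M.μObj 3 _) (ext_three rfl rfl rfl)) (conj_heq _ _ _)
  · exact (conj_heq _ _ _).trans
      (M.assoc_heq (a := 1) (b := 3) (c := 0) _ _ _ rfl (ext_three rfl rfl rfl) rfl)
  · exact (conj_heq _ _ _).trans
      (M.assoc_heq (a := 1) (b := 2) (c := 0) _ _ _ rfl (ext_two rfl rfl) rfl)
  · exact (conj_heq _ _ _).trans
      (M.assoc_heq (a := 2) (b := 2) (c := 0) _ _ _ (ext_two rfl rfl) rfl ext_zero)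

theorem leftAssoc_rightAssoc (W X Y Z : C) :
    M.leftAssoc hn W X (M.ten hn Y Z) ≫ M.assoc₂₂₀ hn W X Y Z =
      M.rightAssoc hn (M.ten hn W X) Y Z ≫ M.assoc₀₂₂ hn W X Y Z := by
  refine M.square_v 0 2 0 2 0 (ok_of_le hn (by decide)) (ok_of_le hn (by decide))
    (ok_of_le hn (by decide)) (ok_of_le hn (by decide)) (ok_of_le hn (by decide))
    (ok_of_le hn (by decide)) (ok_of_le hn (by decide)) (ok_of_le hn (by decide))
    (ok_of_le hn (by decide)) (ok_of_le hn (by decide))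
    emp (pair W X) emp (pair Y Z) emp
    (congrArg (M.μObj 2 _) (ext_two rfl rfl)) (congrArg (M.μObj 2 _) (ext_two rfl rfl))
    (congrArg (M.μObj 3 _) (ext_three rfl rfl rfl)) (congrArg (M.μObj 3 _) (ext_three rfl rfl rfl))
    (congrArg (M.μObj 3 _) (ext_three rfl rfl rfl)) (congrArg (M.μObj 3 _) (ext_three rfl rfl rfl))
    (congrArg (M.μObj 4 _) (ext_four rfl rfl rfl rfl))
    (congrArg (M.μObj 4 _) (ext_four rfl rfl rfl rfl)) ?_ ?_ ?_ ?_
  · exact (conj_heq _ _ _).trans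
      (M.assoc_heq (a := 0) (b := 2) (c := 1) _ _ _ rfl rfl (ext_one rfl))
  · exact (conj_heq _ _ _).trans
      (M.assoc_heq (a := 2) (b := 2) (c := 0) _ _ _ (ext_two rfl rfl) rfl rfl)
  · exact (conj_heq _ _ _).trans
      (M.assoc_heq (a := 1) (b := 2) (c := 0) _ _ _ (ext_one rfl) rfl rfl)
  · exact (conj_heq _ _ _).trans
      (M.assoc_heq (a := 0) (b := 2) (c := 2) _ _ _ rfl rfl (ext_two rfl rfl))

/-! ### Units -/

theorem one_ten (X : C) : M.ten hn (M.one hn) X = X := by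
  have h := M.unit_obj 0 1 (ok_of_le hn (by decide)) (ok_of_le hn (by decide))
    (ok_of_le hn (by decide)) emp (sgl X)
  have h' : M.ten hn (M.one hn) X = M.μObj (0 + 1 + 1) _ (tri emp (sgl (M.one hn)) (sgl X)) :=
    congrArg (M.μObj 2 _) (ext_two rfl rfl)
  exact h'.trans (h.trans (M.one_obj (ok_of_le hn (by decide)) (app emp (sgl X))))

theorem ten_one (X : C) : M.ten hn X (M.one hn) = X := by
  have h := M.unit_obj 1 0 (ok_of_le hn (by decide)) (ok_of_le hn (by decide))
    (ok_of_le hn (by decide)) (sgl X) emp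
  have h' : M.ten hn X (M.one hn) = M.μObj (1 + 1 + 0) _ (tri (sgl X) (sgl (M.one hn)) emp) :=
    congrArg (M.μObj 2 _) (ext_two rfl rfl)
  exact h'.trans (h.trans (M.one_obj (ok_of_le hn (by decide)) (app (sgl X) emp)))

theorem one_tenHom_heq {X Y : C} (f : X ⟶ Y) :
    HEq (M.tenHom hn (𝟙 (M.one hn)) f) f := by
  refine (M.tenHom_heq_left hn (𝟙 (M.one hn)) f (𝟙 _) (hid emp) rfl rfl HEq.rfl).trans ?_
  refine (heq_of_eq (M.unit_map 0 1 (ok_of_le hn (by decide)) (ok_of_le hn (by decide))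
    (ok_of_le hn (by decide)) (hid emp) (hsgl f))).trans ?_
  refine (conj_heq _ _ _).trans ?_
  refine (heq_of_eq (M.one_map (ok_of_le hn (by decide)) (happ (hid emp) (hsgl f)))).trans ?_
  exact (conj_heq _ _ _).trans (happ_right (hid emp) (hsgl f) 0 (by decide) HEq.rfl)

theorem tenHom_one_heq {X Y : C} (f : X ⟶ Y) :
    HEq (M.tenHom hn f (𝟙 (M.one hn))) f := by
  refine (M.tenHom_heq_right hn f (𝟙 (M.one hn)) (𝟙 _) (hid emp) rfl rfl HEq.rfl).trans ?_
  refine (heq_of_eq (M.unit_map 1 0 (ok_of_le hn (by decide)) (ok_of_le hn (by decide))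
    (ok_of_le hn (by decide)) (hsgl f) (hid emp))).trans ?_
  refine (conj_heq _ _ _).trans ?_
  refine (heq_of_eq (M.one_map (ok_of_le hn (by decide)) (happ (hsgl f) (hid emp)))).trans ?_
  exact (conj_heq _ _ _).trans (happ_left (hsgl f) (hid emp) 0 (by decide) HEq.rfl)

/-- By (iv), `α^{0,2,1}` at `(X, 0; Y)` reduces to `α^{0,1,1}`, which is the identity by (i). -/
theorem leftAssoc_one (X Y : C) : ∃ e, M.leftAssoc hn X (M.one hn) Y = eqToHom e := by
  have u₁ := M.unit_obj 1 0 (ok_of_le hn (by decide)) (ok_of_le hn (by decide))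
    (ok_of_le hn (by decide))
    (sgl X) emp
  have u₂ := M.unit_obj 1 1 (ok_of_le hn (by decide)) (ok_of_le hn (by decide))
    (ok_of_le hn (by decide))
    (sgl X) (sgl Y)
  have e₂ : M.μObj 3 (ok_of_le hn (by decide)) (tri (a := 0) (b := 2) (c := 1) emp
        (tri (sgl X) (sgl (M.one hn)) emp) (sgl Y)) =
      M.μObj 2 (ok_of_le hn (by decide)) (tri (a := 0) (b := 1) (c := 1) emp (app (sgl X) emp) (sgl Y)) := by
    refine Eq.trans (congrArg (M.μObj 3 _) ?_) (u₂.trans (congrArg (M.μObj 2 _) ?_))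
    · exact ext_three rfl rfl rfl
    · exact ext_two rfl rfl
  have key := M.cond_iv 0 1 0 1 (ok_of_le hn (by decide)) (ok_of_le hn (by decide))
    (ok_of_le hn (by decide)) (ok_of_le hn (by decide)) (ok_of_le hn (by decide))
    (ok_of_le hn (by decide))
    emp (sgl X) emp (sgl Y) (congrArg (fun T => M.μObj 2 _ (tri emp (sgl T) (sgl Y))) u₁) e₂
  have hone := M.assoc_one 0 1 (ok_of_le hn (by decide)) (ok_of_le hn (by decide))
    (ok_of_le hn (by decide)) emp (app (sgl X) emp) (sgl Y)
    (congrArg (fun T => M.μObj 2 _ (tri emp T (sgl Y))) (ext_one (M.one_obj _ _)))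
  have h := eq_eqToHom_of_square key hone
  refine eqToHom_of_heq h ?_ ?_ ((conj_heq _ _ _).trans ?_)
  · exact congrArg (M.μObj 2 _) (ext_two (congrArg (M.μObj 2 _) (ext_two rfl rfl)) rfl)
  · exact congrArg (M.μObj 3 _) (ext_three rfl rfl rfl)
  · exact M.assoc_heq (a := 0) (b := 2) (c := 1) _ _ _ rfl (ext_two rfl rfl) rfl

/-- By (iv), `α^{1,2,0}` at `(X; 0, Y)` reduces to `α^{1,1,0}`, which is the identity by (i). -/
theorem rightAssoc_one (X Y : C) : ∃ e, M.rightAssoc hn X (M.one hn) Y = eqToHom e := by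
  have u₁ := M.unit_obj 0 1 (ok_of_le hn (by decide)) (ok_of_le hn (by decide))
    (ok_of_le hn (by decide))
    emp (sgl Y)
  have u₂ := M.unit_obj 1 1 (ok_of_le hn (by decide)) (ok_of_le hn (by decide))
    (ok_of_le hn (by decide))
    (sgl X) (sgl Y)
  have e₂ : M.μObj 3 (ok_of_le hn (by decide)) (tri (a := 1) (b := 2) (c := 0) (sgl X)
        (tri emp (sgl (M.one hn)) (sgl Y)) emp) =
      M.μObj 2 (ok_of_le hn (by decide)) (tri (a := 1) (b := 1) (c := 0) (sgl X) (app emp (sgl Y)) emp) := by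
    refine Eq.trans (congrArg (M.μObj 3 _) ?_) (u₂.trans (congrArg (M.μObj 2 _) ?_))
    · exact ext_three rfl rfl rfl
    · exact ext_two rfl rfl
  have key := M.cond_iv 1 0 1 0 (ok_of_le hn (by decide)) (ok_of_le hn (by decide))
    (ok_of_le hn (by decide)) (ok_of_le hn (by decide)) (ok_of_le hn (by decide))
    (ok_of_le hn (by decide))
    (sgl X) emp (sgl Y) emp (congrArg (fun T => M.μObj 2 _ (tri (sgl X) (sgl T) emp)) u₁) e₂
  have hone := M.assoc_one 1 0 (ok_of_le hn (by decide)) (ok_of_le hn (by decide))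
    (ok_of_le hn (by decide)) (sgl X) (app emp (sgl Y)) emp
    (congrArg (fun T => M.μObj 2 _ (tri (sgl X) T emp)) (ext_one (M.one_obj _ _)))
  have h := eq_eqToHom_of_square key hone
  refine eqToHom_of_heq h ?_ ?_ ((conj_heq _ _ _).trans ?_)
  · exact congrArg (M.μObj 2 _) (ext_two rfl (congrArg (M.μObj 2 _) (ext_two rfl rfl)))
  · exact congrArg (M.μObj 3 _) (ext_three rfl rfl rfl)
  · exact M.assoc_heq (a := 1) (b := 2) (c := 0) _ _ _ rfl (ext_two rfl rfl) rfl

/-! ### Coherence -/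

/-- All associators are isomorphisms. -/
def Undirected : Prop :=
  ∀ (a b c : ℕ) (h : Ok n (a + b + c)) (h1 : Ok n (a + 1 + c)) (hb : Ok n b)
    (A : Fin a → C) (B : Fin b → C) (D : Fin c → C), IsIso (M.assoc a b c h h1 hb A B D)

namespace Undirected

variable {M} (hM : M.Undirected)

theorem isIso_leftAssoc (hM : M.Undirected) (X Y Z : C) : IsIso (M.leftAssoc hn X Y Z) :=
  have := hM 0 2 1 (ok_of_le hn (by decide)) (ok_of_le hn (by decide)) (ok_of_le hn (by decide))
    emp (pair X Y) (sgl Z)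
  isIso_conj _ _ _

theorem isIso_rightAssoc (hM : M.Undirected) (X Y Z : C) : IsIso (M.rightAssoc hn X Y Z) :=
  have := hM 1 2 0 (ok_of_le hn (by decide)) (ok_of_le hn (by decide)) (ok_of_le hn (by decide))
    (sgl X) (pair Y Z) emp
  isIso_conj _ _ _

theorem isIso_assoc₂₂₀ (hM : M.Undirected) (W X Y Z : C) : IsIso (M.assoc₂₂₀ hn W X Y Z) :=
  have := hM 2 2 0 (ok_of_le hn (by decide)) (ok_of_le hn (by decide)) (ok_of_le hn (by decide))
    (pair W X) (pair Y Z) emp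
  isIso_conj _ _ _

/-- The Mac Lane associator `(X ⊗ Y) ⊗ Z ≅ μ₃(X, Y, Z) ≅ X ⊗ (Y ⊗ Z)`. -/
noncomputable def macLane (X Y Z : C) :
    M.ten hn (M.ten hn X Y) Z ≅ M.ten hn X (M.ten hn Y Z) :=
  have := hM.isIso_leftAssoc hn X Y Z
  have := hM.isIso_rightAssoc hn X Y Z
  asIso (M.leftAssoc hn X Y Z) ≪≫ (asIso (M.rightAssoc hn X Y Z)).symm

theorem macLane_comp (X Y Z : C) :
    (hM.macLane hn X Y Z).hom ≫ M.rightAssoc hn X Y Z = M.leftAssoc hn X Y Z := by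
  simp [macLane]

theorem macLane_comp_assoc (X Y Z : C) {T : C} (t : M.ten₃ hn X Y Z ⟶ T) :
    (hM.macLane hn X Y Z).hom ≫ M.rightAssoc hn X Y Z ≫ t = M.leftAssoc hn X Y Z ≫ t := by
  rw [← Category.assoc, macLane_comp]

theorem macLane_natural {X X' Y Y' Z Z' : C} (f : X ⟶ X') (g : Y ⟶ Y') (h : Z ⟶ Z') :
    M.tenHom hn (M.tenHom hn f g) h ≫ (hM.macLane hn X' Y' Z').hom =
      (hM.macLane hn X Y Z).hom ≫ M.tenHom hn f (M.tenHom hn g h) := by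
  have := hM.isIso_rightAssoc hn X' Y' Z'
  rw [← cancel_mono (M.rightAssoc hn X' Y' Z'), Category.assoc, Category.assoc,
    macLane_comp, leftAssoc_natural, rightAssoc_natural, macLane_comp_assoc]

/-- The pentagon, checked after composing with `W ⊗ (X ⊗ (Y ⊗ Z)) ⟶ μ₄(W, X, Y, Z)`: both sides
become the canonical map `((W ⊗ X) ⊗ Y) ⊗ Z ⟶ μ₄(W, X, Y, Z)`. -/
theorem pentagon_aux (W X Y Z : C) :
    M.tenHom hn (hM.macLane hn W X Y).hom (𝟙 Z) ≫ (hM.macLane hn W (M.ten hn X Y) Z).hom ≫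
        M.tenHom hn (𝟙 W) (hM.macLane hn X Y Z).hom =
      (hM.macLane hn (M.ten hn W X) Y Z).hom ≫ (hM.macLane hn W X (M.ten hn Y Z)).hom := by
  have := hM.isIso_rightAssoc hn W X (M.ten hn Y Z)
  have := hM.isIso_assoc₂₂₀ hn W X Y Z
  have left : M.tenHom hn (hM.macLane hn W X Y).hom (𝟙 Z) ≫
      M.tenHom hn (M.rightAssoc hn W X Y) (𝟙 Z) = M.tenHom hn (M.leftAssoc hn W X Y) (𝟙 Z) := by
    rw [← tenHom_comp, macLane_comp, Category.comp_id]
  have right : M.tenHom hn (𝟙 W) (hM.macLane hn X Y Z).hom ≫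
      M.tenHom hn (𝟙 W) (M.rightAssoc hn X Y Z) = M.tenHom hn (𝟙 W) (M.leftAssoc hn X Y Z) := by
    rw [← tenHom_comp, macLane_comp, Category.comp_id]
  rw [← cancel_mono (M.rightAssoc hn W X (M.ten hn Y Z) ≫ M.assoc₂₂₀ hn W X Y Z)]
  simp only [Category.assoc]
  rw [macLane_comp_assoc, leftAssoc_rightAssoc, macLane_comp_assoc, ← rightAssoc_whiskerLeft,
    reassoc_of% right, leftAssoc_whiskerLeft, macLane_comp_assoc, ← rightAssoc_whiskerRight,
    reassoc_of% left, leftAssoc_whiskerRight]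

theorem triangle_aux (X Y : C) :
    (hM.macLane hn X (M.one hn) Y).hom ≫ M.tenHom hn (𝟙 X) (eqToHom (M.one_ten hn Y)) =
      M.tenHom hn (eqToHom (M.ten_one hn X)) (𝟙 Y) := by
  obtain ⟨e₁, h₁⟩ := M.leftAssoc_one hn X Y
  obtain ⟨e₂, h₂⟩ := M.rightAssoc_one hn X Y
  obtain ⟨e₃, h₃⟩ := M.tenHom_eqToHom hn (Eq.refl X) (M.one_ten hn Y)
  obtain ⟨e₄, h₄⟩ := M.tenHom_eqToHom hn (M.ten_one hn X) (Eq.refl Y)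
  have h := hM.macLane_comp hn X (M.one hn) Y
  rw [h₁, h₂, comp_eqToHom_iff, eqToHom_trans] at h
  rw [eqToHom_refl] at h₃ h₄
  rw [h, h₃, h₄, eqToHom_trans]

/-- The monoidal structure with tensor product `μ₂`, unit `μ₀` and identity unitors. -/
noncomputable abbrev monoidal : MonoidalCategory C :=
  letI : MonoidalCategoryStruct C :=
    { tensorObj := M.ten hn
      tensorHom := M.tenHom hn
      whiskerLeft := fun X _ _ f => M.tenHom hn (𝟙 X) f
      whiskerRight := fun f Y => M.tenHom hn f (𝟙 Y)
      tensorUnit := M.one hn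
      associator := hM.macLane hn
      leftUnitor := fun X => eqToIso (M.one_ten hn X)
      rightUnitor := fun X => eqToIso (M.ten_one hn X) }
  MonoidalCategory.ofTensorHom
    (id_tensorHom_id := fun X Y => M.tenHom_id hn X Y)
    (id_tensorHom := fun _ _ _ _ => rfl)
    (tensorHom_id := fun _ _ => rfl)
    (tensorHom_comp_tensorHom := fun f g f' g' => (M.tenHom_comp hn f g f' g').symm)
    (associator_naturality := fun f g h => hM.macLane_natural hn f g h)
    (leftUnitor_naturality := fun f =>
      comp_eqToHom_of_heq (M.one_ten hn _) (M.one_ten hn _) (M.one_tenHom_heq hn f))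
    (rightUnitor_naturality := fun f =>
      comp_eqToHom_of_heq (M.ten_one hn _) (M.ten_one hn _) (M.tenHom_one_heq hn f))
    (pentagon := fun W X Y Z => hM.pentagon_aux hn W X Y Z)
    (triangle := fun X Y => hM.triangle_aux hn X Y)

end Undirected

end AMonCat

/-- Proposition 3.2 of the paper.  An undirected `A_n`-monoidal
category is a monoidal category if `n ≥ 4`: if `C` carries an `A_n`-monoidal
structure (`4 ≤ n ≤ ∞`) all of whose associators are (componentwise, hence natural)
isomorphisms, then `C` admits a monoidal category structure in the sense of Mac Lane
whose tensor product bifunctor is `μ₂`, whose unit object is `μ₀ = 0`, and whose left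
and right unitors are identities. -/
theorem undirected_An_is_monoidal {C : Type u} [Category.{v} C] {n : ℕ∞} (hn : 4 ≤ n)
    (M : AMonCat C n)
    (hiso : ∀ (a b c : ℕ) (h : Ok n (a + b + c)) (h1 : Ok n (a + 1 + c)) (hb : Ok n b)
      (A : Fin a → C) (B : Fin b → C) (D : Fin c → C),
      IsIso (M.assoc a b c h h1 hb A B D)) :
    ∃ S : MonoidalCategory C,
      (∀ (h2 : Ok n 2) (X Y : C),
        @MonoidalCategoryStruct.tensorObj C _ S.toMonoidalCategoryStruct X Y =
          M.μObj 2 h2 (pair X Y)) ∧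
      (∀ (h2 : Ok n 2) (X X' Y Y' : C) (f : X ⟶ X') (g : Y ⟶ Y'),
        ∃ (e₁ : @MonoidalCategoryStruct.tensorObj C _ S.toMonoidalCategoryStruct X Y =
            M.μObj 2 h2 (pair X Y))
          (e₂ : M.μObj 2 h2 (pair X' Y') =
            @MonoidalCategoryStruct.tensorObj C _ S.toMonoidalCategoryStruct X' Y'),
          @MonoidalCategoryStruct.tensorHom C _ S.toMonoidalCategoryStruct X X' Y Y' f g =
            eqToHom e₁ ≫ M.μMap 2 h2 (pairHom f g) ≫ eqToHom e₂) ∧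
      (∀ h0 : Ok n 0,
        @MonoidalCategoryStruct.tensorUnit C _ S.toMonoidalCategoryStruct =
          M.μObj 0 h0 emp) ∧
      (∀ X : C,
        ∃ e : @MonoidalCategoryStruct.tensorObj C _ S.toMonoidalCategoryStruct
            (@MonoidalCategoryStruct.tensorUnit C _ S.toMonoidalCategoryStruct) X = X,
          (@MonoidalCategoryStruct.leftUnitor C _ S.toMonoidalCategoryStruct X).hom =
            eqToHom e) ∧
      (∀ X : C,
        ∃ e : @MonoidalCategoryStruct.tensorObj C _ S.toMonoidalCategoryStruct X
            (@MonoidalCategoryStruct.tensorUnit C _ S.toMonoidalCategoryStruct) = X,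
          (@MonoidalCategoryStruct.rightUnitor C _ S.toMonoidalCategoryStruct X).hom =
            eqToHom e) := by
  have hM : M.Undirected := hiso
  refine ⟨hM.monoidal hn, fun _ _ _ => rfl, fun _ _ _ _ _ f g => ⟨rfl, rfl, ?_⟩, fun _ => rfl,
    fun X => ⟨M.one_ten hn X, rfl⟩, fun X => ⟨M.ten_one hn X, rfl⟩⟩
  exact ((Category.id_comp _).trans (Category.comp_id _)).symm
end
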